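/- arXiv:2010.03055 — 2 statements merged into one kernel-verified Lean document; each statement's English description precedes it below -/
import Mathlib

section
/- Fix integers k ≥ 1 and m ≥ 0. As ρ → 1⁻, writing X = 1/log(1/ρ), the m-th derivative of Φ satisfies Φ^{(m)}(ρ) = ( ζ(1 + 1/k) · Γ(m + 1/k) · X^{m + 1/k} / log X ) · ( 1 + O(1/log X) ). -/
/-!
Write `X = 1/log(1/ρ)`, `Y = X^{1/k}`, and let `h(x) = ∑_{j ≥ 1} (j x^k)^m e^{-j x^k} / j` (`hker`).
Differentiating the double series termwise and replacing falling factorials by powers, at a relative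
cost `O(log X / X)`, reduces the claim to an asymptotic for `X^m ∑_p h(p/Y)` (`iteratedDeriv_PhiR`,
`dterm_sub_psum`, `psum_eq`). What is needed is
`∑_p h(p/Y) = ζ(1 + 1/k) (Γ(m + 1/k)/k) Y/log Y + O(Y/log² Y)`, which is `prime_sum`; since
`log X = k log Y`, this is the main term of the theorem.

The arithmetic input is a smoothed prime number theorem with error `O(Y/log Y)`:
`∑ (Λ(n) - 1) log n · h(n/Y) = O(Y)` (`smoothed_pnt`). The Mellin transform of the left side is
`Γ(s) F(k(s - m)) ζ(1 + s - m)`, where `F` is the Dirichlet series of `(Λ(n) - 1) log n`, that is,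
minus the derivative of `-(ζ'/ζ + ζ)`. The function `-(ζ'/ζ + ζ)` has no pole at `1`, and the 3-4-1
inequality gives `|(s - 1) ζ(s)| ≫ (1 + |Im s|)^{-4}` uniformly for `1 < Re s ≤ 2`
(`zeta1_lower`), so `F` grows at most polynomially there, uniformly up to the line `Re s = 1`
(`logMul_cb_bound`). As `Γ` decays faster than any power, Mellin inversion on `Re s = m + (1 + ε)/k`
gives the bound `O(Y^{1+ε})` with a constant independent of `ε`, and `ε = 1/log Y` yields `O(Y)`.
No contour is moved past the line `Re s = 1`.

Writing `log n = log Y + log(n/Y)`, Chebyshev's bound absorbs the factor `log(n/Y)`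
(`log_pow_hker_le`, `tsum_abs_le_of_vker`), which removes one logarithm and gives
`∑ (Λ(n) - 1) h(n/Y) = O(Y/log Y)` (`vonMangoldt_sub_one_sum`). Proper prime powers are negligible
(`prime_power_sum`), `∑ h(n/Y)` is a Riemann sum (`hker_sum`), and the same splitting of `log p`
passes from `∑ log p · h(p/Y)` to `∑ h(p/Y)`.
-/

open Filter

/-- `Φ(ρ) = ∑_{j≥1} ∑_p ρ^{j p^k}/j` as a real function of `ρ`. -/
noncomputable def PhiR (k : ℕ) (ρ : ℝ) : ℝ :=
  ∑' (j : ℕ+) (p : Nat.Primes), ρ ^ ((j : ℕ) * (p : ℕ) ^ k) / (j : ℝ)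

noncomputable def zetaR (s : ℝ) : ℝ := (riemannZeta (s : ℂ)).re

/-! ### A bound for the Riemann zeta function to the right of `Re s = 1/2` -/

/-- `{x}` on `(1, ∞)`, extended by zero; its Mellin transform at `-s` is `∫₁^∞ {x} x^{-s-1} dx`. -/
noncomputable def fracTail (x : ℝ) : ℂ := (Set.Ioi (1 : ℝ)).indicator (fun x => ((Int.fract x : ℝ) : ℂ)) x

lemma norm_fracTail_le (x : ℝ) : ‖fracTail x‖ ≤ 1 := by
  unfold fracTail
  refine (norm_indicator_le_norm_self _ _).trans ?_
  rw [Complex.norm_real, Real.norm_eq_abs, Int.abs_fract]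
  exact (Int.fract_lt_one x).le

lemma measurable_fracTail : Measurable fracTail := by
  unfold fracTail
  exact (Complex.measurable_ofReal.comp measurable_fract).indicator measurableSet_Ioi

lemma locInt_fracTail : MeasureTheory.LocallyIntegrableOn fracTail (Set.Ioi 0) := by
  apply MeasureTheory.LocallyIntegrable.locallyIntegrableOn
  refine (MeasureTheory.locallyIntegrable_const (1 : ℝ)).mono
    measurable_fracTail.aestronglyMeasurable ?_
  filter_upwards with x
  simpa using norm_fracTail_le x

lemma fracTail_top : fracTail =O[atTop] (fun x : ℝ => x ^ (-(0:ℝ))) := by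
  refine Asymptotics.IsBigO.of_bound 1 ?_
  filter_upwards with x
  simpa using norm_fracTail_le x

lemma fracTail_bot (b : ℝ) : fracTail =O[nhdsWithin 0 (Set.Ioi 0)] (fun x : ℝ => x ^ (-b)) := by
  have : fracTail =ᶠ[nhdsWithin 0 (Set.Ioi 0)] fun _ => 0 := by
    filter_upwards [nhdsWithin_le_nhds (Iio_mem_nhds (zero_lt_one' ℝ))] with x hx
    simp only [Set.mem_Iio] at hx
    simp [fracTail, hx.le]
  exact this.trans_isBigO (Asymptotics.isBigO_zero _ _)

lemma mellin_fracTail (s : ℂ) :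
    mellin fracTail (-s) = ∫ x in Set.Ioi (1:ℝ), (x : ℂ) ^ (-(s+1)) * ((Int.fract x : ℝ) : ℂ) := by
  have h : ∀ x : ℝ, (x : ℂ) ^ (-s - 1) • fracTail x =
      (Set.Ioi (1:ℝ)).indicator (fun x : ℝ => (x : ℂ) ^ (-(s+1)) * ((Int.fract x : ℝ) : ℂ)) x := by
    intro x
    by_cases hx : x ∈ Set.Ioi (1:ℝ)
    · rw [Set.indicator_of_mem hx, fracTail, Set.indicator_of_mem hx, smul_eq_mul]
      ring_nf
    · rw [Set.indicator_of_notMem hx, fracTail, Set.indicator_of_notMem hx, smul_zero]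
  unfold mellin
  simp_rw [h]
  rw [MeasureTheory.setIntegral_indicator measurableSet_Ioi]
  congr 2
  ext x
  simp only [Set.mem_inter_iff, Set.mem_Ioi]
  constructor
  · exact fun h => h.2
  · exact fun h => ⟨by linarith, h⟩

lemma norm_mellin_fracTail_le {s : ℂ} (hs : 0 < s.re) : ‖mellin fracTail (-s)‖ ≤ 1 / s.re := by
  rw [mellin_fracTail]
  have h1 : -(s.re + 1) < -1 := by linarith
  have hintg := integral_Ioi_rpow_of_lt h1 zero_lt_one
  refine (MeasureTheory.norm_integral_le_of_norm_le
    (integrableOn_Ioi_rpow_of_lt h1 zero_lt_one) ?_).trans ?_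
  · refine (MeasureTheory.ae_restrict_iff' measurableSet_Ioi).2 (Eventually.of_forall ?_)
    intro x hx
    have hx0 : 0 < x := lt_trans zero_lt_one hx
    rw [norm_mul, Complex.norm_cpow_eq_rpow_re_of_pos hx0]
    have : ‖((Int.fract x : ℝ) : ℂ)‖ ≤ 1 := by
      rw [Complex.norm_real, Real.norm_eq_abs, Int.abs_fract]
      exact (Int.fract_lt_one x).le
    have h2 : (-(s+1)).re = -(s.re+1) := by simp
    rw [h2]
    exact mul_le_of_le_one_right (by positivity) this
  · rw [hintg]
    simp

/-- Here `riemannZeta₀ s = ζ(s) - 1/(s - 1)`; partial summation expresses it through the fractional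
part. -/
lemma zeta0_eq_of_one_lt {s : ℂ} (hs : 1 < s.re) :
    riemannZeta₀ s = 1 - s * mellin fracTail (-s) := by
  have hs1 : s ≠ 1 := by rintro rfl; simp at hs
  have hs0 : s ≠ 0 := by rintro rfl; simp at hs; linarith
  have hO : (fun n ↦ ∑ k ∈ Finset.Icc 1 n, (1 : ℝ)) =O[atTop] fun n : ℕ ↦ (n : ℝ) ^ (1:ℝ) := by
    refine Asymptotics.IsBigO.of_bound 1 ?_
    filter_upwards with n
    simp
  have h := LSeries_eq_mul_integral_of_nonneg (fun _ => 1) zero_le_one hs hO (by simp)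
  have hz : LSeries (fun n ↦ ((1:ℝ):ℂ)) s = riemannZeta s := by
    rw [← LSeries_one_eq_riemannZeta hs]
    congr 1
  rw [hz] at h
  have i1 : MeasureTheory.IntegrableOn (fun x : ℝ => (x:ℂ) ^ (-s)) (Set.Ioi 1) :=
    integrableOn_Ioi_cpow_of_lt (by simpa using hs) zero_lt_one
  have hconv : MellinConvergent fracTail (-s) :=
    mellinConvergent_of_isBigO_rpow locInt_fracTail fracTail_top (by simp; linarith)
      (fracTail_bot (-s.re - 1)) (by simp)
  have i2 : MeasureTheory.IntegrableOn
      (fun x : ℝ => (x : ℂ) ^ (-(s+1)) * ((Int.fract x : ℝ) : ℂ)) (Set.Ioi 1) := by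
    have := hconv.mono_set (Set.Ioi_subset_Ioi (zero_le_one' ℝ))
    refine this.congr_fun (fun x hx => ?_) measurableSet_Ioi
    simp only [fracTail, Set.indicator_of_mem hx, smul_eq_mul]
    ring_nf
  have e : ∫ t in Set.Ioi (1 : ℝ), (∑ k ∈ Finset.Icc 1 ⌊t⌋₊, ((1:ℝ) : ℂ)) * (t:ℂ) ^ (-(s + 1)) =
      (∫ x in Set.Ioi (1:ℝ), (x:ℂ) ^ (-s)) - mellin fracTail (-s) := by
    rw [mellin_fracTail, ← MeasureTheory.integral_sub i1 i2]
    refine MeasureTheory.setIntegral_congr_fun measurableSet_Ioi (fun x hx => ?_)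
    have hx0 : 0 < x := lt_trans zero_lt_one hx
    have hxc : (x:ℂ) ≠ 0 := by exact_mod_cast hx0.ne'
    simp only [Finset.sum_const, Nat.card_Icc, add_tsub_cancel_right]
    have e1 : (x:ℂ) ^ (-s) = (x:ℂ) ^ (-(s+1)) * x := by
      have e0 : -s = -(s+1) + 1 := by ring
      rw [e0, Complex.cpow_add _ _ hxc, Complex.cpow_one]
    have e2 : ((⌊x⌋₊ : ℕ) : ℂ) = (x:ℂ) - ((Int.fract x : ℝ):ℂ) := by
      have : (⌊x⌋₊ : ℝ) = x - Int.fract x := by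
        rw [← Int.self_sub_floor, natCast_floor_eq_intCast_floor hx0.le]; ring
      rw [← Complex.ofReal_sub, ← this]; simp
    rw [e1, nsmul_eq_mul, e2]
    push_cast
    ring
  rw [e, integral_Ioi_cpow_of_lt (by simpa using hs) zero_lt_one] at h
  rw [riemannZeta_eq_inv_sub_add hs1] at h
  have hne : s - 1 ≠ 0 := sub_ne_zero.2 hs1
  have hne' : -s + 1 ≠ 0 := by intro h; apply hne; linear_combination -h
  simp only [Complex.ofReal_one, Complex.one_cpow] at h
  have e3 : s * (-1 / (-s+1)) = 1 + (s-1)⁻¹ := by field_simp; ring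
  rw [mul_sub, e3] at h
  linear_combination h

/-- The identity of `zeta0_eq_of_one_lt` continued analytically to `Re s > 0`. -/
lemma zeta0_eq {s : ℂ} (hs : 0 < s.re) : riemannZeta₀ s = 1 - s * mellin fracTail (-s) := by
  set U : Set ℂ := {z | 0 < z.re} with hU
  have hUo : IsOpen U := isOpen_lt continuous_const Complex.continuous_re
  have hd : ∀ z ∈ U, DifferentiableAt ℂ (fun s => 1 - s * mellin fracTail (-s)) z := by
    intro z hz
    have : DifferentiableAt ℂ (mellin fracTail) (-z) :=
      mellin_differentiableAt_of_isBigO_rpow locInt_fracTail fracTail_top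
        (by simpa using (show 0 < z.re from hz)) (fracTail_bot (-z.re - 1)) (by simp)
    have h2 : DifferentiableAt ℂ (fun s => mellin fracTail (-s)) z :=
      DifferentiableAt.comp (g := mellin fracTail) (f := fun s : ℂ => -s) z this
        (differentiableAt_id.neg)
    exact (differentiableAt_const _).sub (differentiableAt_id.mul h2)
  have a1 : AnalyticOnNhd ℂ (fun s => 1 - s * mellin fracTail (-s)) U :=
    DifferentiableOn.analyticOnNhd (fun z hz => (hd z hz).differentiableWithinAt) hUo
  have a0 : AnalyticOnNhd ℂ riemannZeta₀ U :=
    DifferentiableOn.analyticOnNhd (differentiable_riemannZeta₀.differentiableOn) hUo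
  have hpre : IsPreconnected U := (convex_halfSpace_re_gt 0).isPreconnected
  have h2 : (2:ℂ) ∈ U := by simp [hU]
  have hev : riemannZeta₀ =ᶠ[nhds 2] fun s => 1 - s * mellin fracTail (-s) := by
    filter_upwards [(isOpen_lt continuous_const Complex.continuous_re).mem_nhds
      (show (2:ℂ) ∈ {z : ℂ | 1 < z.re} by simp)] with z hz
    exact zeta0_eq_of_one_lt hz
  exact a0.eqOn_of_preconnected_of_eventuallyEq a1 hpre h2 hev hs

lemma zeta0_bound {s : ℂ} (hs : 1/2 ≤ s.re) : ‖riemannZeta₀ s‖ ≤ 1 + 2 * ‖s‖ := by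
  rw [zeta0_eq (by linarith)]
  have h := norm_mellin_fracTail_le (s := s) (by linarith)
  have h2 : 1 / s.re ≤ 2 := by
    rw [div_le_iff₀ (by linarith)]; linarith
  calc _ ≤ ‖(1:ℂ)‖ + ‖s * mellin fracTail (-s)‖ := norm_sub_le _ _
    _ ≤ 1 + ‖s‖ * 2 := by rw [norm_one, norm_mul]; gcongr; exact h.trans h2
    _ = _ := by ring

/-! ### Lower bounds for zeta near the line `Re s = 1` -/

lemma one_le_tau (s : ℂ) : 1 ≤ 1 + |s.im| := by linarith [abs_nonneg s.im]

lemma zeta0_bound' {s : ℂ} (h1 : 1/2 ≤ s.re) (h2 : s.re ≤ 4) :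
    ‖riemannZeta₀ s‖ ≤ 9 * (1 + |s.im|) ^ 1 := by
  have h := zeta0_bound h1
  have h3 := Complex.norm_le_abs_re_add_abs_im s
  rw [abs_of_nonneg (by linarith : 0 ≤ s.re)] at h3
  have := abs_nonneg s.im
  linarith

lemma zeta1_bound {s : ℂ} (h1 : 1/2 ≤ s.re) (h2 : s.re ≤ 4) :
    ‖riemannZeta₁ s‖ ≤ 28 * (1 + |s.im|) ^ 2 := by
  have h := zeta0_bound' h1 h2
  have h3 := Complex.norm_le_abs_re_add_abs_im (s - 1)
  have h4 : |(s-1).re| ≤ 3 := by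
    rw [abs_le]; constructor <;> simp <;> linarith
  have h5 : (s-1).im = s.im := by simp
  rw [h5] at h3
  have h6 := abs_nonneg s.im
  unfold riemannZeta₁
  calc _ ≤ ‖(1:ℂ)‖ + ‖(s-1) * riemannZeta₀ s‖ := norm_add_le _ _
    _ ≤ 1 + (3 * (1 + |s.im|)) * (9 * (1 + |s.im|) ^ 1) := by
        rw [norm_one, norm_mul]; gcongr; linarith
    _ ≤ _ := by nlinarith

/-- Cauchy's estimate turns a polynomial bound for an entire function on a vertical strip into one
for its derivative on a slightly narrower strip. -/
lemma deriv_strip_bound {f : ℂ → ℂ} (hf : Differentiable ℂ f) {a b C : ℝ} (n : ℕ) (hC : 0 ≤ C)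
    (h : ∀ s : ℂ, a ≤ s.re → s.re ≤ b → ‖f s‖ ≤ C * (1 + |s.im|) ^ n) (s : ℂ)
    (h1 : a + 1/4 ≤ s.re) (h2 : s.re ≤ b - 1/4) :
    ‖deriv f s‖ ≤ (4 * 2 ^ n * C) * (1 + |s.im|) ^ n := by
  have key := Complex.norm_deriv_le_of_forall_mem_sphere_norm_le (c := s) (R := 1/4)
    (C := C * (2 * (1 + |s.im|)) ^ n) (f := f) (by norm_num) hf.diffContOnCl ?_
  · calc _ ≤ _ := key
      _ = _ := by rw [mul_pow]; ring
  · intro z hz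
    have hz' : ‖z - s‖ = 1/4 := by simpa [dist_eq_norm] using hz
    have hr := Complex.abs_re_le_norm (z - s)
    have hi := Complex.abs_im_le_norm (z - s)
    rw [hz', Complex.sub_re, abs_le] at hr
    rw [hz', Complex.sub_im] at hi
    have hzim : |z.im| ≤ |s.im| + 1/4 := by
      have := abs_sub_abs_le_abs_sub z.im s.im
      linarith
    refine (h z (by linarith) (by linarith)).trans ?_
    gcongr
    have := abs_nonneg s.im
    linarith

lemma differentiable_deriv' {f : ℂ → ℂ} (hf : Differentiable ℂ f) : Differentiable ℂ (deriv f) :=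
  fun z => ((hf.analyticAt z).deriv).differentiableAt

lemma zeta0_deriv_bound {s : ℂ} (h1 : 3/4 ≤ s.re) (h2 : s.re ≤ 3) :
    ‖deriv riemannZeta₀ s‖ ≤ 72 * (1 + |s.im|) ^ 1 := by
  have := deriv_strip_bound differentiable_riemannZeta₀ 1 (by norm_num)
    (fun s => zeta0_bound' (s := s)) s (by linarith) (by linarith)
  norm_num at this ⊢
  exact this

lemma zeta1_deriv_bound {s : ℂ} (h1 : 3/4 ≤ s.re) (h2 : s.re ≤ 3) :
    ‖deriv riemannZeta₁ s‖ ≤ 448 * (1 + |s.im|) ^ 2 := by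
  have := deriv_strip_bound differentiable_riemannZeta₁ 2 (by norm_num)
    (fun s => zeta1_bound (s := s)) s (by linarith) (by linarith)
  norm_num at this ⊢
  exact this

lemma zeta1_deriv2_bound {s : ℂ} (h1 : 1 ≤ s.re) (h2 : s.re ≤ 2) :
    ‖deriv (deriv riemannZeta₁) s‖ ≤ 7168 * (1 + |s.im|) ^ 2 := by
  have := deriv_strip_bound (differentiable_deriv' differentiable_riemannZeta₁) 2 (by norm_num)
    (fun s => zeta1_deriv_bound (s := s)) s (by linarith) (by linarith)
  norm_num at this ⊢
  exact this

lemma zeta_three_four_one {x : ℝ} (hx : 0 < x) (y : ℝ) :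
    1 ≤ ‖riemannZeta (1 + x)‖ ^ 3 * ‖riemannZeta (1 + x + Complex.I * y)‖ ^ 4 *
      ‖riemannZeta (1 + x + 2 * Complex.I * y)‖ := by
  have h := DirichletCharacter.norm_LSeries_product_ge_one (N := 1) (1 : DirichletCharacter ℂ 1) hx y
  rw [one_pow, DirichletCharacter.LSeries_modOne_eq, LSeries_one_eq_riemannZeta (by simpa),
    LSeries_one_eq_riemannZeta (by simpa), LSeries_one_eq_riemannZeta (by simpa)] at h
  simpa [norm_mul, norm_pow] using h

/-- The 3-4-1 inequality away from the real axis, with the other two factors estimated. -/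
lemma zeta_pow_four_lower {x y : ℝ} (hx : 0 < x) (hx1 : x ≤ 1) (hy : 1 ≤ |y|) :
    x ^ 3 ≤ 10 ^ 5 * |y| * ‖riemannZeta (1 + x + Complex.I * y)‖ ^ 4 := by
  have h := zeta_three_four_one hx y
  have hne : (1 + x : ℂ) ≠ 1 := by
    simpa using hx.ne'
  have b1 : ‖riemannZeta (1 + x)‖ ≤ 10 / x := by
    rw [riemannZeta_eq_inv_sub_add hne]
    have := zeta0_bound' (s := 1 + x) (by simp; linarith) (by simp; linarith)
    simp only [Complex.add_im, Complex.one_im, Complex.ofReal_im, add_zero, abs_zero, one_pow,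
      mul_one] at this
    have e : ‖((1 + x : ℂ) - 1)⁻¹‖ = 1 / x := by
      simp [abs_of_pos hx]
    have h9 : 9 ≤ 9 / x := by rw [le_div_iff₀ hx]; linarith
    calc _ ≤ _ := norm_add_le _ _
      _ ≤ 1 / x + 9 := by rw [e]; gcongr
      _ ≤ 1 / x + 9 / x := by gcongr
      _ = _ := by ring
  have hy0 : y ≠ 0 := by intro h; rw [h] at hy; norm_num at hy
  have hne2 : (1 + x + 2 * Complex.I * y : ℂ) ≠ 1 := by
    intro h
    have := congrArg Complex.im h
    simp at this
    exact hy0 this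
  have b2 : ‖riemannZeta (1 + x + 2 * Complex.I * y)‖ ≤ 28 * |y| := by
    rw [riemannZeta_eq_inv_sub_add hne2]
    have h0 := zeta0_bound' (s := 1 + x + 2 * Complex.I * y) (by simp; linarith) (by simp; linarith)
    have him : (1 + x + 2 * Complex.I * y : ℂ).im = 2 * y := by simp
    rw [him, abs_mul, abs_two] at h0
    have e : ‖((1 + x + 2 * Complex.I * y : ℂ) - 1)⁻¹‖ ≤ 1 := by
      rw [norm_inv]
      apply inv_le_one_of_one_le₀
      refine le_trans ?_ (Complex.abs_im_le_norm _)
      simp [abs_mul]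
      linarith
    calc _ ≤ _ := norm_add_le _ _
      _ ≤ 1 + 9 * (1 + 2 * |y|) ^ 1 := by gcongr
      _ ≤ _ := by linarith
  set Z := ‖riemannZeta (1 + x + Complex.I * y)‖
  have h2 : 1 ≤ (10 / x) ^ 3 * Z ^ 4 * (28 * |y|) := by
    refine h.trans ?_
    gcongr
  have hx3 : 0 < x ^ 3 := by positivity
  have e : (10 / x) ^ 3 * Z ^ 4 * (28 * |y|) = (28000 * |y| * Z ^ 4) / x ^ 3 := by
    field_simp
    ring
  rw [e, le_div_iff₀ hx3] at h2
  have : 0 ≤ |y| * Z ^ 4 := by positivity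
  nlinarith

lemma zeta_deriv_bound {s : ℂ} (h1 : 1 ≤ s.re) (h2 : s.re ≤ 2) (h3 : 1 ≤ |s.im|) :
    ‖deriv riemannZeta s‖ ≤ 145 * |s.im| := by
  have hne : s ≠ 1 := by rintro rfl; norm_num at h3
  rw [deriv_riemannZeta_eq_neg_inv_sub_sq_add hne]
  have h0 := zeta0_deriv_bound (s := s) (by linarith) (by linarith)
  have hn : 1 ≤ ‖s - 1‖ := by
    refine le_trans ?_ (Complex.abs_im_le_norm _)
    simpa using h3
  have e : ‖(s - 1)⁻¹ ^ 2‖ ≤ 1 := by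
    rw [norm_pow, norm_inv]
    exact pow_le_one₀ (by positivity) (inv_le_one_of_one_le₀ hn)
  calc _ ≤ ‖-(s - 1)⁻¹ ^ 2‖ + ‖deriv riemannZeta₀ s‖ := ?_
    _ ≤ 1 + 72 * (1 + |s.im|) ^ 1 := by rw [norm_neg]; gcongr
    _ ≤ _ := by linarith
  refine le_trans (le_of_eq ?_) (norm_add_le _ _)
  congr 1

/-- `|ζ(σ + iy)| ≫ |y|^{-4}` to the right of the line `Re s = 1`: the 3-4-1 inequality is used at
distance `d^4 |y|^{-5}` from the line, and the derivative bound bridges the remaining gap. -/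
lemma zeta_lower : ∃ c : ℝ, 0 < c ∧ ∀ x y : ℝ, 0 < x → x ≤ 1 → 1 ≤ |y| →
    c ≤ |y| ^ 4 * ‖riemannZeta (1 + x + Complex.I * y)‖ := by
  -- `e ^ 4 * 10 ^ 5 ≤ 1` and `145 * d ≤ e / 2`
  obtain ⟨e, he⟩ : ∃ e : ℝ, e = 1/20 := ⟨_, rfl⟩
  obtain ⟨d, hd⟩ : ∃ d : ℝ, d = 1/5800 := ⟨_, rfl⟩
  have he0 : 0 < e := by rw [he]; norm_num
  have hd0 : 0 < d := by rw [hd]; norm_num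
  have hmain : ∀ x y : ℝ, 0 < x → x ≤ 1 → 1 ≤ |y| → d ^ 4 ≤ x * |y| ^ 5 →
      e * d ^ 3 ≤ |y| ^ 4 * ‖riemannZeta (1 + x + Complex.I * y)‖ := by
    intro x y hx hx1 hy hxy
    have h := zeta_pow_four_lower hx hx1 hy
    set Z := ‖riemannZeta (1 + x + Complex.I * y)‖
    have hy0 : 0 < |y| := by linarith
    refine le_of_pow_le_pow_left₀ (n := 4) (by norm_num) (by positivity) ?_
    have h3 : (d ^ 4) ^ 3 ≤ (x * |y| ^ 5) ^ 3 := by gcongr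
    have h4 : x ^ 3 * |y| ^ 15 ≤ 10 ^ 5 * |y| * Z ^ 4 * |y| ^ 15 := by gcongr
    have h5 : (d ^ 4) ^ 3 ≤ 10 ^ 5 * (|y| ^ 4 * Z) ^ 4 := by
      calc _ ≤ _ := h3
        _ = x ^ 3 * |y| ^ 15 := by ring
        _ ≤ _ := h4
        _ = _ := by ring
    have : (e * d ^ 3) ^ 4 = e ^ 4 * (d ^ 4) ^ 3 := by ring
    rw [this]
    have he4 : e ^ 4 ≤ 1 / 10 ^ 5 := by rw [he]; norm_num
    calc e ^ 4 * (d ^ 4) ^ 3 ≤ 1 / 10 ^ 5 * (10 ^ 5 * (|y| ^ 4 * Z) ^ 4) := by gcongr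
      _ = _ := by ring
  refine ⟨e * d ^ 3 / 2, by positivity, ?_⟩
  intro x y hx hx1 hy
  have hy0 : 0 < |y| := by linarith
  by_cases hxy : d ^ 4 ≤ x * |y| ^ 5
  · have := hmain x y hx hx1 hy hxy
    have : 0 < e * d ^ 3 := by positivity
    linarith
  push Not at hxy
  set η : ℝ := d ^ 4 / |y| ^ 5 with hη
  have hη0 : 0 < η := by positivity
  have hxη : x < η := by rw [hη, lt_div_iff₀ (by positivity)]; exact hxy
  have hη1 : η ≤ 1 := by
    rw [hη, div_le_one (by positivity)]
    calc d ^ 4 ≤ 1 := by rw [hd]; norm_num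
      _ ≤ _ := one_le_pow₀ hy
  have hA := hmain η y hη0 hη1 hy (by rw [hη]; field_simp; exact le_rfl)
  have hseg : ‖riemannZeta (1 + η + Complex.I * y) - riemannZeta (1 + x + Complex.I * y)‖ ≤
      145 * |y| * ‖(1 + η + Complex.I * y : ℂ) - (1 + x + Complex.I * y)‖ := by
    refine Convex.norm_image_sub_le_of_norm_deriv_le
      (s := {z : ℂ | 1 ≤ z.re ∧ z.re ≤ 2 ∧ z.im = y}) ?_ ?_ ?_ ?_ ?_
    · rintro z ⟨-, -, hz⟩
      refine differentiableAt_riemannZeta ?_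
      rintro rfl
      rw [← hz] at hy
      norm_num at hy
    · rintro z ⟨h1, h2, h3⟩
      have := zeta_deriv_bound h1 h2 (by rw [h3]; exact hy)
      rwa [h3] at this
    · have : {z : ℂ | 1 ≤ z.re ∧ z.re ≤ 2 ∧ z.im = y} =
          {z : ℂ | 1 ≤ z.re} ∩ ({z : ℂ | z.re ≤ 2} ∩ {z : ℂ | z.im = y}) := by
        ext z; simp
      rw [this]
      refine (convex_halfSpace_re_ge 1).inter ((convex_halfSpace_re_le 2).inter ?_)
      have h2 : {z : ℂ | z.im = y} = {z : ℂ | z.im ≤ y} ∩ {z : ℂ | y ≤ z.im} := by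
        ext z; simp [le_antisymm_iff]
      rw [h2]
      exact (convex_halfSpace_im_le y).inter (convex_halfSpace_im_ge y)
    · simp; constructor <;> linarith
    · simp; constructor <;> linarith
  have hn : ‖(1 + η + Complex.I * y : ℂ) - (1 + x + Complex.I * y)‖ ≤ η := by
    have : (1 + η + Complex.I * y : ℂ) - (1 + x + Complex.I * y) = ((η - x : ℝ) : ℂ) := by
      push_cast; ring
    rw [this, Complex.norm_real, Real.norm_eq_abs, abs_of_pos (by linarith)]
    linarith
  set Z := ‖riemannZeta (1 + x + Complex.I * y)‖
  have htri : ‖riemannZeta (1 + η + Complex.I * y)‖ ≤ Z + 145 * |y| * η := by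
    have h1 := norm_sub_norm_le (riemannZeta (1 + η + Complex.I * y))
      (riemannZeta (1 + x + Complex.I * y))
    have h2 : 145 * |y| * ‖(1 + η + Complex.I * y : ℂ) - (1 + x + Complex.I * y)‖ ≤
      145 * |y| * η := by gcongr
    linarith
  have h6 : e * d ^ 3 ≤ |y| ^ 4 * (Z + 145 * |y| * η) := hA.trans (by gcongr)
  have h7 : |y| ^ 4 * (Z + 145 * |y| * η) = |y| ^ 4 * Z + 145 * d ^ 4 := by
    rw [hη]; field_simp
  have h8 : 145 * d ^ 4 = e * d ^ 3 / 2 := by rw [he, hd]; norm_num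
  linarith

/-- `|(s - 1) ζ(s)| ≫ (1 + |Im s|)^{-4}` for `1 < Re s ≤ 2`. -/
lemma zeta1_lower : ∃ c : ℝ, 0 < c ∧ ∀ s : ℂ, 1 < s.re → s.re ≤ 2 →
    c ≤ (1 + |s.im|) ^ 4 * ‖riemannZeta₁ s‖ := by
  obtain ⟨c1, hc1, H1⟩ := zeta_lower
  set K : Set ℂ := Set.Icc 1 2 ×ℂ Set.Icc (-1) 1 with hK
  have hKc : IsCompact K := isCompact_Icc.reProdIm isCompact_Icc
  have hne : K.Nonempty := ⟨1, by simp [hK, Complex.mem_reProdIm]⟩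
  obtain ⟨z, hz, hmin⟩ := hKc.exists_isMinOn hne
    (differentiable_riemannZeta₁.continuous.norm.continuousOn)
  have hzpos : 0 < ‖riemannZeta₁ z‖ := by
    rw [norm_pos_iff]
    by_cases h1 : z = 1
    · rw [h1]; simp
    · intro h0
      refine riemannZeta_ne_zero_of_one_le_re (s := z) ?_ ?_
      · rw [hK, Complex.mem_reProdIm] at hz
        exact hz.1.1
      · rw [riemannZeta_eq_inv_sub_mul h1, h0, mul_zero]
  refine ⟨min c1 ‖riemannZeta₁ z‖, lt_min hc1 hzpos, ?_⟩
  intro s h1 h2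
  have ht := one_le_tau s
  by_cases hy : 1 ≤ |s.im|
  · refine (min_le_left _ _).trans ?_
    have hs : s ≠ 1 := by rintro rfl; norm_num at hy
    have h := H1 (s.re - 1) s.im (by linarith) (by linarith) hy
    have hs' : (1 + (s.re - 1 : ℝ) + Complex.I * s.im : ℂ) = s := by
      apply Complex.ext <;> simp
    rw [hs', riemannZeta_eq_inv_sub_mul hs, norm_mul, norm_inv] at h
    have hn : 1 ≤ ‖s - 1‖ := by
      refine le_trans ?_ (Complex.abs_im_le_norm _)
      simpa using hy
    refine h.trans ?_
    gcongr
    · linarith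
    · exact mul_le_of_le_one_left (norm_nonneg _) (inv_le_one_of_one_le₀ hn)
  · push Not at hy
    refine (min_le_right _ _).trans ?_
    have hm : ‖riemannZeta₁ z‖ ≤ ‖riemannZeta₁ s‖ := hmin (by
      rw [hK, Complex.mem_reProdIm]
      exact ⟨⟨h1.le, h2⟩, ⟨(abs_lt.1 hy).1.le, (abs_lt.1 hy).2.le⟩⟩)
    refine hm.trans (le_mul_of_one_le_left (norm_nonneg _) (one_le_pow₀ ht))

/-! ### The Dirichlet series of `(Λ(n) - 1) log n` -/

/-- The coefficients `Λ(n) - 1`, whose Dirichlet series has no pole on the line `Re s = 1`. -/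
noncomputable def cb (n : ℕ) : ℂ := (ArithmeticFunction.vonMangoldt n : ℂ) - 1

lemma cb_summable {s : ℂ} (hs : 1 < s.re) : LSeriesSummable cb s :=
  (ArithmeticFunction.LSeriesSummable_vonMangoldt hs).sub (LSeriesSummable_one_iff.2 hs)

lemma cb_abscissa : LSeries.abscissaOfAbsConv cb ≤ 1 := by
  refine LSeries.abscissaOfAbsConv_le_of_forall_lt_LSeriesSummable' fun y hy => ?_
  refine cb_summable ?_
  simpa using (by exact_mod_cast hy : (1:ℝ) < y)

lemma cb_abscissa_lt {s : ℂ} (hs : 1 < s.re) : LSeries.abscissaOfAbsConv cb < s.re :=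
  lt_of_le_of_lt cb_abscissa (by exact_mod_cast hs)

lemma zeta1_ne_zero {s : ℂ} (hs : 1 < s.re) : riemannZeta₁ s ≠ 0 := by
  have hs1 : s ≠ 1 := by rintro rfl; simp at hs
  intro h
  apply riemannZeta_ne_zero_of_one_lt_re hs
  rw [riemannZeta_eq_inv_sub_mul hs1, h, mul_zero]

lemma cb_LSeries {s : ℂ} (hs : 1 < s.re) :
    LSeries cb s = -(deriv riemannZeta₁ s / riemannZeta₁ s) - riemannZeta₀ s := by
  have hs1 : s ≠ 1 := by rintro rfl; simp at hs
  have h1 : LSeries cb s = LSeries (fun n => (ArithmeticFunction.vonMangoldt n : ℂ)) s - LSeries 1 s :=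
    LSeries_sub (ArithmeticFunction.LSeriesSummable_vonMangoldt hs) (LSeriesSummable_one_iff.2 hs)
  rw [h1, LSeries_one_eq_riemannZeta hs,
    ArithmeticFunction.LSeries_vonMangoldt_eq_deriv_riemannZeta_div hs,
    deriv_riemannZeta_eq_neg_inv_sub_sq_mul_add hs1]
  have hz := zeta1_ne_zero hs
  have hne : s - 1 ≠ 0 := sub_ne_zero.2 hs1
  conv_lhs => rw [riemannZeta_eq_inv_sub_mul hs1]
  have h0 : riemannZeta₁ s = 1 + (s-1) * riemannZeta₀ s := rfl
  have h2 : riemannZeta₀ s = (riemannZeta₁ s - 1) / (s-1) := by rw [h0]; field_simp; ring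
  rw [h2]
  field_simp
  ring

/-- The Dirichlet series of `(Λ(n) - 1) log n` grows at most polynomially on vertical lines,
uniformly up to the line `Re s = 1`. -/
lemma logMul_cb_bound : ∃ C : ℝ, 0 < C ∧ ∀ s : ℂ, 1 < s.re → s.re ≤ 2 →
    ‖LSeries (LSeries.logMul cb) s‖ ≤ C * (1 + |s.im|) ^ 12 := by
  obtain ⟨c, hc, Hc⟩ := zeta1_lower
  refine ⟨7168 / c + (448 / c) ^ 2 + 72, by positivity, ?_⟩
  intro s h1 h2
  have hz := zeta1_ne_zero h1
  have hd : deriv (LSeries cb) s = -((deriv (deriv riemannZeta₁) s * riemannZeta₁ s -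
      deriv riemannZeta₁ s * deriv riemannZeta₁ s) / riemannZeta₁ s ^ 2) - deriv riemannZeta₀ s := by
    have hev : LSeries cb =ᶠ[nhds s]
        fun s => -(deriv riemannZeta₁ s / riemannZeta₁ s) - riemannZeta₀ s := by
      filter_upwards [(isOpen_lt continuous_const Complex.continuous_re).mem_nhds
        (show s ∈ {z : ℂ | 1 < z.re} from h1)] with z hz
      exact cb_LSeries hz
    rw [hev.deriv_eq]
    have d1 := ((differentiable_deriv' differentiable_riemannZeta₁) s).hasDerivAt
    have d2 := (differentiable_riemannZeta₁ s).hasDerivAt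
    have d3 := (differentiable_riemannZeta₀ s).hasDerivAt
    exact ((d1.div d2 hz).neg.sub d3).deriv
  have hL := LSeries_deriv (cb_abscissa_lt h1)
  have e : LSeries (LSeries.logMul cb) s = deriv (deriv riemannZeta₁) s / riemannZeta₁ s -
      (deriv riemannZeta₁ s / riemannZeta₁ s) ^ 2 + deriv riemannZeta₀ s := by
    have : LSeries (LSeries.logMul cb) s = -deriv (LSeries cb) s := by rw [hL, neg_neg]
    rw [this, hd]
    field_simp
    ring
  set τ := 1 + |s.im| with hτ
  have ht : 1 ≤ τ := one_le_tau s
  have hnz : 0 < ‖riemannZeta₁ s‖ := norm_pos_iff.2 hz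
  have b0 := zeta0_deriv_bound (s := s) (by linarith) (by linarith)
  have b1 := zeta1_deriv_bound (s := s) (by linarith) (by linarith)
  have b2 := zeta1_deriv2_bound (s := s) h1.le h2
  have bl := Hc s h1 h2
  rw [← hτ] at b0 b1 b2 bl
  have hinv : ‖riemannZeta₁ s‖⁻¹ ≤ τ ^ 4 / c := by
    rw [inv_le_iff_one_le_mul₀ hnz, div_mul_eq_mul_div, le_div_iff₀ hc, one_mul]
    exact bl
  rw [e]
  calc _ ≤ ‖deriv (deriv riemannZeta₁) s / riemannZeta₁ s‖ +
        ‖(deriv riemannZeta₁ s / riemannZeta₁ s) ^ 2‖ + ‖deriv riemannZeta₀ s‖ :=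
        (norm_add_le _ _).trans (add_le_add_left (norm_sub_le _ _) _)
    _ ≤ (7168 * τ ^ 2) * (τ ^ 4 / c) + ((448 * τ ^ 2) * (τ ^ 4 / c)) ^ 2 + 72 * τ ^ 1 := by
        rw [norm_pow, norm_div, norm_div, div_eq_mul_inv, div_eq_mul_inv]
        gcongr
    _ = 7168 / c * τ ^ 6 + (448 / c) ^ 2 * τ ^ 12 + 72 * τ ^ 1 := by ring
    _ ≤ 7168 / c * τ ^ 12 + (448 / c) ^ 2 * τ ^ 12 + 72 * τ ^ 12 := by
        gcongr <;> first | exact ht | norm_num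
    _ = _ := by ring

lemma logMul_cb_summable {s : ℂ} (hs : 1 < s.re) : LSeriesSummable (LSeries.logMul cb) s :=
  LSeriesSummable_logMul_of_lt_re (cb_abscissa_lt hs)

lemma logMul_cb_continuous {σ : ℝ} (hσ : 1 < σ) {k : ℝ} :
    Continuous fun y : ℝ => LSeries (LSeries.logMul cb) ((σ : ℂ) + (k * y : ℝ) * Complex.I) := by
  have h : DifferentiableOn ℂ (LSeries (LSeries.logMul cb)) {z : ℂ | 1 < z.re} := by
    intro z hz
    refine (LSeries_analyticOnNhd _ z ?_).differentiableAt.differentiableWithinAt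
    change LSeries.abscissaOfAbsConv (LSeries.logMul cb) < z.re
    rw [LSeries.abscissaOfAbsConv_logMul]
    exact cb_abscissa_lt hz
  refine h.continuousOn.comp_continuous (by fun_prop) ?_
  intro y
  simpa using hσ

/-! ### The kernel `h` -/

lemma pow_mul_exp_neg_le (m : ℕ) {β : ℝ} (hβ : 0 < β) :
    ∃ C : ℝ, 0 < C ∧ ∀ u : ℝ, 0 < u → u ^ m * Real.exp (-u) ≤ C * u ^ (-β) := by
  obtain ⟨N, hN⟩ := exists_nat_ge ((m : ℝ) + β)
  refine ⟨1 + N.factorial, by positivity, ?_⟩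
  intro u hu
  have h1 : u ^ ((m:ℝ) + β) ≤ 1 + u ^ N := by
    rcases le_total u 1 with h | h
    · have := Real.rpow_le_one hu.le h (by positivity : 0 ≤ (m:ℝ) + β)
      have : 0 ≤ u ^ N := by positivity
      linarith
    · have := Real.rpow_le_rpow_of_exponent_le h hN
      rw [Real.rpow_natCast] at this
      linarith
  have h2 : u ^ N ≤ N.factorial * Real.exp u := by
    have := Real.pow_div_factorial_le_exp u hu.le N
    rw [div_le_iff₀ (by positivity)] at this
    linarith
  have h3 : 1 ≤ Real.exp u := Real.one_le_exp hu.le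
  have h4 : u ^ ((m:ℝ) + β) ≤ (1 + N.factorial) * Real.exp u := by nlinarith
  rw [Real.rpow_add hu, Real.rpow_natCast] at h4
  rw [Real.exp_neg, Real.rpow_neg hu.le]
  have : 0 < u ^ β := by positivity
  have := Real.exp_pos u
  rw [← div_eq_mul_inv, ← div_eq_mul_inv, div_le_div_iff₀ (by positivity) (by positivity)]
  exact h4

lemma summable_succ_rpow {β : ℝ} (hβ : 0 < β) :
    Summable fun j : ℕ => ((j : ℝ) + 1) ^ (-(1 + β)) := by
  have := (Real.summable_nat_rpow (p := -(1+β))).2 (by linarith)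
  have h := (summable_nat_add_iff 1).2 this
  simpa using h

/-- `g_m(u) = ∑_{j ≥ 1} (j u)^m e^{-ju} / j`, for `u > 0`. At `u = 0` the value is `0` for every
`m`; when `m = 0` this is the default value of a divergent sum. -/
noncomputable def gker (m : ℕ) (u : ℝ) : ℝ :=
  ∑' j : ℕ, (((j : ℝ) + 1) * u) ^ m * Real.exp (-(((j : ℝ) + 1) * u)) / ((j : ℝ) + 1)

lemma gterm_le {m : ℕ} {β C : ℝ}
    (h : ∀ u : ℝ, 0 < u → u ^ m * Real.exp (-u) ≤ C * u ^ (-β)) {u : ℝ} (hu : 0 < u) (j : ℕ) :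
    (((j : ℝ) + 1) * u) ^ m * Real.exp (-(((j : ℝ) + 1) * u)) / ((j : ℝ) + 1) ≤
      C * u ^ (-β) * ((j : ℝ) + 1) ^ (-(1 + β)) := by
  have hj : (0:ℝ) < (j:ℝ) + 1 := by positivity
  have := h (((j:ℝ) + 1) * u) (by positivity)
  rw [Real.mul_rpow hj.le hu.le] at this
  rw [div_le_iff₀ hj]
  refine this.trans (le_of_eq ?_)
  have e : ((j:ℝ) + 1) ^ (-(1 + β)) * ((j:ℝ) + 1) = ((j:ℝ) + 1) ^ (-β) := by
    rw [← Real.rpow_add_one hj.ne']; ring_nf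
  rw [mul_assoc (C * u ^ (-β)), e]; ring

lemma gterm_nonneg (m : ℕ) {u : ℝ} (hu : 0 ≤ u) (j : ℕ) :
    0 ≤ (((j : ℝ) + 1) * u) ^ m * Real.exp (-(((j : ℝ) + 1) * u)) / ((j : ℝ) + 1) := by
  positivity

lemma gterm_summable (m : ℕ) {u : ℝ} (hu : 0 < u) :
    Summable fun j : ℕ =>
      (((j : ℝ) + 1) * u) ^ m * Real.exp (-(((j : ℝ) + 1) * u)) / ((j : ℝ) + 1) := by
  obtain ⟨C, hC, h⟩ := pow_mul_exp_neg_le m zero_lt_one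
  exact Summable.of_nonneg_of_le (fun j => gterm_nonneg m hu.le j) (fun j => gterm_le h hu j)
    ((summable_succ_rpow zero_lt_one).mul_left _)

lemma gker_nonneg (m : ℕ) {u : ℝ} (hu : 0 ≤ u) : 0 ≤ gker m u :=
  tsum_nonneg fun j => gterm_nonneg m hu j

lemma gker_zero (m : ℕ) : gker m 0 = 0 := by
  unfold gker
  rcases Nat.eq_zero_or_pos m with h | h
  · subst h
    simp only [mul_zero, pow_zero, neg_zero, Real.exp_zero, mul_one]
    apply tsum_eq_zero_of_not_summable
    intro hs
    have := (summable_nat_add_iff (f := fun j : ℕ => (1:ℝ) / j) 1).1 (by simpa using hs)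
    exact Real.not_summable_one_div_natCast this
  · simp [h.ne']

lemma gker_le (m : ℕ) {β : ℝ} (hβ : 0 < β) :
    ∃ C : ℝ, 0 < C ∧ ∀ u : ℝ, 0 < u → gker m u ≤ C * u ^ (-β) := by
  obtain ⟨C, hC, h⟩ := pow_mul_exp_neg_le m hβ
  have hS := summable_succ_rpow hβ
  have hpos : 0 < ∑' j : ℕ, ((j : ℝ) + 1) ^ (-(1 + β)) :=
    hS.tsum_pos (fun j => by positivity) 0 (by positivity)
  refine ⟨C * ∑' j : ℕ, ((j : ℝ) + 1) ^ (-(1 + β)), by positivity, ?_⟩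
  intro u hu
  calc gker m u ≤ ∑' j : ℕ, C * u ^ (-β) * ((j : ℝ) + 1) ^ (-(1 + β)) :=
        (gterm_summable m hu).tsum_le_tsum (fun j => gterm_le h hu j) (hS.mul_left _)
    _ = _ := by rw [tsum_mul_left]; ring

/-- `h(x) = g_m(x^k)`, the weight attached to `n = xY`. -/
noncomputable def hker (k m : ℕ) (x : ℝ) : ℝ := gker m (x ^ k)

lemma hker_nonneg (k m : ℕ) {x : ℝ} (hx : 0 ≤ x) : 0 ≤ hker k m x :=
  gker_nonneg m (by positivity)

lemma hker_zero {k : ℕ} (hk : 1 ≤ k) (m : ℕ) : hker k m 0 = 0 := by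
  unfold hker
  rw [zero_pow (by omega), gker_zero]

lemma hker_le {k : ℕ} (hk : 1 ≤ k) (m : ℕ) {β : ℝ} (hβ : 0 < β) :
    ∃ C : ℝ, 0 < C ∧ ∀ x : ℝ, 0 < x → hker k m x ≤ C * x ^ (-β) := by
  have hk0 : (0:ℝ) < k := by exact_mod_cast hk
  obtain ⟨C, hC, h⟩ := gker_le m (β := β / k) (by positivity)
  refine ⟨C, hC, fun x hx => ?_⟩
  refine (h (x ^ k) (by positivity)).trans (le_of_eq ?_)
  rw [← Real.rpow_natCast, ← Real.rpow_mul hx.le]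
  congr 2
  field_simp

/-! ### The Mellin transform of the smoothed sum -/

lemma norm_Gamma_le {s : ℂ} (hs : 0 < s.re) : ‖Complex.Gamma s‖ ≤ Real.Gamma s.re := by
  rw [Complex.Gamma_eq_integral hs, Complex.GammaIntegral, Real.Gamma_eq_integral hs]
  refine (MeasureTheory.norm_integral_le_integral_norm _).trans (le_of_eq ?_)
  refine MeasureTheory.setIntegral_congr_fun measurableSet_Ioi fun t ht => ?_
  have ht : 0 < t := ht
  simp only [norm_mul]
  rw [Complex.norm_cpow_eq_rpow_re_of_pos ht]
  simp [Complex.norm_exp]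

/-- Iterating the functional equation of `Γ` produces polynomial decay in vertical strips. -/
lemma Gamma_mul_pow_le {c : ℝ} (hc : 0 < c) (hc1 : c ≤ 1 / 2) (N : ℕ) {s : ℂ}
    (hs : 2 * c ≤ s.re) :
    ‖Complex.Gamma s‖ * (c * (1 + |s.im|)) ^ N ≤ ‖Complex.Gamma (s + N)‖ := by
  induction N with
  | zero => simp
  | succ N ih =>
    have hre : 2 * c ≤ (s + N).re := by
      have : (0:ℝ) ≤ N := Nat.cast_nonneg N
      simp; linarith
    have hne : s + N ≠ 0 := by
      intro h; rw [h] at hre; simp at hre; linarith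
    have h1 : c * (1 + |s.im|) ≤ ‖s + N‖ := by
      have a := Complex.abs_re_le_norm (s + N)
      have b := Complex.abs_im_le_norm (s + N)
      have e : (s + N).im = s.im := by simp
      rw [e] at b
      have := le_abs_self (s + N).re
      have : c * |s.im| ≤ (1 / 2) * |s.im| := by gcongr
      linarith
    have : s + ((N + 1 : ℕ) : ℂ) = (s + N) + 1 := by push_cast; ring
    rw [this, Complex.Gamma_add_one _ hne, norm_mul, pow_succ, ← mul_assoc, mul_comm ‖s + N‖]
    gcongr

/-- The exponents `j n^k`, with `j` shifted by one. -/
noncomputable def pE (k : ℕ) (i : ℕ × ℕ) : ℝ := ((i.2 : ℝ) + 1) * (i.1 : ℝ) ^ k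

/-- The coefficients `(Λ(n) - 1) log n · (j n^k)^m / j`. -/
noncomputable def aE (k m : ℕ) (i : ℕ × ℕ) : ℂ :=
  LSeries.logMul cb i.1 * ((pE k i ^ m / ((i.2 : ℝ) + 1) : ℝ) : ℂ)

/-- A summable majorant for the coefficients `aE`, when `kβ > 1`. -/
noncomputable def wE (k : ℕ) (β : ℝ) (i : ℕ × ℕ) : ℝ :=
  ‖LSeries.term (LSeries.logMul cb) ((k * β : ℝ) : ℂ) i.1‖ * ((i.2 : ℝ) + 1) ^ (-(1 + β))

/-- `T(t) = ∑_{n,j} (Λ(n) - 1) log n · (j n^k)^m / j · e^{-j n^k t}`. -/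
noncomputable def TE (k m : ℕ) (t : ℝ) : ℂ := ∑' i : ℕ × ℕ, aE k m i * Real.exp (-pE k i * t)

lemma aE_zero (k m j : ℕ) : aE k m (0, j) = 0 := by simp [aE, LSeries.logMul]

lemma pE_pos (k : ℕ) {i : ℕ × ℕ} (hi : i.1 ≠ 0) : 0 < pE k i := by
  have : (0:ℝ) < i.1 := by exact_mod_cast Nat.pos_of_ne_zero hi
  unfold pE; positivity

lemma wE_summable {k : ℕ} {β : ℝ} (hβ : 0 < β) (hk : 1 < k * β) : Summable (wE k β) := by
  have h1 := (logMul_cb_summable (s := ((k * β : ℝ) : ℂ)) (by simpa using hk)).norm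
  exact h1.mul_of_nonneg (summable_succ_rpow hβ) (fun _ => norm_nonneg _)
    (fun _ => by positivity)

lemma wE_eq (k m : ℕ) (β : ℝ) {i : ℕ × ℕ} (hi : i.1 ≠ 0) :
    ‖aE k m i‖ = wE k β i * pE k i ^ ((m:ℝ) + β) := by
  have hn : (0:ℝ) < i.1 := by exact_mod_cast Nat.pos_of_ne_zero hi
  have hp := pE_pos k hi
  have hj : (0:ℝ) < (i.2:ℝ) + 1 := by positivity
  unfold aE wE
  rw [LSeries.norm_term_eq, if_neg hi, Real.rpow_add hp, Real.rpow_natCast, norm_mul,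
    Complex.norm_real, Real.norm_of_nonneg (by positivity)]
  have e : pE k i ^ β = ((i.2:ℝ) + 1) ^ β * (i.1:ℝ) ^ ((k:ℝ) * β) := by
    unfold pE
    rw [Real.mul_rpow hj.le (by positivity), ← Real.rpow_natCast, ← Real.rpow_mul hn.le]
  rw [e, Real.rpow_neg hj.le, Real.rpow_add hj, Real.rpow_one, Complex.ofReal_re]
  have : 0 < ((i.2:ℝ) + 1) ^ β := by positivity
  have : 0 < (i.1:ℝ) ^ ((k:ℝ) * β) := by positivity
  field_simp

/-- Term-by-term majorant for `T`, from `u^m e^{-u} ≪ u^{-β}`. -/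
lemma aE_term_le (k m : ℕ) {β : ℝ} (hβ : 0 < β) : ∃ C : ℝ, 0 < C ∧ ∀ t : ℝ, 0 < t → ∀ i,
    ‖aE k m i * Real.exp (-pE k i * t)‖ ≤ C * t ^ (-((m:ℝ) + β)) * wE k β i := by
  obtain ⟨C, hC, h⟩ := pow_mul_exp_neg_le m hβ
  refine ⟨C, hC, fun t ht i => ?_⟩
  rcases eq_or_ne i.1 0 with hi | hi
  · obtain ⟨n, j⟩ := i
    simp only at hi
    subst hi
    rw [aE_zero]
    simp only [zero_mul, norm_zero]
    unfold wE; positivity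
  · have hp := pE_pos k hi
    have hw : 0 ≤ wE k β i := by unfold wE; positivity
    rw [norm_mul, wE_eq k m β hi, Complex.norm_real, Real.norm_of_nonneg (Real.exp_pos _).le]
    have := h (pE k i * t) (by positivity)
    rw [Real.mul_rpow hp.le ht.le, mul_pow] at this
    rw [Real.rpow_add hp, neg_add, Real.rpow_add ht, Real.rpow_natCast, Real.rpow_neg ht.le m,
      Real.rpow_natCast]
    have hpb : pE k i ^ β * pE k i ^ (-β) = 1 := by
      rw [← Real.rpow_add hp]; simp
    rw [neg_mul]
    calc wE k β i * (pE k i ^ m * pE k i ^ β) * Real.exp (-(pE k i * t))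
        = wE k β i * pE k i ^ β * (t ^ m)⁻¹ * (pE k i ^ m * t ^ m * Real.exp (-(pE k i * t))) := by
          field_simp
      _ ≤ wE k β i * pE k i ^ β * (t ^ m)⁻¹ * (C * (pE k i ^ (-β) * t ^ (-β))) := by
          gcongr
      _ = wE k β i * (pE k i ^ β * pE k i ^ (-β)) * (t ^ m)⁻¹ * (C * t ^ (-β)) := by ring
      _ = _ := by rw [hpb]; ring

lemma aE_summable {k : ℕ} (hk : 1 ≤ k) (m : ℕ) {t : ℝ} (ht : 0 < t) :
    Summable fun i => aE k m i * Real.exp (-pE k i * t) := by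
  obtain ⟨C, hC, h⟩ := aE_term_le k m (β := 2) two_pos
  have hk' : (1:ℝ) ≤ k := by exact_mod_cast hk
  exact Summable.of_norm_bounded ((wE_summable (k := k) two_pos (by linarith)).mul_left _) (h t ht)

lemma TE_le (k m : ℕ) {β : ℝ} (hβ : 0 < β) (hk : 1 < k * β) :
    ∃ C : ℝ, ∀ t : ℝ, 0 < t → ‖TE k m t‖ ≤ C * t ^ (-((m:ℝ) + β)) := by
  obtain ⟨C, hC, h⟩ := aE_term_le k m hβ
  refine ⟨C * ∑' i, wE k β i, fun t ht => ?_⟩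
  refine (tsum_of_norm_bounded ((wE_summable hβ hk).hasSum.mul_left _) (h t ht)).trans
    (le_of_eq ?_)
  ring

lemma TE_continuousAt {k : ℕ} (hk : 1 ≤ k) (m : ℕ) {t : ℝ} (ht : 0 < t) :
    ContinuousAt (TE k m) t := by
  obtain ⟨C, hC, h⟩ := aE_term_le k m (β := 2) two_pos
  have hk' : (1:ℝ) ≤ k := by exact_mod_cast hk
  have : ContinuousOn (TE k m) (Set.Ioi (t / 2)) := by
    refine continuousOn_tsum (u := fun i => C * (t / 2) ^ (-((m:ℝ) + 2)) * wE k 2 i) (fun i => ?_)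
      ((wE_summable (k := k) two_pos (by linarith)).mul_left _) (fun i x hx => ?_)
    · exact Continuous.continuousOn (by fun_prop)
    · have hx : t / 2 < x := hx
      refine (h x (by linarith) i).trans ?_
      have : 0 ≤ wE k 2 i := by unfold wE; positivity
      have : x ^ (-((m:ℝ) + 2)) ≤ (t / 2) ^ (-((m:ℝ) + 2)) :=
        Real.rpow_le_rpow_of_nonpos (by positivity) hx.le (by
          have : (0:ℝ) ≤ m := Nat.cast_nonneg m
          linarith)
      gcongr
  exact this.continuousAt (Ioi_mem_nhds (by linarith))

lemma TE_mellinConvergent {k : ℕ} (hk : 1 ≤ k) (m : ℕ) {ε : ℝ} (hε : 0 < ε) (hε1 : ε ≤ 1) :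
    MellinConvergent (TE k m) (((m:ℝ) + (1 + ε) / k : ℝ) : ℂ) := by
  have hk' : (0:ℝ) < k := by exact_mod_cast hk
  obtain ⟨C1, h1⟩ := TE_le k m (β := 3 / k) (by positivity) (by field_simp; norm_num)
  obtain ⟨C2, h2⟩ := TE_le k m (β := (1 + ε / 2) / k) (by positivity)
    (by field_simp; linarith)
  refine mellinConvergent_of_isBigO_rpow (a := m + 3 / k) (b := m + (1 + ε / 2) / k) ?_ ?_ ?_ ?_ ?_
  · refine ContinuousOn.locallyIntegrableOn (fun t ht => ?_) measurableSet_Ioi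
    exact (TE_continuousAt hk m ht).continuousWithinAt
  · refine Asymptotics.IsBigO.of_bound C1 ?_
    filter_upwards [eventually_gt_atTop 0] with t ht
    rw [Real.norm_of_nonneg (by positivity)]
    exact h1 t ht
  · rw [Complex.ofReal_re]
    gcongr; linarith
  · refine Asymptotics.IsBigO.of_bound C2 ?_
    filter_upwards [self_mem_nhdsWithin] with t ht
    have ht : 0 < t := ht
    rw [Real.norm_of_nonneg (by positivity)]
    exact h2 t ht
  · rw [Complex.ofReal_re]
    gcongr; linarith

lemma zeta_hasSum {w : ℂ} (hw : 1 < w.re) :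
    HasSum (fun j : ℕ => 1 / ((j : ℂ) + 1) ^ w) (riemannZeta w) ∧
    Summable fun j : ℕ => ‖1 / ((j : ℂ) + 1) ^ w‖ := by
  have e : ∀ j : ℕ, ‖1 / ((j : ℂ) + 1) ^ w‖ = ((j:ℝ) + 1) ^ (-(1 + (w.re - 1))) := by
    intro j
    have : ((j:ℂ) + 1) = (((j:ℝ) + 1 : ℝ) : ℂ) := by push_cast; rfl
    rw [norm_div, norm_one, this, Complex.norm_cpow_eq_rpow_re_of_pos (by positivity), one_div,
      ← Real.rpow_neg (by positivity)]
    congr 1; ring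
  have hs : Summable fun j : ℕ => ‖1 / ((j : ℂ) + 1) ^ w‖ := by
    simp_rw [e]; exact summable_succ_rpow (by linarith)
  refine ⟨?_, hs⟩
  rw [zeta_eq_tsum_one_div_nat_add_one_cpow hw]
  exact hs.of_norm.hasSum

lemma zeta_norm_le {β : ℝ} (hβ : 0 < β) {w : ℂ} (hw : 1 + β ≤ w.re) :
    ‖riemannZeta w‖ ≤ ∑' j : ℕ, ((j:ℝ) + 1) ^ (-(1 + β)) := by
  obtain ⟨h, -⟩ := zeta_hasSum (w := w) (by linarith)
  rw [← h.tsum_eq]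
  refine tsum_of_norm_bounded (summable_succ_rpow hβ).hasSum fun j => ?_
  have : ((j:ℂ) + 1) = (((j:ℝ) + 1 : ℝ) : ℂ) := by push_cast; rfl
  rw [norm_div, norm_one, this, Complex.norm_cpow_eq_rpow_re_of_pos (by positivity), one_div,
    ← Real.rpow_neg (by positivity)]
  exact Real.rpow_le_rpow_of_exponent_le (by linarith [(Nat.cast_nonneg j : (0:ℝ) ≤ j)])
    (by linarith)

lemma hasSum_mul_of_norm {f g : ℕ → ℂ} {a b : ℂ} (hf : HasSum f a) (hg : HasSum g b)
    (hf' : Summable fun n => ‖f n‖) (hg' : Summable fun n => ‖g n‖) :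
    HasSum (fun i : ℕ × ℕ => f i.1 * g i.2) (a * b) :=
  hf.mul hg (summable_mul_of_summable_norm hf' hg')

lemma aE_div_cpow (k m : ℕ) (s : ℂ) (i : ℕ × ℕ) :
    aE k m i / (pE k i : ℂ) ^ s = LSeries.term (LSeries.logMul cb) (k * (s - m)) i.1 *
        (1 / ((i.2 : ℂ) + 1) ^ (1 + (s - m))) := by
  obtain ⟨n, j⟩ := i
  rcases eq_or_ne n 0 with hi | hi
  · subst hi; rw [aE_zero]; simp
  have hn : (0:ℝ) < n := by exact_mod_cast Nat.pos_of_ne_zero hi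
  have hp := pE_pos k (i := (n, j)) hi
  have hj : (0:ℝ) < (j:ℝ) + 1 := by positivity
  have hpC : (pE k (n, j) : ℂ) ≠ 0 := by exact_mod_cast hp.ne'
  have hjC : ((j:ℂ) + 1) ≠ 0 := by exact_mod_cast hj.ne'
  have e1 : (pE k (n, j) : ℂ) ^ s = (pE k (n, j) : ℂ) ^ m * (pE k (n, j) : ℂ) ^ (s - m) := by
    rw [← Complex.cpow_natCast, ← Complex.cpow_add _ _ hpC]
    congr 1; ring
  have e2 : (pE k (n, j) : ℂ) ^ (s - m) = ((j:ℂ) + 1) ^ (s - m) * (n:ℂ) ^ (k * (s - m)) := by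
    have : (pE k (n, j) : ℂ) = (((j:ℝ) + 1 : ℝ) : ℂ) * (((n:ℝ) ^ k : ℝ) : ℂ) := by
      unfold pE; push_cast; rfl
    rw [this, Complex.mul_cpow_ofReal_nonneg hj.le (by positivity)]
    have e3 : (n:ℂ) ^ (k * (s - m)) = (((n:ℝ) ^ k : ℝ) : ℂ) ^ (s - m) := by
      rw [Complex.cpow_nat_mul' (by simp [Complex.natCast_arg, Real.pi_pos])
        (by simp [Complex.natCast_arg, Real.pi_pos.le])]
      push_cast; rfl
    rw [e3]; push_cast; rfl
  rw [LSeries.term_of_ne_zero hi, e1, e2, Complex.cpow_add _ _ hjC, Complex.cpow_one]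
  unfold aE
  push_cast
  have h1 : ((j:ℂ) + 1) ^ (s - m) ≠ 0 := by simp [Complex.cpow_eq_zero_iff, hjC]
  have h2 : (n:ℂ) ^ (k * (s - m)) ≠ 0 := by
    have : (n:ℂ) ≠ 0 := by exact_mod_cast hi
    simp [Complex.cpow_eq_zero_iff, this]
  field_simp

lemma TE_mellin {k : ℕ} (hk : 1 ≤ k) (m : ℕ) {s : ℂ} (hs : (m:ℝ) + 1 / k < s.re) :
    mellin (TE k m) s = Complex.Gamma s *
      (LSeries (LSeries.logMul cb) (k * (s - m)) * riemannZeta (1 + (s - m))) := by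
  have hk' : (0:ℝ) < k := by exact_mod_cast hk
  have hk1 : (0:ℝ) < 1 / k := by positivity
  have hm : (0:ℝ) ≤ m := Nat.cast_nonneg m
  have hks : 1 < k * (s.re - m) := by
    have : 1 / (k:ℝ) < s.re - m := by linarith
    rw [div_lt_iff₀ hk'] at this; linarith
  have hp0 : ∀ i, aE k m i = 0 ∨ 0 < pE k i := by
    rintro ⟨n, j⟩
    rcases eq_or_ne n 0 with hi | hi
    · left; subst hi; exact aE_zero k m j
    · right; exact pE_pos k hi
  have hsum : Summable fun i => ‖aE k m i‖ / pE k i ^ s.re := by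
    refine (wE_summable (k := k) (β := s.re - m) (by linarith) hks).of_nonneg_of_le
      (fun i => ?_) (fun i => ?_)
    · have : 0 ≤ pE k i := by unfold pE; positivity
      positivity
    · rcases eq_or_ne i.1 0 with hi | hi
      · obtain ⟨n, j⟩ := i
        simp only at hi
        subst hi
        rw [aE_zero]
        simp only [norm_zero, zero_div]
        unfold wE; positivity
      · have hp := pE_pos k hi
        rw [wE_eq k m (s.re - m) hi, add_sub_cancel, mul_div_cancel_right₀ _ (by positivity)]
  have hTs : ∀ t ∈ Set.Ioi (0:ℝ), HasSum (fun i => aE k m i * Real.exp (-pE k i * t)) (TE k m t) :=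
    fun t ht => (aE_summable hk m ht).hasSum
  have hs0 : 0 < s.re := by linarith
  have H := hasSum_mellin hp0 hs0 hTs hsum
  have hL := logMul_cb_summable (s := k * (s - m)) (by simpa using hks)
  obtain ⟨hz, hz'⟩ := zeta_hasSum (w := 1 + (s - m)) (by simp; linarith)
  have hP := (hasSum_mul_of_norm (f := LSeries.term (LSeries.logMul cb) (k * (s - m)))
    (LSeriesSummable.LSeriesHasSum hL) hz hL.norm hz').mul_left (Complex.Gamma s)
  have key : (fun i : ℕ × ℕ => Complex.Gamma s * aE k m i / (pE k i : ℂ) ^ s) =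
      fun i : ℕ × ℕ => Complex.Gamma s * (LSeries.term (LSeries.logMul cb) (k * (s - m)) i.1 *
        (1 / ((i.2 : ℂ) + 1) ^ (1 + (s - m)))) := by
    funext i
    rw [mul_div_assoc]
    congr 1
    exact aE_div_cpow k m s i
  rw [key] at H
  exact H.unique hP

/-! ### Mellin inversion and the smoothed prime number theorem -/

/-- The Mellin transform of `T` decays quadratically on the lines `Re s = m + (1 + ε)/k`, uniformly
in `ε ∈ (0, 1]`. -/
lemma TE_mellin_bound {k : ℕ} (hk : 1 ≤ k) (m : ℕ) : ∃ C : ℝ, 0 < C ∧ ∀ ε : ℝ, 0 < ε → ε ≤ 1 →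
    ∀ y : ℝ, ‖mellin (TE k m) ((((m:ℝ) + (1 + ε) / k : ℝ) : ℂ) + y * Complex.I)‖ ≤
      C * (1 + y ^ 2)⁻¹ := by
  have hk' : (1:ℝ) ≤ k := by exact_mod_cast hk
  have hk0 : (0:ℝ) < k := by linarith
  have hm : (0:ℝ) ≤ m := Nat.cast_nonneg m
  obtain ⟨C, hC, h⟩ := logMul_cb_bound
  have hS := summable_succ_rpow (β := 1 / (k:ℝ)) (by positivity)
  obtain ⟨Z, hZ⟩ : ∃ Z : ℝ, Z = ∑' j : ℕ, ((j:ℝ) + 1) ^ (-(1 + 1 / (k:ℝ))) := ⟨_, rfl⟩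
  have hZ0 : 0 < Z := by
    rw [hZ]; exact hS.tsum_pos (fun j => by positivity) 0 (by positivity)
  have hG : 0 < Real.Gamma ((m:ℝ) + 16) := Real.Gamma_pos_of_pos (by positivity)
  refine ⟨2 * (Real.Gamma ((m:ℝ) + 16) * (2 * k) ^ 14 * (C * k ^ 12 * Z)), by positivity, ?_⟩
  intro ε hε hε1 y
  obtain ⟨s, hs⟩ : ∃ s : ℂ, s = (((m:ℝ) + (1 + ε) / k : ℝ) : ℂ) + y * Complex.I := ⟨_, rfl⟩
  have hre : s.re = (m:ℝ) + (1 + ε) / k := by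
    rw [hs, Complex.add_re, Complex.ofReal_re]; simp
  have him : s.im = y := by
    rw [hs, Complex.add_im, Complex.ofReal_im]; simp
  have hkε : 1 / (k:ℝ) < (1 + ε) / k := by gcongr; linarith
  have hkε2 : (1 + ε) / (k:ℝ) ≤ 2 := by rw [div_le_iff₀ hk0]; linarith
  rw [← hs, TE_mellin hk m (by rw [hre]; linarith), norm_mul, norm_mul]
  have e1 : (k * (s - m) : ℂ).re = 1 + ε := by
    have : (k * (s - m) : ℂ).re = k * (s.re - m) := by simp
    rw [this, hre]; field_simp; ring
  have e2 : (k * (s - m) : ℂ).im = k * y := by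
    have : (k * (s - m) : ℂ).im = k * s.im := by simp
    rw [this, him]
  have b1 := h (k * (s - m)) (by rw [e1]; linarith) (by rw [e1]; linarith)
  rw [e2] at b1
  have b2 : ‖riemannZeta (1 + (s - m))‖ ≤ Z := by
    rw [hZ]
    refine zeta_norm_le (by positivity) ?_
    simp only [Complex.add_re, Complex.one_re, Complex.sub_re, Complex.natCast_re]
    rw [hre]; linarith
  have b3 := Gamma_mul_pow_le (c := 1 / (2 * k)) (by positivity)
    (by rw [div_le_div_iff₀ (by positivity) (by norm_num)]; linarith) 14 (s := s) (by
      rw [hre]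
      have : 2 * (1 / (2 * (k:ℝ))) = 1 / k := by field_simp
      linarith)
  have hre2 : (s + (14 : ℕ)).re = (m:ℝ) + (1 + ε) / k + 14 := by
    rw [Complex.add_re, hre]; simp
  have b4 : ‖Complex.Gamma (s + (14 : ℕ))‖ ≤ Real.Gamma ((m:ℝ) + 16) := by
    have hpos : 0 < (1 + ε) / (k:ℝ) := by positivity
    refine (norm_Gamma_le (by rw [hre2]; linarith)).trans ?_
    rw [hre2]
    refine Real.Gamma_strictMonoOn_Ici.monotoneOn ?_ ?_ ?_
    · show (2:ℝ) ≤ _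
      linarith
    · show (2:ℝ) ≤ _
      linarith
    · linarith
  rw [him] at b3
  have hy : 0 ≤ |y| := abs_nonneg y
  have b5 : ‖Complex.Gamma s‖ ≤ Real.Gamma ((m:ℝ) + 16) * (2 * k) ^ 14 / (1 + |y|) ^ 14 := by
    rw [le_div_iff₀ (by positivity)]
    have e : ‖Complex.Gamma s‖ * (1 / (2 * k) * (1 + |y|)) ^ 14 * (2 * k) ^ 14 =
        ‖Complex.Gamma s‖ * (1 + |y|) ^ 14 := by
      field_simp
    rw [← e]
    exact mul_le_mul_of_nonneg_right (b3.trans b4) (by positivity)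
  have b6 : ‖LSeries (LSeries.logMul cb) (k * (s - m))‖ ≤ C * k ^ 12 * (1 + |y|) ^ 12 := by
    refine b1.trans ?_
    rw [mul_assoc, ← mul_pow, abs_mul, abs_of_pos hk0]
    gcongr
    linarith
  calc ‖Complex.Gamma s‖ * (‖LSeries (LSeries.logMul cb) (k * (s - m))‖ *
        ‖riemannZeta (1 + (s - m))‖)
      ≤ (Real.Gamma ((m:ℝ) + 16) * (2 * k) ^ 14 / (1 + |y|) ^ 14) *
        (C * k ^ 12 * (1 + |y|) ^ 12 * Z) := by gcongr
    _ = Real.Gamma ((m:ℝ) + 16) * (2 * k) ^ 14 * (C * k ^ 12 * Z) * ((1 + |y|) ^ 2)⁻¹ := by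
        field_simp
    _ ≤ Real.Gamma ((m:ℝ) + 16) * (2 * k) ^ 14 * (C * k ^ 12 * Z) * (2 * (1 + y ^ 2)⁻¹) := by
        gcongr
        rw [← div_eq_mul_inv, inv_eq_one_div, div_le_div_iff₀ (by positivity) (by positivity),
          ← sq_abs y]
        nlinarith
    _ = _ := by ring

lemma TE_mellin_continuous {k : ℕ} (hk : 1 ≤ k) (m : ℕ) {ε : ℝ} (hε : 0 < ε) :
    Continuous fun y : ℝ => mellin (TE k m) ((((m:ℝ) + (1 + ε) / k : ℝ) : ℂ) + y * Complex.I) := by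
  have hk0 : (0:ℝ) < k := by exact_mod_cast hk
  have hm : (0:ℝ) ≤ m := Nat.cast_nonneg m
  have hkε : 1 / (k:ℝ) < (1 + ε) / k := by gcongr; linarith
  have hpos : 0 < 1 / (k:ℝ) := by positivity
  have hre : ∀ y : ℝ, ((((m:ℝ) + (1 + ε) / k : ℝ) : ℂ) + y * Complex.I).re =
      (m:ℝ) + (1 + ε) / k := by
    intro y; rw [Complex.add_re, Complex.ofReal_re]; simp
  have e : (fun y : ℝ => mellin (TE k m) ((((m:ℝ) + (1 + ε) / k : ℝ) : ℂ) + y * Complex.I)) =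
      fun y : ℝ => Complex.Gamma ((((m:ℝ) + (1 + ε) / k : ℝ) : ℂ) + y * Complex.I) *
        (LSeries (LSeries.logMul cb) (((1 + ε : ℝ) : ℂ) + (k * y : ℝ) * Complex.I) *
        riemannZeta (1 + ((((m:ℝ) + (1 + ε) / k : ℝ) : ℂ) + y * Complex.I - m))) := by
    funext y
    rw [TE_mellin hk m (by rw [hre]; linarith)]
    congr 3
    have : (k:ℂ) ≠ 0 := by exact_mod_cast hk0.ne'
    push_cast
    field_simp
    ring
  rw [e]
  refine Continuous.mul ?_ (Continuous.mul (logMul_cb_continuous (by linarith)) ?_)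
  · refine continuous_iff_continuousAt.2 fun y => ?_
    have hd : ContinuousAt Complex.Gamma ((((m:ℝ) + (1 + ε) / k : ℝ) : ℂ) + y * Complex.I) := by
      refine (Complex.differentiableAt_Gamma _ fun n hn => ?_).continuousAt
      have := congrArg Complex.re hn
      rw [hre] at this
      have hn0 : (0:ℝ) ≤ n := Nat.cast_nonneg n
      simp at this
      linarith
    exact ContinuousAt.comp (f := fun y : ℝ => (((m:ℝ) + (1 + ε) / k : ℝ) : ℂ) + y * Complex.I) hd
      (by fun_prop)
  · refine continuous_iff_continuousAt.2 fun y => ?_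
    have hd : ContinuousAt riemannZeta
        (1 + ((((m:ℝ) + (1 + ε) / k : ℝ) : ℂ) + y * Complex.I - m)) := by
      refine (differentiableAt_riemannZeta fun hn => ?_).continuousAt
      have := congrArg Complex.re hn
      rw [Complex.add_re, Complex.sub_re, hre] at this
      simp only [Complex.one_re, Complex.natCast_re] at this
      linarith
    exact ContinuousAt.comp
      (f := fun y : ℝ => 1 + ((((m:ℝ) + (1 + ε) / k : ℝ) : ℂ) + y * Complex.I - m)) hd
      (by fun_prop)

/-- Mellin inversion. The constant is uniform in `ε`. -/
lemma TE_bound {k : ℕ} (hk : 1 ≤ k) (m : ℕ) : ∃ C : ℝ, 0 < C ∧ ∀ ε : ℝ, 0 < ε → ε ≤ 1 →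
    ∀ t : ℝ, 0 < t → ‖TE k m t‖ ≤ C * t ^ (-((m:ℝ) + (1 + ε) / k)) := by
  obtain ⟨C, hC, h⟩ := TE_mellin_bound hk m
  refine ⟨C, hC, fun ε hε hε1 t ht => ?_⟩
  have hintg : MeasureTheory.Integrable fun y : ℝ => C * (1 + y ^ 2)⁻¹ :=
    integrable_inv_one_add_sq.const_mul C
  have hV : Complex.VerticalIntegrable (mellin (TE k m)) ((m:ℝ) + (1 + ε) / k) := by
    refine hintg.mono' (TE_mellin_continuous hk m hε).aestronglyMeasurable ?_
    exact Eventually.of_forall (h ε hε hε1)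
  rw [← mellinInv_mellin_eq _ (TE k m) ht (TE_mellinConvergent hk m hε hε1) hV
    (TE_continuousAt hk m ht), mellinInv, norm_smul, Real.norm_of_nonneg (by positivity)]
  have hb : ‖∫ y : ℝ, (t : ℂ) ^ (-((((m:ℝ) + (1 + ε) / k : ℝ) : ℂ) + y * Complex.I)) •
      mellin (TE k m) ((((m:ℝ) + (1 + ε) / k : ℝ) : ℂ) + y * Complex.I)‖ ≤
      ∫ y : ℝ, t ^ (-((m:ℝ) + (1 + ε) / k)) * (C * (1 + y ^ 2)⁻¹) := by
    refine MeasureTheory.norm_integral_le_of_norm_le (hintg.const_mul _)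
      (Eventually.of_forall fun y => ?_)
    rw [norm_smul, Complex.norm_cpow_eq_rpow_re_of_pos ht]
    have : (-((((m:ℝ) + (1 + ε) / k : ℝ) : ℂ) + y * Complex.I)).re = -((m:ℝ) + (1 + ε) / k) := by
      rw [Complex.neg_re, Complex.add_re, Complex.ofReal_re]; simp
    rw [this]
    exact mul_le_mul_of_nonneg_left (h ε hε hε1 y) (by positivity)
  rw [MeasureTheory.integral_const_mul, MeasureTheory.integral_const_mul,
    integral_univ_inv_one_add_sq] at hb
  have hpi := Real.pi_pos
  calc 1 / (2 * Real.pi) * _ ≤ 1 / (2 * Real.pi) * (t ^ (-((m:ℝ) + (1 + ε) / k)) *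
        (C * Real.pi)) := by gcongr
    _ = (C * t ^ (-((m:ℝ) + (1 + ε) / k))) / 2 := by field_simp
    _ ≤ _ := by
      have : 0 < C * t ^ (-((m:ℝ) + (1 + ε) / k)) := by positivity
      linarith

/-- Summing over `j` first, `T(1/Y^k) = Y^{km} ∑ (Λ(n) - 1) log n · h(n/Y)`. -/
lemma TE_eq {k : ℕ} (hk : 1 ≤ k) (m : ℕ) {Y : ℝ} (hY : 0 < Y) :
    TE k m ((Y ^ k)⁻¹) = (((Y ^ k) ^ m * ∑' n : ℕ,
      (ArithmeticFunction.vonMangoldt n - 1) * Real.log n * hker k m (n / Y) : ℝ) : ℂ) := by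
  have ht : 0 < (Y ^ k)⁻¹ := by positivity
  unfold TE
  rw [(aE_summable hk m ht).tsum_prod, ← tsum_mul_left, Complex.ofReal_tsum]
  refine tsum_congr fun n => ?_
  have e : ∀ j : ℕ, aE k m (n, j) * Real.exp (-pE k (n, j) * (Y ^ k)⁻¹) =
      (((Y ^ k) ^ m * ((ArithmeticFunction.vonMangoldt n - 1) * Real.log n) *
      ((((j : ℝ) + 1) * (n / Y) ^ k) ^ m * Real.exp (-(((j : ℝ) + 1) * (n / Y) ^ k)) /
        ((j : ℝ) + 1)) : ℝ) : ℂ) := by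
    intro j
    unfold aE pE LSeries.logMul cb
    have : -(((j:ℝ) + 1) * (n:ℝ) ^ k) * (Y ^ k)⁻¹ = -(((j:ℝ) + 1) * (n / Y) ^ k) := by
      rw [div_pow]; field_simp
    simp only [this]
    rw [← Complex.natCast_log]
    have e2 : ((((j:ℝ) + 1) * (n:ℝ) ^ k) ^ m / ((j:ℝ) + 1)) =
        (Y ^ k) ^ m * ((((j : ℝ) + 1) * (n / Y) ^ k) ^ m / ((j:ℝ) + 1)) := by
      rw [← mul_div_assoc, ← mul_pow, div_pow]
      congr 2
      field_simp
    rw [e2]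
    push_cast
    ring
  simp_rw [e]
  rw [← Complex.ofReal_tsum, tsum_mul_left]
  unfold hker gker
  congr 1
  ring

/-- Smoothed prime number theorem: `∑ (Λ(n) - 1) log n · h(n/Y) = O(Y)`. -/
lemma smoothed_pnt {k : ℕ} (hk : 1 ≤ k) (m : ℕ) : ∃ C : ℝ, 0 < C ∧ ∀ Y : ℝ, Real.exp 1 ≤ Y →
    |∑' n : ℕ, (ArithmeticFunction.vonMangoldt n - 1) * Real.log n * hker k m (n / Y)| ≤ C * Y := by
  have hk0 : (0:ℝ) < k := by exact_mod_cast hk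
  obtain ⟨C, hC, h⟩ := TE_bound hk m
  refine ⟨C * Real.exp 1, by positivity, fun Y hY => ?_⟩
  have hY0 : 0 < Y := (Real.exp_pos 1).trans_le hY
  have hL : 1 ≤ Real.log Y := (Real.le_log_iff_exp_le hY0).2 hY
  have hL0 : 0 < Real.log Y := by linarith
  have H := h (1 / Real.log Y) (by positivity) (by rw [div_le_one hL0]; exact hL) ((Y ^ k)⁻¹)
    (by positivity)
  rw [TE_eq hk m hY0, Complex.norm_real, Real.norm_eq_abs, abs_mul, abs_of_pos (by positivity)] at H
  have e : ((Y ^ k)⁻¹) ^ (-((m:ℝ) + (1 + 1 / Real.log Y) / k)) = (Y ^ k) ^ m * (Y * Real.exp 1) := by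
    rw [Real.inv_rpow (by positivity), ← Real.rpow_neg (by positivity), neg_neg,
      Real.rpow_add (by positivity), Real.rpow_natCast]
    congr 1
    rw [← Real.rpow_natCast, ← Real.rpow_mul hY0.le]
    have : (k:ℝ) * ((1 + 1 / Real.log Y) / k) = 1 + 1 / Real.log Y := by field_simp
    rw [this, Real.rpow_add hY0, Real.rpow_one, Real.rpow_def_of_pos hY0]
    congr 2
    field_simp
  rw [e] at H
  have hpos : 0 < (Y ^ k) ^ m := by positivity
  refine le_of_mul_le_mul_left (H.trans (le_of_eq ?_)) hpos
  ring

/-! ### Chebyshev bounds for weighted sums -/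

/-- Abel summation inequality. -/
lemma abel_le {b c v : ℕ → ℝ} (hbc : ∀ n, ∑ i ∈ Finset.range n, b i ≤ ∑ i ∈ Finset.range n, c i)
    (hv : Antitone v) (hv0 : ∀ n, 0 ≤ v n) (N : ℕ) :
    ∑ i ∈ Finset.range N, b i * v i ≤ ∑ i ∈ Finset.range N, c i * v i := by
  have key : ∀ N, (∑ i ∈ Finset.range (N + 1), c i - ∑ i ∈ Finset.range (N + 1), b i) * v N ≤
      ∑ i ∈ Finset.range (N + 1), c i * v i - ∑ i ∈ Finset.range (N + 1), b i * v i := by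
    intro N
    induction N with
    | zero => simp; linarith
    | succ N ih =>
      rw [Finset.sum_range_succ c, Finset.sum_range_succ b, Finset.sum_range_succ (fun i => c i * v i),
        Finset.sum_range_succ (fun i => b i * v i)]
      have h1 := hv (Nat.le_succ N)
      have h2 := hbc (N + 1)
      have := mul_le_mul_of_nonneg_left h1 (sub_nonneg.2 h2)
      linarith
  rcases N with _ | N
  · simp
  · have := key N
    have h2 := mul_nonneg (sub_nonneg.2 (hbc (N + 1))) (hv0 N)
    linarith

/-- The comparison weight `v(x) = 1/(√x (1 + √x)²)`, with `v(0) = 0` by the convention `1/0 = 0`. -/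
noncomputable def vker (x : ℝ) : ℝ := 1 / (√x * (1 + √x) ^ 2)

lemma vker_nonneg (x : ℝ) : 0 ≤ vker x := by unfold vker; positivity

lemma vker_zero : vker 0 = 0 := by simp [vker]

lemma vker_anti {x y : ℝ} (hx : 0 < x) (hxy : x ≤ y) : vker y ≤ vker x := by
  unfold vker
  have : 0 < √x := Real.sqrt_pos.2 hx
  have h := Real.sqrt_le_sqrt hxy
  gcongr

/-- `v` is dominated by the increments of the bounded function `2 √x / (1 + √x)`. -/
lemma vker_le_sub {a b : ℝ} (ha : 0 ≤ a) (hab : a < b) :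
    (b - a) * vker b ≤ 2 * (√b / (1 + √b) - √a / (1 + √a)) := by
  obtain ⟨p, hp⟩ : ∃ p, p = √a := ⟨_, rfl⟩
  obtain ⟨q, hq⟩ : ∃ q, q = √b := ⟨_, rfl⟩
  have hp0 : 0 ≤ p := hp ▸ Real.sqrt_nonneg a
  have hpq : p < q := by rw [hp, hq]; exact Real.sqrt_lt_sqrt ha hab
  have ea : a = p ^ 2 := by rw [hp, Real.sq_sqrt ha]
  have eb : b = q ^ 2 := by rw [hq, Real.sq_sqrt (by linarith)]
  unfold vker
  rw [← hp, ← hq, ea, eb]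
  have hq0 : 0 < q := by linarith
  have e : 2 * (q / (1 + q) - p / (1 + p)) = 2 * (q - p) / ((1 + p) * (1 + q)) := by
    field_simp; ring
  rw [e, mul_one_div, div_le_div_iff₀ (by positivity) (by positivity)]
  have h1 : (q ^ 2 - p ^ 2) = (q - p) * (q + p) := by ring
  rw [h1]
  have h2 : (q + p) * ((1 + p) * (1 + q)) ≤ 2 * (q * (1 + q) ^ 2) := by
    have a1 : q + p ≤ 2 * q := by linarith
    have a2 : (1 + p) * (1 + q) ≤ (1 + q) ^ 2 := by nlinarith
    calc (q + p) * ((1 + p) * (1 + q)) ≤ (2 * q) * (1 + q) ^ 2 := by gcongr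
      _ = _ := by ring
  have := mul_le_mul_of_nonneg_left h2 (sub_nonneg.2 hpq.le)
  linarith

lemma vker_sum_le {Y : ℝ} (hY : 0 < Y) (N : ℕ) :
    ∑ i ∈ Finset.range N, vker (((i + 1 : ℕ) : ℝ) / Y) ≤ 2 * Y := by
  have key : ∑ i ∈ Finset.range N, vker (((i + 1 : ℕ) : ℝ) / Y) ≤
      2 * Y * (√((N:ℝ) / Y) / (1 + √((N:ℝ) / Y))) := by
    induction N with
    | zero => simp
    | succ N ih =>
      rw [Finset.sum_range_succ]
      have h := vker_le_sub (a := (N:ℝ) / Y) (b := ((N + 1 : ℕ) : ℝ) / Y) (by positivity)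
        (by gcongr; simp)
      have e : ((N + 1 : ℕ) : ℝ) / Y - N / Y = 1 / Y := by push_cast; ring
      rw [e] at h
      have h' := mul_le_mul_of_nonneg_left h hY.le
      rw [← mul_assoc, mul_one_div_cancel hY.ne', one_mul] at h'
      linarith
  refine key.trans ?_
  have : √((N:ℝ) / Y) / (1 + √((N:ℝ) / Y)) ≤ 1 := by
    have := Real.sqrt_nonneg ((N:ℝ) / Y)
    rw [div_le_one (by positivity)]; linarith
  nlinarith

lemma summable_tsum_le_of_shift {f : ℕ → ℝ} {B : ℝ} (h0 : f 0 = 0) (hf : ∀ n, 0 ≤ f n)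
    (h : ∀ N, ∑ i ∈ Finset.range N, f (i + 1) ≤ B) : Summable f ∧ ∑' n, f n ≤ B := by
  have hs : Summable fun n => f (n + 1) := summable_of_sum_range_le (fun n => hf _) h
  have hs' : Summable f := (summable_nat_add_iff 1).1 hs
  refine ⟨hs', ?_⟩
  rw [hs'.tsum_eq_zero_add, h0, zero_add]
  exact Real.tsum_le_of_sum_range_le (fun n => hf _) h

lemma vker_tsum {Y : ℝ} (hY : 0 < Y) :
    Summable (fun n : ℕ => vker (n / Y)) ∧ ∑' n : ℕ, vker (n / Y) ≤ 2 * Y :=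
  summable_tsum_le_of_shift (by simp [vker_zero]) (fun n => vker_nonneg _) (vker_sum_le hY)

lemma sum_vonMangoldt_eq_psi (n : ℕ) :
    ∑ i ∈ Finset.range n, ArithmeticFunction.vonMangoldt (i + 1) = Chebyshev.psi n := by
  unfold Chebyshev.psi
  rw [Nat.floor_natCast, Finset.range_eq_Ico, Finset.sum_Ico_add' (fun i => ArithmeticFunction.vonMangoldt i) 0 n 1]
  refine Finset.sum_congr ?_ fun _ _ => rfl
  ext i; simp; omega

/-- Abel summation against the decreasing weight `v`, with Chebyshev's bound `ψ(n) ≪ n`. -/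
lemma vonMangoldt_vker_tsum : ∃ C : ℝ, 0 < C ∧ ∀ Y : ℝ, 0 < Y →
    Summable (fun n : ℕ => ArithmeticFunction.vonMangoldt n * vker (n / Y)) ∧
    ∑' n : ℕ, ArithmeticFunction.vonMangoldt n * vker (n / Y) ≤ C * Y := by
  refine ⟨(Real.log 4 + 4) * 2, by
    have := Real.log_nonneg (x := 4) (by norm_num)
    linarith, fun Y hY => ?_⟩
  refine summable_tsum_le_of_shift (by simp)
    (fun n => mul_nonneg ArithmeticFunction.vonMangoldt_nonneg (vker_nonneg _)) fun N => ?_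
  have h := abel_le (b := fun i => ArithmeticFunction.vonMangoldt (i + 1))
    (c := fun _ => Real.log 4 + 4) (v := fun i => vker (((i + 1 : ℕ) : ℝ) / Y)) (fun n => ?_)
    (fun i j hij => ?_) (fun n => vker_nonneg _) N
  · refine h.trans ?_
    rw [← Finset.mul_sum, mul_assoc]
    have := Real.log_nonneg (x := 4) (by norm_num)
    exact mul_le_mul_of_nonneg_left (vker_sum_le hY N) (by linarith)
  · rw [sum_vonMangoldt_eq_psi]
    have := Chebyshev.psi_le_const_mul_self (x := n) (by positivity)
    rw [Finset.sum_const, Finset.card_range, nsmul_eq_mul]; linarith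
  · exact vker_anti (by positivity) (by gcongr)

lemma abs_log_pow_le (r : ℕ) : ∃ C : ℝ, 0 < C ∧
    (∀ x : ℝ, 1 ≤ x → |Real.log x| ^ r ≤ C * x ^ (1/4 : ℝ)) ∧
    (∀ x : ℝ, 0 < x → x ≤ 1 → |Real.log x| ^ r ≤ C * x ^ (-(1/4) : ℝ)) := by
  have hr : (0:ℝ) ≤ r := Nat.cast_nonneg r
  have h1 : ∀ x : ℝ, 1 ≤ x → |Real.log x| ^ r ≤ (4 * ((r:ℝ) + 1)) ^ r * x ^ (1/4 : ℝ) := by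
    intro x hx
    have hx0 : 0 < x := by linarith
    have hb := Real.log_le_rpow_div hx0.le (ε := 1 / (4 * ((r:ℝ) + 1))) (by positivity)
    rw [abs_of_nonneg (Real.log_nonneg hx)]
    have hb' : Real.log x ≤ (4 * ((r:ℝ) + 1)) * x ^ (1 / (4 * ((r:ℝ) + 1))) := by
      refine hb.trans (le_of_eq ?_)
      field_simp
    refine (pow_le_pow_left₀ (Real.log_nonneg hx) hb' r).trans ?_
    rw [mul_pow]
    gcongr
    rw [← Real.rpow_natCast, ← Real.rpow_mul hx0.le]
    refine Real.rpow_le_rpow_of_exponent_le hx ?_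
    rw [one_div_mul_eq_div, div_le_div_iff₀ (by positivity) (by norm_num)]
    linarith
  refine ⟨_, by positivity, h1, fun x hx hx1 => ?_⟩
  have := h1 x⁻¹ ((one_le_inv₀ hx).2 hx1)
  rwa [Real.log_inv, abs_neg, Real.inv_rpow hx.le, ← Real.rpow_neg hx.le] at this

/-- Powers of `|log x|` are harmless against `h`, because `hker_le` holds with every exponent `β > 0`. -/
lemma log_pow_hker_le {k : ℕ} (hk : 1 ≤ k) (m r : ℕ) : ∃ C : ℝ, 0 < C ∧ ∀ x : ℝ, 0 ≤ x →
    |Real.log x| ^ r * hker k m x ≤ C * vker x := by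
  obtain ⟨A, hA, h1, h2⟩ := abs_log_pow_le r
  obtain ⟨B1, hB1, b1⟩ := hker_le hk m (β := 1/4) (by norm_num)
  obtain ⟨B2, hB2, b2⟩ := hker_le hk m (β := 7/4) (by norm_num)
  refine ⟨4 * (A * (B1 + B2)), by positivity, fun x hx => ?_⟩
  rcases hx.eq_or_lt with rfl | hx
  · rw [hker_zero hk, vker_zero]; simp
  have hh := hker_nonneg k m hx.le
  have hsq : 0 < √x := Real.sqrt_pos.2 hx
  rcases le_total x 1 with hx1 | hx1
  · have hs1 : √x ≤ 1 := Real.sqrt_le_one.2 hx1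
    calc |Real.log x| ^ r * hker k m x ≤ (A * x ^ (-(1/4) : ℝ)) * (B1 * x ^ (-(1/4) : ℝ)) := by
          gcongr
          · exact h2 x hx hx1
          · exact b1 x hx
      _ = A * B1 * (√x)⁻¹ := by
          rw [Real.sqrt_eq_rpow, ← Real.rpow_neg hx.le]
          have : x ^ (-(1/2) : ℝ) = x ^ (-(1/4) : ℝ) * x ^ (-(1/4) : ℝ) := by
            rw [← Real.rpow_add hx]; norm_num
          rw [this]; ring
      _ ≤ 4 * (A * B1) * vker x := by
          unfold vker
          rw [← div_eq_mul_inv, mul_one_div, div_le_div_iff₀ hsq (by positivity)]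
          have : (1 + √x) ^ 2 ≤ 4 := by nlinarith
          have := mul_le_mul_of_nonneg_left this (by positivity : 0 ≤ A * B1 * √x)
          linarith
      _ ≤ _ := by
          have := vker_nonneg x
          gcongr; linarith
  · have hs1 : 1 ≤ √x := Real.one_le_sqrt.2 hx1
    calc |Real.log x| ^ r * hker k m x ≤ (A * x ^ (1/4 : ℝ)) * (B2 * x ^ (-(7/4) : ℝ)) := by
          gcongr
          · exact h1 x hx1
          · exact b2 x hx
      _ = A * B2 * (√x ^ 3)⁻¹ := by
          have e : x ^ (1/4 : ℝ) * x ^ (-(7/4) : ℝ) = (√x ^ 3)⁻¹ := by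
            rw [← Real.rpow_add hx, Real.sqrt_eq_rpow, ← Real.rpow_natCast, ← Real.rpow_mul hx.le,
              ← Real.rpow_neg hx.le]
            norm_num
          rw [← e]; ring
      _ ≤ 4 * (A * B2) * vker x := by
          unfold vker
          rw [← div_eq_mul_inv, mul_one_div, div_le_div_iff₀ (by positivity) (by positivity)]
          have : (1 + √x) ^ 2 ≤ 4 * √x ^ 2 := by nlinarith
          have := mul_le_mul_of_nonneg_left this (by positivity : 0 ≤ A * B2 * √x)
          nlinarith
      _ ≤ _ := by
          have := vker_nonneg x
          gcongr; linarith

/-! ### Removing a logarithm, and prime powers -/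

/-- Comparison of a weighted sum against `Λ + 1` times the weight `v`. -/
lemma tsum_abs_le_of_vker {B : ℝ} (hB : 0 ≤ B) : ∃ C : ℝ, 0 < C ∧ ∀ Y : ℝ, 0 < Y → ∀ f : ℕ → ℝ,
    (∀ n : ℕ, |f n| ≤ B * ((ArithmeticFunction.vonMangoldt n + 1) * vker (n / Y))) →
    Summable f ∧ |∑' n, f n| ≤ C * Y := by
  obtain ⟨C, hC, h⟩ := vonMangoldt_vker_tsum
  refine ⟨B * (C + 2) + 1, by positivity, fun Y hY f hf => ?_⟩
  obtain ⟨s1, t1⟩ := h Y hY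
  obtain ⟨s2, t2⟩ := vker_tsum hY
  have hs : HasSum (fun n : ℕ => B * ((ArithmeticFunction.vonMangoldt n + 1) * vker (n / Y)))
      (B * (∑' n : ℕ, ArithmeticFunction.vonMangoldt n * vker (n / Y) + ∑' n : ℕ, vker (n / Y))) := by
    refine HasSum.mul_left _ ?_
    have := s1.hasSum.add s2.hasSum
    simpa only [add_mul, one_mul] using this
  refine ⟨Summable.of_norm_bounded hs.summable hf, ?_⟩
  rw [← Real.norm_eq_abs]
  refine (tsum_of_norm_bounded (f := f) hs hf).trans ?_
  have : B * (∑' n : ℕ, ArithmeticFunction.vonMangoldt n * vker (n / Y) + ∑' n : ℕ, vker (n / Y)) ≤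
    B * (C * Y + 2 * Y) := by gcongr
  nlinarith

lemma log_mul_hker {k : ℕ} (hk : 1 ≤ k) (m : ℕ) {Y : ℝ} (hY : 0 < Y) (n : ℕ) :
    Real.log n * hker k m (n / Y) =
      Real.log Y * hker k m (n / Y) + Real.log (n / Y) * hker k m (n / Y) := by
  rcases eq_or_ne n 0 with hn | hn
  · subst hn; simp [hker_zero hk]
  · have : (n:ℝ) ≠ 0 := by exact_mod_cast hn
    rw [Real.log_div this hY.ne']; ring

/-- Dividing the smoothed prime number theorem by `log Y`: the factor `log n` is `log Y` up to
`log (n/Y)`, whose contribution is `O(Y)`. -/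
lemma vonMangoldt_sub_one_sum {k : ℕ} (hk : 1 ≤ k) (m : ℕ) : ∃ C : ℝ, 0 < C ∧ ∀ Y : ℝ,
    Real.exp 1 ≤ Y →
    |∑' n : ℕ, (ArithmeticFunction.vonMangoldt n - 1) * hker k m (n / Y)| ≤ C * (Y / Real.log Y) := by
  obtain ⟨C1, hC1, h1⟩ := smoothed_pnt hk m
  obtain ⟨B0, hB0, b0⟩ := log_pow_hker_le hk m 0
  obtain ⟨B1, hB1, b1⟩ := log_pow_hker_le hk m 1
  obtain ⟨D0, hD0, d0⟩ := tsum_abs_le_of_vker hB0.le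
  obtain ⟨D1, hD1, d1⟩ := tsum_abs_le_of_vker hB1.le
  refine ⟨C1 + D1, by positivity, fun Y hY => ?_⟩
  have hY0 : 0 < Y := (Real.exp_pos 1).trans_le hY
  have hL : 1 ≤ Real.log Y := (Real.le_log_iff_exp_le hY0).2 hY
  have hL0 : 0 < Real.log Y := by linarith
  have hΛ : ∀ n : ℕ, |ArithmeticFunction.vonMangoldt n - 1| ≤ ArithmeticFunction.vonMangoldt n + 1 := by
    intro n
    have : 0 ≤ ArithmeticFunction.vonMangoldt n := ArithmeticFunction.vonMangoldt_nonneg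
    rw [abs_le]; constructor <;> linarith
  obtain ⟨s0, -⟩ := d0 Y hY0 (fun n => (ArithmeticFunction.vonMangoldt n - 1) * hker k m (n / Y))
    (fun n => by
      have h := b0 ((n:ℝ) / Y) (by positivity)
      have hh := hker_nonneg k m (x := (n:ℝ) / Y) (by positivity)
      rw [pow_zero, one_mul] at h
      rw [abs_mul, abs_of_nonneg hh]
      calc _ ≤ (ArithmeticFunction.vonMangoldt n + 1) * (B0 * vker (n / Y)) := by
            gcongr; exact hΛ n
        _ = _ := by ring)
  obtain ⟨s1, t1⟩ := d1 Y hY0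
    (fun n => (ArithmeticFunction.vonMangoldt n - 1) * (Real.log (n / Y) * hker k m (n / Y)))
    (fun n => by
      have h := b1 ((n:ℝ) / Y) (by positivity)
      have hh := hker_nonneg k m (x := (n:ℝ) / Y) (by positivity)
      rw [pow_one] at h
      rw [abs_mul, abs_mul, abs_of_nonneg hh]
      calc _ ≤ (ArithmeticFunction.vonMangoldt n + 1) * (B1 * vker (n / Y)) := by
            gcongr; exact hΛ n
        _ = _ := by ring)
  have e : ∑' n : ℕ, (ArithmeticFunction.vonMangoldt n - 1) * Real.log n * hker k m (n / Y) =
      Real.log Y * ∑' n : ℕ, (ArithmeticFunction.vonMangoldt n - 1) * hker k m (n / Y) +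
      ∑' n : ℕ, (ArithmeticFunction.vonMangoldt n - 1) * (Real.log (n / Y) * hker k m (n / Y)) := by
    rw [← tsum_mul_left, ← (s0.mul_left _).tsum_add s1]
    refine tsum_congr fun n => ?_
    rw [mul_assoc, log_mul_hker hk m hY0]; ring
  have H := h1 Y hY
  rw [e] at H
  rw [← mul_div_assoc, le_div_iff₀ hL0]
  obtain ⟨S, hS⟩ : ∃ S, S = ∑' n : ℕ, (ArithmeticFunction.vonMangoldt n - 1) * hker k m (n / Y) :=
    ⟨_, rfl⟩
  rw [← hS] at H ⊢
  have : |S| * Real.log Y = |Real.log Y * S| := by rw [abs_mul, abs_of_pos hL0]; ring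
  rw [this]
  rw [abs_le] at H t1 ⊢
  constructor <;> linarith [H.1, H.2, t1.1, t1.2]

/-- `log p` at primes, zero elsewhere. -/
noncomputable def lpr (n : ℕ) : ℝ := if n.Prime then Real.log n else 0

/-- Indicator of the primes. -/
noncomputable def ipr (n : ℕ) : ℝ := if n.Prime then 1 else 0

lemma lpr_nonneg (n : ℕ) : 0 ≤ lpr n := by
  unfold lpr; split_ifs
  · exact Real.log_natCast_nonneg n
  · rfl

lemma lpr_le (n : ℕ) : lpr n ≤ ArithmeticFunction.vonMangoldt n := by
  unfold lpr; split_ifs with h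
  · rw [ArithmeticFunction.vonMangoldt_apply_prime h]
  · exact ArithmeticFunction.vonMangoldt_nonneg

lemma ipr_nonneg (n : ℕ) : 0 ≤ ipr n := by unfold ipr; split_ifs <;> norm_num
lemma ipr_le (n : ℕ) : ipr n ≤ 1 := by unfold ipr; split_ifs <;> norm_num

lemma sum_lpr_eq_theta (n : ℕ) : ∑ i ∈ Finset.range n, lpr (i + 1) = Chebyshev.theta n := by
  unfold Chebyshev.theta lpr
  rw [Nat.floor_natCast, Finset.sum_filter, Finset.range_eq_Ico,
    Finset.sum_Ico_add' (fun i => if i.Prime then Real.log i else 0) 0 n 1]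
  refine Finset.sum_congr ?_ fun _ _ => rfl
  ext i; simp; omega

lemma sqrt_le_sum (n : ℕ) :
    √(n:ℝ) ≤ ∑ i ∈ Finset.range n, ((i:ℝ) + 1) ^ (-(1/2) : ℝ) := by
  rcases Nat.eq_zero_or_pos n with h | h
  · subst h; simp
  have hn : (0:ℝ) < n := by exact_mod_cast h
  calc √(n:ℝ) = ∑ i ∈ Finset.range n, (n:ℝ) ^ (-(1/2) : ℝ) := by
        rw [Finset.sum_const, Finset.card_range, nsmul_eq_mul, Real.sqrt_eq_rpow]
        have : (n:ℝ) ^ (1/2 : ℝ) = (n:ℝ) ^ (1:ℝ) * (n:ℝ) ^ (-(1/2) : ℝ) := by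
          rw [← Real.rpow_add hn]; norm_num
        rw [this, Real.rpow_one]
    _ ≤ _ := by
        refine Finset.sum_le_sum fun i hi => ?_
        refine Real.rpow_le_rpow_of_nonpos (by positivity) ?_ (by norm_num)
        have := Finset.mem_range.1 hi
        exact_mod_cast this

/-- Proper prime powers contribute only `O(Y^{3/4})`. -/
lemma prime_power_sum {k : ℕ} (hk : 1 ≤ k) (m : ℕ) : ∃ C : ℝ, 0 < C ∧ ∀ Y : ℝ, 0 < Y →
    Summable (fun n : ℕ => (ArithmeticFunction.vonMangoldt n - lpr n) * hker k m (n / Y)) ∧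
    |∑' n : ℕ, (ArithmeticFunction.vonMangoldt n - lpr n) * hker k m (n / Y)| ≤
      C * Y ^ (3/4 : ℝ) := by
  obtain ⟨A, hA⟩ := Chebyshev.psi_sub_theta_le_mul_sqrt
  obtain ⟨B, hB, b⟩ := hker_le hk m (β := 3/4) (by norm_num)
  have hsum := summable_succ_rpow (β := 1/4) (by norm_num)
  have hZ : 0 ≤ ∑' j : ℕ, ((j : ℝ) + 1) ^ (-(1 + 1/4) : ℝ) := tsum_nonneg fun j => by positivity
  refine ⟨B * (|A| * ∑' j : ℕ, ((j : ℝ) + 1) ^ (-(1 + 1/4) : ℝ)) + 1, by positivity,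
    fun Y hY => ?_⟩
  have hnn : ∀ n : ℕ, 0 ≤ (ArithmeticFunction.vonMangoldt n - lpr n) * hker k m (n / Y) :=
    fun n => mul_nonneg (sub_nonneg.2 (lpr_le n)) (hker_nonneg k m (by positivity))
  have key : ∀ N, ∑ i ∈ Finset.range N, (ArithmeticFunction.vonMangoldt (i + 1) - lpr (i + 1)) *
      hker k m (((i + 1 : ℕ) : ℝ) / Y) ≤
      (B * (|A| * ∑' j : ℕ, ((j : ℝ) + 1) ^ (-(1 + 1/4) : ℝ)) + 1) * Y ^ (3/4 : ℝ) := by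
    intro N
    have hab := abel_le (b := fun i => ArithmeticFunction.vonMangoldt (i + 1) - lpr (i + 1))
      (c := fun i => |A| * ((i:ℝ) + 1) ^ (-(1/2) : ℝ))
      (v := fun i => ((i:ℝ) + 1) ^ (-(3/4) : ℝ)) (fun n => by
        rw [Finset.sum_sub_distrib, sum_vonMangoldt_eq_psi, sum_lpr_eq_theta, ← Finset.mul_sum]
        refine (hA n).trans ?_
        calc A * √(n:ℝ) ≤ |A| * √(n:ℝ) := by gcongr; exact le_abs_self A
          _ ≤ _ := by gcongr; exact sqrt_le_sum n)
      (fun i j hij => Real.rpow_le_rpow_of_nonpos (by positivity) (by gcongr) (by norm_num))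
      (fun n => by positivity) N
    calc _ ≤ ∑ i ∈ Finset.range N, (ArithmeticFunction.vonMangoldt (i + 1) - lpr (i + 1)) *
          (B * (((i:ℝ) + 1) ^ (-(3/4) : ℝ) * Y ^ (3/4 : ℝ))) := by
          refine Finset.sum_le_sum fun i _ => ?_
          refine mul_le_mul_of_nonneg_left ?_ (sub_nonneg.2 (lpr_le _))
          refine (b (((i + 1 : ℕ) : ℝ) / Y) (by positivity)).trans (le_of_eq ?_)
          rw [Real.div_rpow (by positivity) hY.le, Real.rpow_neg hY.le, div_inv_eq_mul]
          push_cast; rfl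
      _ = B * Y ^ (3/4 : ℝ) * ∑ i ∈ Finset.range N,
          (ArithmeticFunction.vonMangoldt (i + 1) - lpr (i + 1)) * ((i:ℝ) + 1) ^ (-(3/4) : ℝ) := by
          rw [Finset.mul_sum]; exact Finset.sum_congr rfl fun i _ => by ring
      _ ≤ B * Y ^ (3/4 : ℝ) * ∑ i ∈ Finset.range N,
          |A| * ((i:ℝ) + 1) ^ (-(1/2) : ℝ) * ((i:ℝ) + 1) ^ (-(3/4) : ℝ) := by gcongr
      _ = B * Y ^ (3/4 : ℝ) * (|A| * ∑ i ∈ Finset.range N, ((i:ℝ) + 1) ^ (-(1 + 1/4) : ℝ)) := by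
          congr 1
          rw [Finset.mul_sum]
          refine Finset.sum_congr rfl fun i _ => ?_
          rw [mul_assoc, ← Real.rpow_add (by positivity)]
          norm_num
      _ ≤ B * Y ^ (3/4 : ℝ) * (|A| * ∑' j : ℕ, ((j : ℝ) + 1) ^ (-(1 + 1/4) : ℝ)) := by
          gcongr
          exact hsum.sum_le_tsum _ fun j _ => by positivity
      _ ≤ _ := by
          have : 0 < Y ^ (3/4 : ℝ) := by positivity
          linarith
  obtain ⟨h1, h2⟩ := summable_tsum_le_of_shift (by simp [hker_zero hk]) hnn key
  refine ⟨h1, ?_⟩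
  rwa [abs_of_nonneg (tsum_nonneg hnn)]

/-! ### Riemann sums of a single exponential weight -/

/-- The single-`j` weight `(b x^k)^m e^{-b x^k}`. -/
noncomputable def fker (k m : ℕ) (b x : ℝ) : ℝ := (b * x ^ k) ^ m * Real.exp (-(b * x ^ k))

lemma fker_nonneg (k m : ℕ) {b x : ℝ} (hb : 0 ≤ b) (hx : 0 ≤ x) : 0 ≤ fker k m b x := by
  unfold fker; positivity

lemma fker_continuous (k m : ℕ) (b : ℝ) : Continuous (fker k m b) := by
  unfold fker; fun_prop

lemma scale_rpow {k : ℕ} (hk : 1 ≤ k) {b x : ℝ} (hb : 0 < b) (hx : 0 < x) :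
    (b * x ^ k) ^ (-(1 / (2 * (k:ℝ)))) = b ^ (-(1 / (2 * (k:ℝ)))) * x ^ (-(1/2) : ℝ) := by
  have hk0 : (0:ℝ) < k := by exact_mod_cast hk
  rw [Real.mul_rpow hb.le (by positivity), ← Real.rpow_natCast x, ← Real.rpow_mul hx.le]
  congr 2
  field_simp

lemma fker_le {k : ℕ} (hk : 1 ≤ k) (m : ℕ) : ∃ C : ℝ, 0 < C ∧ ∀ b x : ℝ, 0 < b → 0 < x →
    fker k m b x ≤ C * b ^ (-(1 / (2 * (k:ℝ)))) * x ^ (-(1/2) : ℝ) := by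
  have hk0 : (0:ℝ) < k := by exact_mod_cast hk
  obtain ⟨C, hC, h⟩ := pow_mul_exp_neg_le m (β := 1 / (2 * (k:ℝ))) (by positivity)
  refine ⟨C, hC, fun b x hb hx => ?_⟩
  have := h (b * x ^ k) (by positivity)
  rw [scale_rpow hk hb hx] at this
  unfold fker
  linarith

lemma fker_deriv {k : ℕ} (hk : 1 ≤ k) (m : ℕ) : ∃ C : ℝ, 0 < C ∧ ∀ b x : ℝ, 0 < b → 0 < x →
    ∃ d : ℝ, HasDerivAt (fker k m b) d x ∧
      |d| ≤ C * b ^ (-(1 / (2 * (k:ℝ)))) * x ^ (-(3/2) : ℝ) := by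
  have hk0 : (0:ℝ) < k := by exact_mod_cast hk
  obtain ⟨C, hC, h⟩ := pow_mul_exp_neg_le m (β := 1 / (2 * (k:ℝ))) (by positivity)
  obtain ⟨C', hC', h'⟩ := pow_mul_exp_neg_le (m + 1) (β := 1 / (2 * (k:ℝ))) (by positivity)
  refine ⟨k * (m * C + C'), by positivity, fun b x hb hx => ?_⟩
  have hu : HasDerivAt (fun x : ℝ => b * x ^ k) (b * (k * x ^ (k - 1))) x :=
    (hasDerivAt_pow k x).const_mul b
  have hd := (hu.pow m).mul (hu.neg.exp)
  refine ⟨_, hd, ?_⟩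
  obtain ⟨u, hu'⟩ : ∃ u, u = b * x ^ k := ⟨_, rfl⟩
  have hu0 : 0 < u := by rw [hu']; positivity
  have e1 : b * (k * x ^ (k - 1)) = k * u / x := by
    rw [hu', eq_div_iff hx.ne']
    have : x ^ k = x ^ (k - 1) * x := by rw [← pow_succ]; congr 1; omega
    rw [this]; ring
  have e2 : (m:ℝ) * u ^ (m - 1) * u = m * u ^ m := by
    rcases m with _ | m
    · simp
    · simp [pow_succ]; ring
  simp only [Pi.pow_apply, Pi.neg_apply]
  rw [e1, ← hu']
  have e3 : (m:ℝ) * u ^ (m - 1) * (k * u / x) * Real.exp (-u) +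
      u ^ m * (Real.exp (-u) * -(k * u / x)) =
      k / x * (m * (u ^ m * Real.exp (-u)) - u ^ (m + 1) * Real.exp (-u)) := by
    have : (m:ℝ) * u ^ (m - 1) * (k * u / x) = k / x * (m * u ^ (m - 1) * u) := by ring
    rw [this, e2]; ring
  rw [e3]
  have a1 := h u hu0
  have a2 := h' u hu0
  have hpos1 : 0 ≤ u ^ m * Real.exp (-u) := by positivity
  have hpos2 : 0 ≤ u ^ (m + 1) * Real.exp (-u) := by positivity
  have e4 := scale_rpow hk hb hx
  rw [← hu'] at e4
  have e5 : x ^ (-(3/2) : ℝ) = x ^ (-(1/2) : ℝ) / x := by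
    rw [eq_div_iff hx.ne', ← Real.rpow_add_one hx.ne']; norm_num
  rw [abs_mul, abs_of_pos (by positivity), e5]
  have hm : (0:ℝ) ≤ m := Nat.cast_nonneg m
  have hm1 := mul_le_mul_of_nonneg_left a1 hm
  have habs : |(m:ℝ) * (u ^ m * Real.exp (-u)) - u ^ (m + 1) * Real.exp (-u)| ≤
      (m * C + C') * (b ^ (-(1 / (2 * (k:ℝ)))) * x ^ (-(1/2) : ℝ)) := by
    rw [← e4]
    have : 0 ≤ (m:ℝ) * (u ^ m * Real.exp (-u)) := by positivity
    rw [abs_le]; constructor <;> linarith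
  calc _ ≤ k / x * ((m * C + C') * (b ^ (-(1 / (2 * (k:ℝ)))) * x ^ (-(1/2) : ℝ))) := by gcongr
    _ = _ := by ring

lemma fker_integral {k : ℕ} (hk : 1 ≤ k) (m : ℕ) {b : ℝ} (hb : 0 < b) :
    MeasureTheory.IntegrableOn (fker k m b) (Set.Ioi 0) ∧
    ∫ x in Set.Ioi (0:ℝ), fker k m b x = b ^ (-(1 / (k:ℝ))) * (Real.Gamma (m + 1 / k) / k) := by
  have hk0 : (0:ℝ) < k := by exact_mod_cast hk
  have hkm : (-1:ℝ) < ((k * m : ℕ) : ℝ) := by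
    have : (0:ℝ) ≤ ((k * m : ℕ) : ℝ) := Nat.cast_nonneg _
    linarith
  have e : fker k m b = fun x : ℝ => b ^ m * (x ^ ((k * m : ℕ) : ℝ) * Real.exp (-b * x ^ (k:ℝ))) := by
    funext x
    unfold fker
    rw [Real.rpow_natCast, Real.rpow_natCast, mul_pow, pow_mul]
    ring_nf
  rw [e]
  refine ⟨(integrableOn_rpow_mul_exp_neg_mul_rpow hkm hk0 hb).const_mul _, ?_⟩
  rw [MeasureTheory.integral_const_mul, integral_rpow_mul_exp_neg_mul_rpow hk0 hkm hb]
  have e1 : (((k * m : ℕ) : ℝ) + 1) / k = m + 1 / k := by push_cast; field_simp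
  have e2 : -(((k * m : ℕ) : ℝ) + 1) / k = -(m:ℝ) + -(1 / k) := by push_cast; field_simp; ring
  rw [e1, e2, Real.rpow_add hb, Real.rpow_neg hb.le, Real.rpow_natCast]
  field_simp

/-- Comparison of the sum with the integral: since `|f'(x)| ≪ b^{-1/(2k)} x^{-3/2}`, the errors on
the intervals `[n, n + 1]`, `n ≥ 1`, are summable. -/
lemma fker_riemann {k : ℕ} (hk : 1 ≤ k) (m : ℕ) : ∃ C : ℝ, 0 < C ∧ ∀ b : ℝ, 0 < b →
    Summable (fun n : ℕ => fker k m b ((n:ℝ) + 1)) →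
    |∑' n : ℕ, fker k m b ((n:ℝ) + 1) - b ^ (-(1 / (k:ℝ))) * (Real.Gamma (m + 1 / k) / k)| ≤
      C * b ^ (-(1 / (2 * (k:ℝ)))) := by
  obtain ⟨C1, hC1, h1⟩ := fker_le hk m
  obtain ⟨C2, hC2, h2⟩ := fker_deriv hk m
  have hS := summable_succ_rpow (β := 1/2) (by norm_num)
  have hS0 : 0 ≤ ∑' j : ℕ, ((j : ℝ) + 1) ^ (-(1 + 1/2) : ℝ) := tsum_nonneg fun j => by positivity
  refine ⟨C1 * 2 + C2 * ∑' j : ℕ, ((j : ℝ) + 1) ^ (-(1 + 1/2) : ℝ), by positivity,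
    fun b hb hsum => ?_⟩
  obtain ⟨B, hB⟩ : ∃ B, B = b ^ (-(1 / (2 * (k:ℝ)))) := ⟨_, rfl⟩
  have hB0 : 0 < B := by rw [hB]; positivity
  obtain ⟨hintg, hval⟩ := fker_integral hk m hb
  have hc := fker_continuous k m b
  have hii : ∀ p q : ℝ, IntervalIntegrable (fker k m b) MeasureTheory.volume p q :=
    fun p q => hc.intervalIntegrable p q
  rw [← hB]
  rw [← hval]
  -- the contribution of the first unit interval
  have hfirst : |∫ x in (0:ℝ)..1, fker k m b x| ≤ C1 * B * 2 := by
    have hnn : 0 ≤ ∫ x in (0:ℝ)..1, fker k m b x :=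
      intervalIntegral.integral_nonneg zero_le_one fun x hx => fker_nonneg k m hb.le hx.1
    rw [abs_of_nonneg hnn]
    have hm := intervalIntegral.integral_mono_on_of_le_Ioo (a := (0:ℝ)) (b := 1)
      (μ := MeasureTheory.volume) (f := fker k m b) (g := fun x => C1 * B * x ^ (-(1/2) : ℝ))
      zero_le_one (hii 0 1)
      ((intervalIntegral.intervalIntegrable_rpow' (by norm_num)).const_mul _)
      (fun x hx => by rw [hB]; exact h1 b x hb hx.1)
    refine hm.trans (le_of_eq ?_)
    rw [intervalIntegral.integral_const_mul, integral_rpow (Or.inl (by norm_num))]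
    norm_num
  -- the other unit intervals
  have hstep : ∀ i : ℕ, |fker k m b ((i:ℝ) + 1) - ∫ x in ((i:ℝ) + 1)..((i:ℝ) + 1 + 1), fker k m b x| ≤
      C2 * B * ((i:ℝ) + 1) ^ (-(1 + 1/2) : ℝ) := by
    intro i
    have hi : (0:ℝ) < (i:ℝ) + 1 := by positivity
    have e : fker k m b ((i:ℝ) + 1) - ∫ x in ((i:ℝ) + 1)..((i:ℝ) + 1 + 1), fker k m b x =
        ∫ x in ((i:ℝ) + 1)..((i:ℝ) + 1 + 1), (fker k m b ((i:ℝ) + 1) - fker k m b x) := by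
      rw [intervalIntegral.integral_sub (by simp) (hii _ _)]
      simp
    rw [e, ← Real.norm_eq_abs]
    have hb' := intervalIntegral.norm_integral_le_of_norm_le_const (a := (i:ℝ) + 1)
      (b := (i:ℝ) + 1 + 1) (f := fun x => fker k m b ((i:ℝ) + 1) - fker k m b x)
      (C := C2 * B * ((i:ℝ) + 1) ^ (-(1 + 1/2) : ℝ)) (fun x hx => ?_)
    · refine hb'.trans (le_of_eq ?_)
      rw [add_sub_cancel_left, abs_one, mul_one]
    · rw [Set.uIoc_of_le (by linarith)] at hx
      have hder : ∀ y ∈ Set.Icc ((i:ℝ) + 1) ((i:ℝ) + 1 + 1), ∃ d : ℝ,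
          HasDerivAt (fker k m b) d y ∧ |d| ≤ C2 * B * ((i:ℝ) + 1) ^ (-(1 + 1/2) : ℝ) := by
        intro y hy
        obtain ⟨d, hd, hd'⟩ := h2 b y hb (by linarith [hy.1])
        refine ⟨d, hd, hd'.trans ?_⟩
        rw [← hB]
        have : y ^ (-(3/2) : ℝ) ≤ ((i:ℝ) + 1) ^ (-(3/2) : ℝ) :=
          Real.rpow_le_rpow_of_nonpos hi hy.1 (by norm_num)
        have e : (-(1 + 1/2) : ℝ) = -(3/2) := by norm_num
        rw [e]
        gcongr
      have hmv := (convex_Icc ((i:ℝ) + 1) ((i:ℝ) + 1 + 1)).norm_image_sub_le_of_norm_deriv_le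
        (f := fker k m b) (C := C2 * B * ((i:ℝ) + 1) ^ (-(1 + 1/2) : ℝ))
        (fun y hy => by obtain ⟨d, hd, -⟩ := hder y hy; exact hd.differentiableAt)
        (fun y hy => by
          obtain ⟨d, hd, hd'⟩ := hder y hy
          rw [hd.deriv]; exact hd')
        (x := x) (y := (i:ℝ) + 1) ⟨hx.1.le, hx.2⟩ ⟨le_refl _, by linarith⟩
      refine hmv.trans ?_
      have : ‖(i:ℝ) + 1 - x‖ ≤ 1 := by
        rw [Real.norm_eq_abs, abs_le]; constructor <;> linarith [hx.1, hx.2]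
      exact mul_le_of_le_one_right (by positivity) this
  have hfin : ∀ N : ℕ, |∑ i ∈ Finset.range N, fker k m b ((i:ℝ) + 1) -
      ∫ x in (0:ℝ)..((N:ℝ) + 1), fker k m b x| ≤
      (C1 * 2 + C2 * ∑' j : ℕ, ((j : ℝ) + 1) ^ (-(1 + 1/2) : ℝ)) * B := by
    intro N
    have hadj := intervalIntegral.sum_integral_adjacent_intervals (f := fker k m b)
      (μ := MeasureTheory.volume) (a := fun i : ℕ => (i:ℝ) + 1) (n := N) (fun i _ => hii _ _)
    simp only [Nat.cast_zero, zero_add, Nat.cast_add, Nat.cast_one] at hadj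
    have hsplit := intervalIntegral.integral_add_adjacent_intervals (hii 0 1) (hii 1 ((N:ℝ) + 1))
    rw [← hsplit, ← hadj]
    have hsum' : |∑ i ∈ Finset.range N, fker k m b ((i:ℝ) + 1) -
        ∑ i ∈ Finset.range N, ∫ x in ((i:ℝ) + 1)..((i:ℝ) + 1 + 1), fker k m b x| ≤
        C2 * B * ∑' j : ℕ, ((j : ℝ) + 1) ^ (-(1 + 1/2) : ℝ) := by
      rw [← Finset.sum_sub_distrib]
      refine (Finset.abs_sum_le_sum_abs _ _).trans ?_
      refine (Finset.sum_le_sum fun i _ => hstep i).trans ?_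
      rw [← Finset.mul_sum]
      gcongr
      exact hS.sum_le_tsum _ fun j _ => by positivity
    rw [abs_le] at *
    constructor <;> linarith [hfirst.1, hfirst.2, hsum'.1, hsum'.2]
  have ht1 := hsum.hasSum.tendsto_sum_nat
  have ht2 := MeasureTheory.intervalIntegral_tendsto_integral_Ioi (f := fker k m b) 0 hintg
    (l := atTop) (b := fun N : ℕ => (N:ℝ) + 1)
    (tendsto_atTop_add_const_right _ _ tendsto_natCast_atTop_atTop)
  exact le_of_tendsto (ht1.sub ht2).abs (Eventually.of_forall hfin)

/-! ### The kernel summed over the integers and over the primes -/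

/-- `∑ h(n/Y)` is a Riemann sum for `Y ∫ h`, and `∫ h = ζ(1 + 1/k) Γ(m + 1/k)/k`. -/
lemma hker_sum {k : ℕ} (hk : 1 ≤ k) (m : ℕ) : ∃ C : ℝ, 0 < C ∧ ∀ Y : ℝ, 0 < Y →
    |∑' n : ℕ, hker k m (n / Y) - (∑' j : ℕ, ((j:ℝ) + 1) ^ (-(1 + 1 / (k:ℝ)))) *
      (Real.Gamma (m + 1 / k) / k) * Y| ≤ C * √Y := by
  have hk0 : (0:ℝ) < k := by exact_mod_cast hk
  obtain ⟨C, hC, h⟩ := fker_riemann hk m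
  obtain ⟨B, hB, hb⟩ := pow_mul_exp_neg_le m (β := 2 / (k:ℝ)) (by positivity)
  have hS1 := summable_succ_rpow (β := 1 / (2 * (k:ℝ))) (by positivity)
  have hS2 := summable_succ_rpow (β := 1 / (k:ℝ)) (by positivity)
  have hS3 := summable_succ_rpow (β := 2 / (k:ℝ)) (by positivity)
  have hS4 := summable_succ_rpow (β := 1) (by positivity)
  have hT0 : 0 ≤ ∑' j : ℕ, ((j:ℝ) + 1) ^ (-(1 + 1 / (2 * (k:ℝ)))) :=
    tsum_nonneg fun j => by positivity
  refine ⟨C * ∑' j : ℕ, ((j:ℝ) + 1) ^ (-(1 + 1 / (2 * (k:ℝ)))) + 1, by positivity, fun Y hY => ?_⟩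
  have hYk : 0 < Y ^ k := by positivity
  -- `F (n, j)` is the contribution of the pair `(n + 1, j + 1)`
  obtain ⟨F, hF⟩ : ∃ F : ℕ × ℕ → ℝ, F = fun i =>
      fker k m (((i.2:ℝ) + 1) / Y ^ k) ((i.1:ℝ) + 1) / ((i.2:ℝ) + 1) := ⟨_, rfl⟩
  have hterm : ∀ n j : ℕ, F (n, j) = (((j : ℝ) + 1) * ((((n + 1 : ℕ) : ℝ) / Y) ^ k)) ^ m *
      Real.exp (-(((j : ℝ) + 1) * ((((n + 1 : ℕ) : ℝ) / Y) ^ k))) / ((j : ℝ) + 1) := by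
    intro n j
    rw [hF]
    unfold fker
    have : ((j:ℝ) + 1) / Y ^ k * ((n:ℝ) + 1) ^ k = ((j : ℝ) + 1) * ((((n + 1 : ℕ) : ℝ) / Y) ^ k) := by
      rw [div_pow]; push_cast; ring
    simp only [this]
  have hFsum : Summable F := by
    have hmaj := (hS4.mul_of_nonneg hS3 (fun _ => by positivity) (fun _ => by positivity)).mul_left
      (B * Y ^ (2:ℝ))
    refine hmaj.of_nonneg_of_le (fun i => ?_) (fun i => ?_)
    · rw [hterm]; positivity
    · obtain ⟨n, j⟩ := i
      rw [hterm]
      refine (gterm_le hb (u := (((n + 1 : ℕ) : ℝ) / Y) ^ k) (by positivity) j).trans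
        (le_of_eq ?_)
      have e : ((((n + 1 : ℕ) : ℝ) / Y) ^ k) ^ (-(2 / (k:ℝ))) =
          Y ^ (2:ℝ) * ((n:ℝ) + 1) ^ (-(1 + 1) : ℝ) := by
        rw [← Real.rpow_natCast, ← Real.rpow_mul (by positivity)]
        have : (k:ℝ) * -(2 / k) = -2 := by field_simp
        rw [this, Real.div_rpow (by positivity) hY.le, Real.rpow_neg hY.le, div_inv_eq_mul]
        push_cast
        norm_num
        ring
      rw [e]; ring
  have hFsum' : Summable (Function.uncurry fun n j : ℕ => F (n, j)) := hFsum
  have hswap : ∑' n : ℕ, hker k m (n / Y) = ∑' j : ℕ, ∑' n : ℕ, F (n, j) := by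
    rw [hFsum'.tsum_comm]
    have e : ∀ n : ℕ, ∑' j : ℕ, F (n, j) = hker k m (((n + 1 : ℕ) : ℝ) / Y) := by
      intro n; unfold hker gker; exact tsum_congr fun j => hterm n j
    simp_rw [e]
    have hs : Summable fun n : ℕ => hker k m (((n + 1 : ℕ) : ℝ) / Y) := by
      simp_rw [← e]; exact hFsum.prod
    have hs' : Summable fun n : ℕ => hker k m ((n : ℝ) / Y) :=
      (summable_nat_add_iff (f := fun n : ℕ => hker k m ((n : ℝ) / Y)) 1).1 hs
    rw [hs'.tsum_eq_zero_add]
    simp [hker_zero hk]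
  have hslice : ∀ j : ℕ, Summable fun n : ℕ => F (n, j) := fun j =>
    hFsum.comp_injective (i := fun n : ℕ => (n, j)) (fun a b hab => by simpa using hab)
  have hj : ∀ j : ℕ, |∑' n : ℕ, F (n, j) -
      ((j:ℝ) + 1) ^ (-(1 + 1 / (k:ℝ))) * ((Real.Gamma (m + 1 / k) / k) * Y)| ≤
      C * √Y * ((j:ℝ) + 1) ^ (-(1 + 1 / (2 * (k:ℝ)))) := by
    intro j
    have hj0 : (0:ℝ) < (j:ℝ) + 1 := by positivity
    have hsj : Summable fun n : ℕ => fker k m (((j:ℝ) + 1) / Y ^ k) ((n:ℝ) + 1) := by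
      have := (hslice j).mul_right ((j:ℝ) + 1)
      refine this.congr fun n => ?_
      rw [hF]; field_simp
    have H := h (((j:ℝ) + 1) / Y ^ k) (by positivity) hsj
    have e0 : ∀ a : ℝ, (Y ^ k) ^ a = Y ^ (k * a) := by
      intro a; rw [← Real.rpow_natCast, ← Real.rpow_mul hY.le]
    have e1 : (((j:ℝ) + 1) / Y ^ k) ^ (-(1 / (k:ℝ))) = ((j:ℝ) + 1) ^ (-(1 / (k:ℝ))) * Y := by
      rw [Real.div_rpow hj0.le hYk.le, e0]
      have : (k:ℝ) * -(1 / k) = -1 := by field_simp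
      rw [this, Real.rpow_neg_one, div_inv_eq_mul]
    have e2 : (((j:ℝ) + 1) / Y ^ k) ^ (-(1 / (2 * (k:ℝ)))) =
        ((j:ℝ) + 1) ^ (-(1 / (2 * (k:ℝ)))) * √Y := by
      rw [Real.div_rpow hj0.le hYk.le, e0]
      have : (k:ℝ) * -(1 / (2 * k)) = -(1/2) := by field_simp
      rw [this, Real.rpow_neg hY.le, div_inv_eq_mul, Real.sqrt_eq_rpow]
    rw [e1, e2] at H
    have e3 : ∑' n : ℕ, F (n, j) =
        (∑' n : ℕ, fker k m (((j:ℝ) + 1) / Y ^ k) ((n:ℝ) + 1)) / ((j:ℝ) + 1) := by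
      rw [← tsum_div_const, hF]
    have e4 : ∀ a : ℝ, ((j:ℝ) + 1) ^ (-(1 + a)) = ((j:ℝ) + 1) ^ (-a) / ((j:ℝ) + 1) := by
      intro a
      rw [neg_add, Real.rpow_add hj0, Real.rpow_neg_one]; ring
    rw [e3, e4, e4]
    have e5 : (∑' n : ℕ, fker k m (((j:ℝ) + 1) / Y ^ k) ((n:ℝ) + 1)) / ((j:ℝ) + 1) -
        ((j:ℝ) + 1) ^ (-(1 / (k:ℝ))) / ((j:ℝ) + 1) * ((Real.Gamma (m + 1 / k) / k) * Y) =
        (∑' n : ℕ, fker k m (((j:ℝ) + 1) / Y ^ k) ((n:ℝ) + 1) -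
        ((j:ℝ) + 1) ^ (-(1 / (k:ℝ))) * Y * (Real.Gamma (m + 1 / k) / k)) / ((j:ℝ) + 1) := by
      ring
    rw [e5, abs_div, abs_of_pos hj0, div_le_iff₀ hj0]
    refine H.trans (le_of_eq ?_)
    field_simp
  have hsJ : Summable fun j : ℕ => ∑' n : ℕ, F (n, j) := by
    have := hFsum.prod_symm
    exact this.prod
  rw [hswap, mul_assoc, ← tsum_mul_right, ← hsJ.tsum_sub (hS2.mul_right _), ← Real.norm_eq_abs]
  refine (tsum_of_norm_bounded (hS1.mul_left (C * √Y)).hasSum fun j => hj j).trans ?_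
  rw [tsum_mul_left]
  have := Real.sqrt_nonneg Y
  nlinarith

/-- `∑_p h(p/Y) = A·Y/log Y + O(Y/log² Y)`. -/
lemma prime_sum {k : ℕ} (hk : 1 ≤ k) (m : ℕ) : ∃ C : ℝ, 0 < C ∧ ∀ Y : ℝ, Real.exp 1 ≤ Y →
    |∑' n : ℕ, ipr n * hker k m (n / Y) - (∑' j : ℕ, ((j:ℝ) + 1) ^ (-(1 + 1 / (k:ℝ)))) *
      (Real.Gamma (m + 1 / k) / k) * (Y / Real.log Y)| ≤ C * (Y / Real.log Y ^ 2) := by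
  obtain ⟨K, hK, hsum⟩ := hker_sum hk m
  obtain ⟨D, hD, hdiff⟩ := vonMangoldt_sub_one_sum hk m
  obtain ⟨P, hP, hpp⟩ := prime_power_sum hk m
  obtain ⟨B0, hB0, b0⟩ := log_pow_hker_le hk m 0
  obtain ⟨B1, hB1, b1⟩ := log_pow_hker_le hk m 1
  obtain ⟨B2, hB2, b2⟩ := log_pow_hker_le hk m 2
  obtain ⟨D0, hD0, d0⟩ := tsum_abs_le_of_vker hB0.le
  obtain ⟨D1, hD1, d1⟩ := tsum_abs_le_of_vker (add_pos hB1 hB2).le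
  refine ⟨2 * K + D + 4 * P + D1, by positivity, fun Y hY => ?_⟩
  obtain ⟨A, hA⟩ : ∃ A : ℝ, A = (∑' j : ℕ, ((j:ℝ) + 1) ^ (-(1 + 1 / (k:ℝ)))) *
      (Real.Gamma (m + 1 / k) / k) := ⟨_, rfl⟩
  have hY0 : 0 < Y := (Real.exp_pos 1).trans_le hY
  obtain ⟨L, hLdef⟩ : ∃ L, L = Real.log Y := ⟨_, rfl⟩
  have hL : 1 ≤ L := hLdef ▸ (Real.le_log_iff_exp_le hY0).2 hY
  have hL0 : 0 < L := by linarith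
  have hΛ : ∀ n : ℕ, 0 ≤ ArithmeticFunction.vonMangoldt n := fun n =>
    ArithmeticFunction.vonMangoldt_nonneg
  have hh : ∀ n : ℕ, 0 ≤ hker k m ((n:ℝ) / Y) := fun n => hker_nonneg k m (by positivity)
  have gen0 : ∀ a : ℕ → ℝ, (∀ n, |a n| ≤ ArithmeticFunction.vonMangoldt n + 1) →
      Summable fun n : ℕ => a n * hker k m (n / Y) := by
    intro a ha
    refine (d0 Y hY0 _ fun n => ?_).1
    have h := b0 ((n:ℝ) / Y) (by positivity)
    rw [pow_zero, one_mul] at h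
    rw [abs_mul, abs_of_nonneg (hh n)]
    have := hΛ n
    calc _ ≤ (ArithmeticFunction.vonMangoldt n + 1) * (B0 * vker (n / Y)) := by
          gcongr
          · exact hh n
          · exact ha n
      _ = _ := by ring
  have s1 : Summable fun n : ℕ => hker k m (n / Y) := by
    have := gen0 (fun _ => 1) (fun n => by have := hΛ n; simp)
    simpa using this
  have s2 : Summable fun n : ℕ => (ArithmeticFunction.vonMangoldt n - 1) * hker k m (n / Y) :=
    gen0 _ fun n => by have := hΛ n; rw [abs_le]; constructor <;> linarith
  have s3 : Summable fun n : ℕ => lpr n * hker k m (n / Y) :=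
    gen0 _ fun n => by rw [abs_of_nonneg (lpr_nonneg n)]; linarith [lpr_le n]
  have s4 : Summable fun n : ℕ => ipr n * hker k m (n / Y) :=
    gen0 _ fun n => by rw [abs_of_nonneg (ipr_nonneg n)]; linarith [ipr_le n, hΛ n]
  have hlpr : ∀ n : ℕ, lpr n * hker k m (n / Y) =
      L * (ipr n * hker k m (n / Y)) + ipr n * (Real.log (n / Y) * hker k m (n / Y)) := by
    intro n
    have e : lpr n = ipr n * Real.log n := by unfold lpr ipr; split_ifs <;> simp
    rw [e, mul_assoc, log_mul_hker hk m hY0, ← hLdef]; ring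
  -- `log Y` times the sum of `log (p/Y) h(p/Y)` is still `O(Y)`
  obtain ⟨s5, t5⟩ := d1 Y hY0 (fun n => L * (ipr n * (Real.log (n / Y) * hker k m (n / Y))))
    (fun n => by
      have h1 := b1 ((n:ℝ) / Y) (by positivity)
      have h2 := b2 ((n:ℝ) / Y) (by positivity)
      rw [pow_one] at h1
      obtain ⟨l, hl⟩ : ∃ l, l = |Real.log ((n:ℝ) / Y)| := ⟨_, rfl⟩
      have hl0 : 0 ≤ l := hl ▸ abs_nonneg _
      have e1 : |L * (ipr n * (Real.log (n / Y) * hker k m (n / Y)))| =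
          l * (L * (ipr n * hker k m (n / Y))) := by
        rw [abs_mul, abs_mul, abs_mul, abs_of_pos hL0, abs_of_nonneg (ipr_nonneg n),
          abs_of_nonneg (hh n), ← hl]; ring
      have e2 : L * (ipr n * hker k m (n / Y)) =
          lpr n * hker k m (n / Y) - ipr n * (Real.log (n / Y) * hker k m (n / Y)) := by
        rw [hlpr]; ring
      rw [← hl] at h1 h2
      have h3 : -(ipr n * (Real.log (n / Y) * hker k m (n / Y))) ≤ l * hker k m (n / Y) := by
        have a1 : -Real.log ((n:ℝ) / Y) ≤ l := hl ▸ neg_le_abs _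
        have a2 : ipr n * (-Real.log ((n:ℝ) / Y)) ≤ l := by
          calc _ ≤ ipr n * l := mul_le_mul_of_nonneg_left a1 (ipr_nonneg n)
            _ ≤ l := mul_le_of_le_one_left hl0 (ipr_le n)
        have := mul_le_mul_of_nonneg_right a2 (hh n)
        linarith
      have h4 : lpr n * hker k m (n / Y) ≤ ArithmeticFunction.vonMangoldt n * hker k m (n / Y) :=
        mul_le_mul_of_nonneg_right (lpr_le n) (hh n)
      have h5 : l * (L * (ipr n * hker k m (n / Y))) ≤
          l * (ArithmeticFunction.vonMangoldt n * hker k m (n / Y) + l * hker k m (n / Y)) :=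
        mul_le_mul_of_nonneg_left (by rw [e2]; linarith) hl0
      rw [e1]
      have hv := vker_nonneg ((n:ℝ) / Y)
      have h6 := mul_le_mul_of_nonneg_left h1 (hΛ n)
      have h7 : 0 ≤ B2 * ArithmeticFunction.vonMangoldt n * vker (n / Y) := by
        have := hΛ n; positivity
      have h8 : 0 ≤ B1 * vker (n / Y) := by positivity
      nlinarith)
  have s6 : Summable fun n : ℕ => ipr n * (Real.log (n / Y) * hker k m (n / Y)) := by
    have := s5.mul_left L⁻¹
    refine this.congr fun n => ?_
    field_simp
  rw [tsum_mul_left] at t5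
  have q1 := hsum Y hY0
  have q2 := hdiff Y hY
  obtain ⟨s7, q3⟩ := hpp Y hY0
  have E1 : ∑' n : ℕ, lpr n * hker k m (n / Y) = ∑' n : ℕ, hker k m (n / Y) +
      ∑' n : ℕ, (ArithmeticFunction.vonMangoldt n - 1) * hker k m (n / Y) -
      ∑' n : ℕ, (ArithmeticFunction.vonMangoldt n - lpr n) * hker k m (n / Y) := by
    rw [← s1.tsum_add s2, ← (s1.add s2).tsum_sub s7]
    exact tsum_congr fun n => by ring
  have E2 : ∑' n : ℕ, lpr n * hker k m (n / Y) = L * ∑' n : ℕ, ipr n * hker k m (n / Y) +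
      ∑' n : ℕ, ipr n * (Real.log (n / Y) * hker k m (n / Y)) := by
    rw [← tsum_mul_left, ← (s4.mul_left L).tsum_add s6]
    exact tsum_congr hlpr
  rw [← hLdef] at q2
  rw [← hA] at q1
  rw [← hA, ← hLdef]
  obtain ⟨S, hS⟩ : ∃ S, S = ∑' n : ℕ, ipr n * hker k m (n / Y) := ⟨_, rfl⟩
  obtain ⟨R, hR⟩ : ∃ R, R = ∑' n : ℕ, ipr n * (Real.log (n / Y) * hker k m (n / Y)) := ⟨_, rfl⟩
  rw [← hS, ← hR] at E2
  rw [← hR, abs_mul, abs_of_pos hL0] at t5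
  rw [← hS]
  have r1 : L * √Y ≤ 2 * Y := by
    have := Real.log_le_rpow_div hY0.le (ε := 1/2) (by norm_num)
    rw [← hLdef, ← Real.sqrt_eq_rpow] at this
    have hs := Real.mul_self_sqrt hY0.le
    have := mul_le_mul_of_nonneg_right this (Real.sqrt_nonneg Y)
    linarith
  have r2 : L * Y ^ (3/4 : ℝ) ≤ 4 * Y := by
    have := Real.log_le_rpow_div hY0.le (ε := 1/4) (by norm_num)
    rw [← hLdef] at this
    have hs : Y ^ (1/4 : ℝ) * Y ^ (3/4 : ℝ) = Y := by
      rw [← Real.rpow_add hY0]; norm_num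
    have := mul_le_mul_of_nonneg_right this (by positivity : 0 ≤ Y ^ (3/4 : ℝ))
    linarith
  have e : S - A * (Y / L) = (L * (L * S - A * Y)) / L ^ 2 := by field_simp
  rw [e, abs_div, abs_of_pos (by positivity : 0 < L ^ 2), ← mul_div_assoc]
  gcongr
  rw [abs_mul, abs_of_pos hL0]
  have q2' : L * |∑' n : ℕ, (ArithmeticFunction.vonMangoldt n - 1) * hker k m (n / Y)| ≤ D * Y := by
    have := mul_le_mul_of_nonneg_left q2 hL0.le
    refine this.trans (le_of_eq ?_)
    field_simp
  have q1' := mul_le_mul_of_nonneg_left q1 hL0.le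
  have q3' := mul_le_mul_of_nonneg_left q3 hL0.le
  have r1' := mul_le_mul_of_nonneg_left r1 hK.le
  have r2' := mul_le_mul_of_nonneg_left r2 hP.le
  have hkey : L * S - A * Y = (∑' n : ℕ, hker k m (n / Y) - A * Y) +
      ∑' n : ℕ, (ArithmeticFunction.vonMangoldt n - 1) * hker k m (n / Y) -
      ∑' n : ℕ, (ArithmeticFunction.vonMangoldt n - lpr n) * hker k m (n / Y) - R := by
    linarith
  rw [hkey]
  have tri : ∀ a b c d : ℝ, |a + b - c - d| ≤ |a| + |b| + |c| + |d| := by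
    intro a b c d
    have h1 := abs_sub (a + b - c) d
    have h2 := abs_sub (a + b) c
    have h3 := abs_add_le a b
    linarith
  have := mul_le_mul_of_nonneg_left (tri (∑' n : ℕ, hker k m (n / Y) - A * Y)
    (∑' n : ℕ, (ArithmeticFunction.vonMangoldt n - 1) * hker k m (n / Y))
    (∑' n : ℕ, (ArithmeticFunction.vonMangoldt n - lpr n) * hker k m (n / Y)) R) hL0.le
  refine this.trans ?_
  linarith

/-! ### Termwise differentiation and reduction to a sum over primes -/

/-- The exponent `N = j p^k` attached to the pair `(j, p)`. -/
def expo (k : ℕ) (i : ℕ+ × Nat.Primes) : ℕ := (i.1 : ℕ) * (i.2 : ℕ) ^ k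

lemma expo_pos (k : ℕ) (i : ℕ+ × Nat.Primes) : 0 < expo k i :=
  Nat.mul_pos i.1.pos (pow_pos i.2.2.pos k)

lemma one_le_pnat (j : ℕ+) : (1:ℝ) ≤ ((j : ℕ) : ℝ) := by exact_mod_cast j.pos

/-- Since `N = j p^k ≥ j p`, the decay `N^a r^N ≪ N^{-2}` gives absolute convergence. -/
lemma summable_expo {k : ℕ} (hk : 1 ≤ k) (a : ℕ) {r : ℝ} (hr : 0 < r) (hr1 : r < 1) :
    Summable fun i : ℕ+ × Nat.Primes => (expo k i : ℝ) ^ a * r ^ expo k i := by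
  obtain ⟨C, hC, h⟩ := pow_mul_exp_neg_le a (β := 2) (by norm_num)
  obtain ⟨t, ht⟩ : ∃ t : ℝ, t = -Real.log r := ⟨_, rfl⟩
  have ht0 : 0 < t := by rw [ht]; linarith [Real.log_neg hr hr1]
  have hre : r = Real.exp (-t) := by rw [ht, neg_neg, Real.exp_log hr]
  have s0 : Summable fun n : ℕ => 1 / (n:ℝ) ^ 2 := Real.summable_one_div_nat_pow.2 (by norm_num)
  have s1 : Summable fun j : ℕ+ => 1 / ((j:ℕ):ℝ) ^ 2 := s0.comp_injective PNat.coe_injective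
  have s2 : Summable fun p : Nat.Primes => 1 / ((p:ℕ):ℝ) ^ 2 :=
    s0.comp_injective Nat.Primes.coe_nat_injective
  have s3 := (s1.mul_of_nonneg s2 (fun _ => by simp only [Pi.zero_apply]; positivity)
    (fun _ => by simp only [Pi.zero_apply]; positivity)).mul_left (C * (t ^ a)⁻¹ * (t ^ 2)⁻¹)
  refine Summable.of_nonneg_of_le (fun i => by positivity) (fun i => ?_) s3
  have hN : (0:ℝ) < expo k i := by exact_mod_cast expo_pos k i
  have h1 := h (expo k i * t) (by positivity)
  have e1 : r ^ expo k i = Real.exp (-(expo k i * t)) := by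
    rw [hre, ← Real.exp_nat_mul]; congr 1; ring
  rw [mul_pow, Real.rpow_neg (by positivity)] at h1
  norm_num at h1
  rw [← e1] at h1
  have hjp : ((i.1:ℕ):ℝ) * ((i.2:ℕ):ℝ) ≤ expo k i := by
    have : (i.1:ℕ) * (i.2:ℕ) ≤ expo k i :=
      Nat.mul_le_mul_left _ (Nat.le_self_pow (by omega) _)
    exact_mod_cast this
  have hj : (0:ℝ) < ((i.1:ℕ):ℝ) := by exact_mod_cast i.1.pos
  have hp : (0:ℝ) < ((i.2:ℕ):ℝ) := by exact_mod_cast i.2.2.pos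
  have h2 : ((expo k i : ℝ) ^ 2)⁻¹ ≤ 1 / ((i.1:ℕ):ℝ) ^ 2 * (1 / ((i.2:ℕ):ℝ) ^ 2) := by
    rw [one_div, one_div, ← mul_inv, ← mul_pow]
    gcongr
  calc (expo k i : ℝ) ^ a * r ^ expo k i
      = (t ^ a)⁻¹ * ((expo k i : ℝ) ^ a * t ^ a * r ^ expo k i) := by field_simp
    _ ≤ (t ^ a)⁻¹ * (C * (((expo k i : ℝ) * t) ^ 2)⁻¹) := by
        gcongr
    _ = C * (t ^ a)⁻¹ * (t ^ 2)⁻¹ * ((expo k i : ℝ) ^ 2)⁻¹ := by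
        rw [mul_pow, mul_inv]; ring
    _ ≤ _ := by gcongr

/-- The `m`-th derivative of the term `z^N / j`, for `N = j p^k`. -/
noncomputable def dterm (k m : ℕ) (i : ℕ+ × Nat.Primes) (z : ℝ) : ℝ :=
  (expo k i).descFactorial m * z ^ (expo k i - m) / ((i.1 : ℕ) : ℝ)

lemma dterm_hasDerivAt (k m : ℕ) (i : ℕ+ × Nat.Primes) (z : ℝ) :
    HasDerivAt (dterm k m i) (dterm k (m + 1) i z) z := by
  have h := ((hasDerivAt_pow (expo k i - m) z).const_mul
    ((expo k i).descFactorial m : ℝ)).div_const ((i.1 : ℕ) : ℝ)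
  refine h.congr_deriv ?_
  unfold dterm
  rw [Nat.descFactorial_succ, Nat.sub_sub]
  push_cast
  ring

lemma dterm_norm_le (k m : ℕ) (i : ℕ+ × Nat.Primes) {r z : ℝ} (hr : 0 < r)
    (hz : 0 < z) (hzr : z ≤ r) :
    ‖dterm k m i z‖ ≤ (r ^ m)⁻¹ * ((expo k i : ℝ) ^ m * r ^ expo k i) := by
  have hj := one_le_pnat i.1
  have hn : 0 ≤ dterm k m i z := by unfold dterm; positivity
  rw [Real.norm_of_nonneg hn]
  unfold dterm
  rcases lt_or_ge (expo k i) m with h | h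
  · rw [Nat.descFactorial_eq_zero_iff_lt.2 h]
    simp only [Nat.cast_zero, zero_mul, zero_div]
    positivity
  · refine (div_le_self (by positivity) hj).trans ?_
    have h1 : ((expo k i).descFactorial m : ℝ) ≤ (expo k i : ℝ) ^ m := by
      exact_mod_cast Nat.descFactorial_le_pow _ _
    have h2 : z ^ (expo k i - m) ≤ (r ^ m)⁻¹ * r ^ expo k i := by
      rw [← pow_sub_mul_pow r h, mul_comm, mul_assoc, mul_inv_cancel₀ (by positivity), mul_one]
      gcongr
    calc _ ≤ (expo k i : ℝ) ^ m * ((r ^ m)⁻¹ * r ^ expo k i) := by gcongr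
      _ = _ := by ring

lemma dterm_summable {k : ℕ} (hk : 1 ≤ k) (m : ℕ) {z : ℝ} (hz : 0 < z) (hz1 : z < 1) :
    Summable fun i => dterm k m i z :=
  Summable.of_norm_bounded ((summable_expo hk m hz hz1).mul_left _)
    fun i => dterm_norm_le k m i hz hz le_rfl

/-- Termwise differentiation, with uniform convergence on `(0, r)` for `z < r < 1`. -/
lemma tsum_dterm_hasDerivAt {k : ℕ} (hk : 1 ≤ k) (m : ℕ) {z : ℝ} (hz : 0 < z) (hz1 : z < 1) :
    HasDerivAt (fun y => ∑' i, dterm k m i y) (∑' i, dterm k (m + 1) i z) z := by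
  obtain ⟨r, hzr, hr1⟩ := exists_between hz1
  have hr : 0 < r := hz.trans hzr
  exact hasDerivAt_tsum_of_isPreconnected ((summable_expo hk (m + 1) hr hr1).mul_left _)
    (isOpen_Ioo (a := 0) (b := r)) isPreconnected_Ioo
    (fun i y _ => dterm_hasDerivAt k m i y)
    (fun i y hy => dterm_norm_le k (m + 1) i hr hy.1 hy.2.le)
    ⟨hz, hzr⟩ (dterm_summable hk m hz hz1) ⟨hz, hzr⟩

lemma iteratedDeriv_PhiR {k : ℕ} (hk : 1 ≤ k) (m : ℕ) :
    ∀ z ∈ Set.Ioo (0:ℝ) 1, iteratedDeriv m (PhiR k) z = ∑' i, dterm k m i z := by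
  induction m with
  | zero =>
    intro z hz
    rw [iteratedDeriv_zero, (dterm_summable hk 0 hz.1 hz.2).tsum_prod]
    simp [PhiR, dterm, expo]
  | succ m ih =>
    intro z hz
    rw [iteratedDeriv_succ]
    have : iteratedDeriv m (PhiR k) =ᶠ[nhds z] fun y => ∑' i, dterm k m i y := by
      filter_upwards [isOpen_Ioo.mem_nhds hz] with y hy using ih y hy
    rw [this.deriv_eq]
    exact (tsum_dterm_hasDerivAt hk m hz.1 hz.2).deriv

lemma tsum_ipr (f : ℕ → ℝ) : ∑' p : Nat.Primes, f p = ∑' n : ℕ, ipr n * f n := by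
  have := tsum_subtype {n : ℕ | n.Prime} f
  refine (Eq.trans ?_ this).trans (tsum_congr fun n => ?_)
  · rfl
  · by_cases h : n.Prime <;> simp [ipr, h]

/-- `S_a(z) = ∑ N^a z^N / j`. -/
noncomputable def psum (k a : ℕ) (z : ℝ) : ℝ :=
  ∑' i : ℕ+ × Nat.Primes, (expo k i : ℝ) ^ a * z ^ expo k i / ((i.1 : ℕ) : ℝ)

lemma psum_summable {k : ℕ} (hk : 1 ≤ k) (a : ℕ) {z : ℝ} (hz : 0 < z) (hz1 : z < 1) :
    Summable fun i : ℕ+ × Nat.Primes =>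
      (expo k i : ℝ) ^ a * z ^ expo k i / ((i.1 : ℕ) : ℝ) :=
  Summable.of_nonneg_of_le (fun i => by positivity)
    (fun i => div_le_self (by positivity) (one_le_pnat i.1)) (summable_expo hk a hz hz1)

/-- Summing over `j` first turns `S_a(e^{-1/Y^k})` into a sum of the kernel over primes. -/
lemma psum_eq {k : ℕ} (hk : 1 ≤ k) (a : ℕ) {Y : ℝ} (hY : 0 < Y) :
    psum k a (Real.exp (-(1 / Y ^ k))) =
      (Y ^ k) ^ a * ∑' n : ℕ, ipr n * hker k a (n / Y) := by
  have hX : 0 < 1 / Y ^ k := by positivity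
  have hs := psum_summable hk a (Real.exp_pos (-(1 / Y ^ k)))
    (Real.exp_lt_one_iff.2 (by linarith))
  unfold psum
  have hs' : Summable (Function.uncurry fun (j : ℕ+) (p : Nat.Primes) =>
      (expo k (j, p) : ℝ) ^ a * Real.exp (-(1 / Y ^ k)) ^ expo k (j, p) / ((j : ℕ) : ℝ)) := hs
  rw [hs.tsum_prod, ← hs'.tsum_comm, ← tsum_ipr (fun n => hker k a (n / Y)), ← tsum_mul_left]
  refine tsum_congr fun p => ?_
  refine (tsum_pnat_eq_tsum_succ (f := fun j : ℕ =>
    ((j * (p:ℕ) ^ k : ℕ) : ℝ) ^ a * Real.exp (-(1 / Y ^ k)) ^ (j * (p:ℕ) ^ k) / (j : ℝ))).trans ?_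
  unfold hker gker
  rw [← tsum_mul_left]
  refine tsum_congr fun j => ?_
  rw [← Real.exp_nat_mul]
  have e : (((j + 1) * (p:ℕ) ^ k : ℕ) : ℝ) * -(1 / Y ^ k) =
      -(((j:ℝ) + 1) * ((p:ℕ) / Y : ℝ) ^ k) := by
    push_cast; rw [div_pow]; ring
  rw [e]
  have e2 : (((j + 1) * (p:ℕ) ^ k : ℕ) : ℝ) = Y ^ k * (((j:ℝ) + 1) * ((p:ℕ) / Y : ℝ) ^ k) := by
    push_cast; rw [div_pow]; field_simp
  rw [e2, mul_pow (Y ^ k)]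
  push_cast
  ring

/-- The Chebyshev-type upper bound `S_a = O(X^a Y)`. -/
lemma psum_le {k : ℕ} (hk : 1 ≤ k) (a : ℕ) : ∃ C : ℝ, 0 < C ∧ ∀ Y : ℝ, 0 < Y →
    psum k a (Real.exp (-(1 / Y ^ k))) ≤ C * ((Y ^ k) ^ a * Y) := by
  obtain ⟨B, hB, hb⟩ := log_pow_hker_le hk a 0
  obtain ⟨C, hC, h⟩ := tsum_abs_le_of_vker hB.le
  refine ⟨C, hC, fun Y hY => ?_⟩
  rw [psum_eq hk a hY]
  have := (h Y hY (fun n => ipr n * hker k a (n / Y)) fun n => ?_).2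
  · have := (le_abs_self _).trans this
    calc _ ≤ (Y ^ k) ^ a * (C * Y) := by gcongr
      _ = _ := by ring
  · have h0 := hker_nonneg k a (x := n / Y) (by positivity)
    have h1 := hb (n / Y) (by positivity)
    have h2 : (0:ℝ) ≤ ArithmeticFunction.vonMangoldt n := ArithmeticFunction.vonMangoldt_nonneg
    rw [pow_zero, one_mul] at h1
    have h3 : ipr n ≤ 1 := by unfold ipr; split_ifs <;> norm_num
    rw [abs_of_nonneg (mul_nonneg (ipr_nonneg n) h0)]
    have h4 : ipr n * hker k a (n / Y) ≤ hker k a (n / Y) := mul_le_of_le_one_left h0 h3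
    nlinarith [mul_nonneg h2 (h0.trans h1)]

/-- The falling factorial of order `m + 1` agrees with `N^{m+1}` up to `O(N^m)`. -/
lemma pow_le_descFactorial_add (m : ℕ) :
    ∃ c : ℕ, ∀ N : ℕ, N ^ (m + 1) ≤ N.descFactorial (m + 1) + c * N ^ m := by
  induction m with
  | zero => exact ⟨0, fun N => by simp⟩
  | succ m ih =>
    obtain ⟨c, hc⟩ := ih
    refine ⟨c + (m + 1), fun N => ?_⟩
    have h1 : N * N.descFactorial (m + 1) ≤
        N.descFactorial (m + 2) + (m + 1) * N.descFactorial (m + 1) := by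
      rw [Nat.descFactorial_succ N (m + 1), ← add_mul]
      exact Nat.mul_le_mul_right _ (by omega)
    have h2 := Nat.descFactorial_le_pow N (m + 1)
    have h3 := Nat.mul_le_mul_left N (hc N)
    have h4 := Nat.mul_le_mul_left (m + 1) h2
    calc N ^ (m + 1 + 1) = N * N ^ (m + 1) := by ring
      _ ≤ N * (N.descFactorial (m + 1) + c * N ^ m) := h3
      _ = N * N.descFactorial (m + 1) + c * N ^ (m + 1) := by ring
      _ ≤ _ := by rw [add_mul]; linarith

/-- Replacing falling factorials by powers costs a factor `1/X`, `X = Y^k`. -/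
lemma dterm_sub_psum {k : ℕ} (hk : 1 ≤ k) (m : ℕ) : ∃ C : ℝ, 0 < C ∧ ∀ Y : ℝ, 0 < Y →
    |Real.exp (-(1 / Y ^ k)) ^ m * ∑' i, dterm k m i (Real.exp (-(1 / Y ^ k))) -
      psum k m (Real.exp (-(1 / Y ^ k)))| ≤ C * ((Y ^ k) ^ m * Y / Y ^ k) := by
  cases m with
  | zero =>
    refine ⟨1, one_pos, fun Y hY => ?_⟩
    have : ∑' i, dterm k 0 i (Real.exp (-(1 / Y ^ k))) = psum k 0 (Real.exp (-(1 / Y ^ k))) := by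
      simp [psum, dterm]
    rw [this, pow_zero, one_mul, sub_self, abs_zero]
    positivity
  | succ m =>
    obtain ⟨c, hc⟩ := pow_le_descFactorial_add m
    obtain ⟨C, hC, h⟩ := psum_le hk m
    refine ⟨(c + 1) * C, by positivity, fun Y hY => ?_⟩
    have hX : 0 < 1 / Y ^ k := by positivity
    obtain ⟨z, hz⟩ : ∃ z, z = Real.exp (-(1 / Y ^ k)) := ⟨_, rfl⟩
    have hz0 : 0 < z := hz ▸ Real.exp_pos _
    have hz1 : z < 1 := by rw [hz]; exact Real.exp_lt_one_iff.2 (by linarith)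
    have hY' := h Y hY
    rw [← hz] at hY' ⊢
    have s1 := (dterm_summable hk (m + 1) hz0 hz1).mul_left (z ^ (m + 1))
    have s2 := psum_summable hk (m + 1) hz0 hz1
    have s3 := (psum_summable hk m hz0 hz1).mul_left (c : ℝ)
    have key : ∀ i, z ^ (m + 1) * dterm k (m + 1) i z =
        (expo k i).descFactorial (m + 1) * z ^ expo k i / ((i.1 : ℕ) : ℝ) := by
      intro i
      unfold dterm
      rcases lt_or_ge (expo k i) (m + 1) with h | h
      · rw [Nat.descFactorial_eq_zero_iff_lt.2 h]; simp
      · rw [← pow_sub_mul_pow z h]; ring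
    have hle : z ^ (m + 1) * ∑' i, dterm k (m + 1) i z ≤ psum k (m + 1) z := by
      rw [← tsum_mul_left]
      refine s1.tsum_le_tsum (fun i => ?_) s2
      rw [key]
      have h1 : ((expo k i).descFactorial (m + 1) : ℝ) ≤ (expo k i : ℝ) ^ (m + 1) := by
        exact_mod_cast Nat.descFactorial_le_pow _ _
      gcongr
    have hge : psum k (m + 1) z ≤ z ^ (m + 1) * ∑' i, dterm k (m + 1) i z + c * psum k m z := by
      unfold psum
      rw [← tsum_mul_left, ← tsum_mul_left, ← s1.tsum_add s3]
      refine s2.tsum_le_tsum (fun i => ?_) (s1.add s3)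
      rw [key]
      have h1 : (expo k i : ℝ) ^ (m + 1) ≤
          (expo k i).descFactorial (m + 1) + c * (expo k i : ℝ) ^ m := by
        exact_mod_cast hc (expo k i)
      calc _ ≤ ((expo k i).descFactorial (m + 1) + c * (expo k i : ℝ) ^ m) * z ^ expo k i /
            ((i.1 : ℕ) : ℝ) := by gcongr
        _ = _ := by ring
    have e : (Y ^ k) ^ (m + 1) * Y / Y ^ k = (Y ^ k) ^ m * Y := by
      rw [pow_succ]; field_simp
    rw [e, abs_le]
    have h5 : (c:ℝ) * psum k m z ≤ c * (C * ((Y ^ k) ^ m * Y)) := by gcongr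
    have h6 : 0 ≤ C * ((Y ^ k) ^ m * Y) := by positivity
    have h7 : 0 ≤ (c:ℝ) * (C * ((Y ^ k) ^ m * Y)) := by positivity
    constructor <;> nlinarith

/-! ### The asymptotic formula -/

lemma zetaR_eq {s : ℝ} (hs : 1 < s) : zetaR s = ∑' j : ℕ, ((j:ℝ) + 1) ^ (-s) := by
  have h := (zeta_hasSum (w := (s:ℂ)) (by simpa using hs)).1
  have h2 := Complex.hasSum_re h
  unfold zetaR
  rw [← h2.tsum_eq]
  refine tsum_congr fun j => ?_
  have : (1:ℂ) / ((j:ℂ) + 1) ^ (s:ℂ) = ((((j:ℝ) + 1) ^ (-s) : ℝ) : ℂ) := by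
    rw [Complex.ofReal_cpow (by positivity)]
    push_cast
    rw [Complex.cpow_neg, one_div]
  rw [this, Complex.ofReal_re]

/-- The asymptotic in the variable `Y`, where `ρ = e^{-1/X}` and `X = Y^k`. -/
lemma iteratedDeriv_asymp {k : ℕ} (hk : 1 ≤ k) (m : ℕ) : ∃ C : ℝ, 0 < C ∧
    ∀ Y : ℝ, Real.exp 1 ≤ Y →
    |iteratedDeriv m (PhiR k) (Real.exp (-(1 / Y ^ k))) -
      zetaR (1 + 1 / (k:ℝ)) * (Real.Gamma (m + 1 / k) / k) * ((Y ^ k) ^ m * (Y / Real.log Y))| ≤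
      C * ((Y ^ k) ^ m * (Y / Real.log Y ^ 2)) := by
  have hk0 : (0:ℝ) < k := by exact_mod_cast hk
  obtain ⟨C1, hC1, h1⟩ := prime_sum hk m
  obtain ⟨C2, hC2, h2⟩ := dterm_sub_psum hk m
  rw [zetaR_eq (by simpa using hk0)]
  obtain ⟨A, hA⟩ : ∃ A : ℝ, A = (∑' j : ℕ, ((j:ℝ) + 1) ^ (-(1 + 1 / (k:ℝ)))) *
      (Real.Gamma (m + 1 / k) / k) := ⟨_, rfl⟩
  have hA0 : 0 ≤ A := by
    rw [hA]
    have := Real.Gamma_nonneg_of_nonneg (s := (m:ℝ) + 1 / k) (by positivity)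
    have : 0 ≤ ∑' j : ℕ, ((j:ℝ) + 1) ^ (-(1 + 1 / (k:ℝ))) := tsum_nonneg fun j => by positivity
    positivity
  rw [← hA] at h1 ⊢
  refine ⟨Real.exp m * (C1 + 2 * C2) + 2 * m * Real.exp m * A, by positivity, fun Y hY => ?_⟩
  have hY0 : 0 < Y := (Real.exp_pos 1).trans_le hY
  have hY1 : 1 ≤ Y := (Real.one_le_exp zero_le_one).trans hY
  obtain ⟨L, hL⟩ : ∃ L, L = Real.log Y := ⟨_, rfl⟩
  have hL1 : 1 ≤ L := by rw [hL]; exact (Real.le_log_iff_exp_le hY0).2 hY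
  have hL0 : 0 < L := by linarith
  obtain ⟨X, hX⟩ : ∃ X, X = Y ^ k := ⟨_, rfl⟩
  have hXY : Y ≤ X := by rw [hX]; exact le_self_pow₀ hY1 (by omega)
  have hX1 : 1 ≤ X := hY1.trans hXY
  have hX0 : 0 < X := by linarith
  have hLX : L ^ 2 ≤ 2 * X := by
    have := Real.pow_div_factorial_le_exp L hL0.le 2
    rw [hL, Real.exp_log hY0, ← hL] at this
    norm_num at this
    linarith
  have hinv : 1 / X ≤ 2 / L ^ 2 := by
    rw [div_le_div_iff₀ hX0 (by positivity)]; linarith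
  have e1 := h1 Y hY
  have e2 := h2 Y hY0
  rw [psum_eq hk m hY0] at e2
  rw [← hX, ← hL] at *
  obtain ⟨P, hP⟩ : ∃ P, P = ∑' n : ℕ, ipr n * hker k m (n / Y) := ⟨_, rfl⟩
  rw [← hP] at e1 e2
  have hz1 : Real.exp (-(1 / X)) < 1 :=
    Real.exp_lt_one_iff.2 (by have : 0 < 1 / X := by positivity
                              linarith)
  rw [iteratedDeriv_PhiR hk m _ ⟨Real.exp_pos _, hz1⟩]
  obtain ⟨D, hD⟩ : ∃ D, D = ∑' i, dterm k m i (Real.exp (-(1 / X))) := ⟨_, rfl⟩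
  rw [← hD] at e2 ⊢
  obtain ⟨E, hE⟩ : ∃ E, E = Real.exp (m * (1 / X)) := ⟨_, rfl⟩
  have hEz : E * Real.exp (-(1 / X)) ^ m = 1 := by
    rw [hE, ← Real.exp_nat_mul, ← Real.exp_add]; simp
  have hE0 : 0 < E := hE ▸ Real.exp_pos _
  have hEm : E ≤ Real.exp m := by
    rw [hE]
    apply Real.exp_le_exp.2
    exact mul_le_of_le_one_right (by positivity) ((div_le_one hX0).2 hX1)
  have hE1 : 1 ≤ E := by rw [hE]; exact Real.one_le_exp (by positivity)
  have hE2 : E - 1 ≤ m * (1 / X) * Real.exp m := by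
    have h := Real.add_one_le_exp (-(m * (1 / X)))
    rw [Real.exp_neg, ← hE] at h
    have h' : E - m * (1 / X) * E ≤ 1 := by
      have := mul_le_mul_of_nonneg_left h hE0.le
      rw [mul_inv_cancel₀ hE0.ne'] at this
      linarith
    have : m * (1 / X) * E ≤ m * (1 / X) * Real.exp m := by gcongr
    linarith
  obtain ⟨W, hW⟩ : ∃ W, W = X ^ m * Y := ⟨_, rfl⟩
  have hW0 : 0 < W := by rw [hW]; positivity
  have f1 : |X ^ m * P - A * (W / L)| ≤ C1 * (W / L ^ 2) := by
    have : X ^ m * P - A * (W / L) = X ^ m * (P - A * (Y / L)) := by rw [hW]; ring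
    rw [this, abs_mul, abs_of_pos (by positivity)]
    calc _ ≤ X ^ m * (C1 * (Y / L ^ 2)) := by gcongr
      _ = _ := by rw [hW]; ring
  have f2 : |Real.exp (-(1 / X)) ^ m * D - X ^ m * P| ≤ 2 * C2 * (W / L ^ 2) := by
    refine e2.trans ?_
    rw [← hW]
    calc C2 * (W / X) = C2 * W * (1 / X) := by ring
      _ ≤ C2 * W * (2 / L ^ 2) := by gcongr
      _ = _ := by ring
  have f3 : |(E - 1) * (A * (W / L))| ≤ 2 * m * Real.exp m * A * (W / L ^ 2) := by
    rw [abs_of_nonneg (mul_nonneg (by linarith) (by positivity))]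
    calc (E - 1) * (A * (W / L)) ≤ (m * (1 / X) * Real.exp m) * (A * W) := by
          gcongr
          exact div_le_self hW0.le hL1
      _ ≤ (m * (2 / L ^ 2) * Real.exp m) * (A * W) := by gcongr
      _ = _ := by ring
  have g1 : X ^ m * (Y / L) = W / L := by rw [hW]; ring
  have g2 : X ^ m * (Y / L ^ 2) = W / L ^ 2 := by rw [hW]; ring
  rw [g1, g2]
  have dec : D - A * (W / L) = E * ((Real.exp (-(1 / X)) ^ m * D - X ^ m * P) +
      (X ^ m * P - A * (W / L))) + (E - 1) * (A * (W / L)) := by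
    linear_combination (-D) * hEz
  rw [dec]
  refine (abs_add_le _ _).trans ?_
  rw [abs_mul, abs_of_pos hE0]
  have f4 := (abs_add_le (Real.exp (-(1 / X)) ^ m * D - X ^ m * P) (X ^ m * P - A * (W / L)))
  calc _ ≤ Real.exp m * (2 * C2 * (W / L ^ 2) + C1 * (W / L ^ 2)) +
        2 * m * Real.exp m * A * (W / L ^ 2) := by
        gcongr
        linarith
    _ = _ := by ring

/-- Lemma 3.1, equation (3.2): with `X = 1/log(1/ρ)`, the `m`-th derivative satisfies
`Φ^{(m)}(ρ) = ζ(1+1/k) Γ(m+1/k) X^{m+1/k} / log X · (1 + O(1/log X))` as `ρ → 1⁻`. -/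
theorem stmt8 (k m : ℕ) (hk : 1 ≤ k) :
    ∃ C : ℝ, 0 < C ∧
      ∀ᶠ ρ in nhdsWithin (1 : ℝ) (Set.Ioo 0 1),
        |iteratedDeriv m (PhiR k) ρ -
            zetaR (1 + 1 / (k : ℝ)) * Real.Gamma ((m : ℝ) + 1 / k) *
              (1 / Real.log (1 / ρ)) ^ ((m : ℝ) + 1 / k) /
              Real.log (1 / Real.log (1 / ρ))| ≤
          C *
            (zetaR (1 + 1 / (k : ℝ)) * Real.Gamma ((m : ℝ) + 1 / k) *
                (1 / Real.log (1 / ρ)) ^ ((m : ℝ) + 1 / k) /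
                Real.log (1 / Real.log (1 / ρ))) *
            (1 / Real.log (1 / Real.log (1 / ρ))) := by
  have hk0 : (0:ℝ) < k := by exact_mod_cast hk
  obtain ⟨C, hC, h⟩ := iteratedDeriv_asymp hk m
  have hZ : 0 < zetaR (1 + 1 / (k : ℝ)) := by
    rw [zetaR_eq (by simpa using hk0)]
    exact (summable_succ_rpow (β := 1 / (k:ℝ)) (by positivity)).tsum_pos
      (fun j => by positivity) 0 (by positivity)
  have hG : 0 < Real.Gamma ((m : ℝ) + 1 / k) := Real.Gamma_pos_of_pos (by positivity)
  obtain ⟨B, hB⟩ : ∃ B, B = zetaR (1 + 1 / (k : ℝ)) * Real.Gamma ((m : ℝ) + 1 / k) := ⟨_, rfl⟩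
  have hB0 : 0 < B := by rw [hB]; positivity
  -- `M / log X = B X^m Y / (k L)^2` with `L = log Y`, which dictates the constant.
  refine ⟨C * k ^ 2 / B, by positivity, ?_⟩
  have hnear : ∀ᶠ ρ in nhdsWithin (1 : ℝ) (Set.Ioo 0 1),
      Real.exp (-Real.exp (-k)) < ρ := by
    apply mem_nhdsWithin_of_mem_nhds
    exact lt_mem_nhds (Real.exp_lt_one_iff.2 (by linarith [Real.exp_pos (-(k:ℝ))]))
  filter_upwards [hnear, self_mem_nhdsWithin] with ρ hρ hρ'
  obtain ⟨X, hX⟩ : ∃ X, X = 1 / Real.log (1 / ρ) := ⟨_, rfl⟩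
  have hlog : Real.log (1 / ρ) = -Real.log ρ := by rw [one_div, Real.log_inv]
  have ht : 0 < Real.log (1 / ρ) := by rw [hlog]; linarith [Real.log_neg hρ'.1 hρ'.2]
  have ht1 : Real.log (1 / ρ) < Real.exp (-k) := by
    have := Real.log_lt_log (Real.exp_pos _) hρ
    rw [Real.log_exp] at this
    rw [hlog]; linarith
  have hX0 : 0 < X := by rw [hX]; positivity
  have hXe : Real.exp k ≤ X := by
    rw [hX, le_div_iff₀ ht]
    rw [Real.exp_neg] at ht1
    have := mul_lt_mul_of_pos_left ht1 (Real.exp_pos (k:ℝ))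
    rw [mul_inv_cancel₀ (Real.exp_pos _).ne'] at this
    exact this.le
  have hρX : ρ = Real.exp (-(1 / X)) := by
    rw [hX, one_div_one_div, hlog, neg_neg, Real.exp_log hρ'.1]
  rw [← hX, ← hB]
  obtain ⟨Y, hY⟩ : ∃ Y : ℝ, Y = X ^ (1 / (k:ℝ)) := ⟨_, rfl⟩
  have hY0 : 0 < Y := by rw [hY]; positivity
  have hYk : Y ^ k = X := by
    rw [hY, ← Real.rpow_natCast, ← Real.rpow_mul hX0.le]
    rw [one_div_mul_cancel hk0.ne', Real.rpow_one]
  have hYe : Real.exp 1 ≤ Y := by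
    rw [hY]
    calc Real.exp 1 = Real.exp k ^ (1 / (k:ℝ)) := by
          rw [← Real.exp_mul]; congr 1; field_simp
      _ ≤ _ := Real.rpow_le_rpow (Real.exp_pos _).le hXe (by positivity)
  have hL1 : 1 ≤ Real.log Y := (Real.le_log_iff_exp_le hY0).2 hYe
  have hLX : Real.log X = k * Real.log Y := by rw [← hYk, Real.log_pow]
  have hXY : X ^ ((m : ℝ) + 1 / k) = X ^ m * Y := by
    rw [Real.rpow_add hX0, Real.rpow_natCast, hY]
  have key := h Y hYe
  rw [hYk, ← hρX] at key
  rw [hXY, hLX]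
  have e1 : B * (X ^ m * Y) / (k * Real.log Y) =
      zetaR (1 + 1 / (k : ℝ)) * (Real.Gamma ((m : ℝ) + 1 / k) / k) *
        (X ^ m * (Y / Real.log Y)) := by
    rw [hB]; field_simp
  have e2 : C * k ^ 2 / B * (B * (X ^ m * Y) / (k * Real.log Y)) * (1 / (k * Real.log Y)) =
      C * (X ^ m * (Y / Real.log Y ^ 2)) := by
    have : Real.log Y ≠ 0 := by linarith
    field_simp
  rw [e2, e1]
  exact key
end

section
/- Fix an integer k ≥ 2, and set C_k = 128 if k = 2 and C_k = ∏_{p ≤ k^6, p prime} k (i.e., k raised to the number of primes up to k^6) if k ≥ 3, and δ_k = π² / (2^{2k+3} · C_k^{2k}). Then for all integers q > 2 and a with gcd(a,q) = 1, and all real numbers β and X, one has | Re( S_k*(q,a) / (1 − 2πiβX)^{1/k} ) | ≤ (1 − δ_k) · φ(q), where (1 − 2πiβX)^{1/k} denotes the principal branch. -/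
/-!
Let `S = S_k*(q, a)`. There are two cases, according to whether every unit `u` modulo `q` satisfies
`u ^ k = 1`.

If not, `|S|` itself is at most `(1 - 1 / (512 k²)) φ(q)`, which suffices since
`|1 - 2πiβX| ≥ 1`. As `S` is multiplicative in `q` (`unitSum_mul`), it is enough to treat a prime
power `Q` on which the `k`-th power map `u ↦ u ^ k` is nontrivial. There that map has kernel of size
at most `2 k` and at most `φ(Q) / 2`, so for each `v` at least half of the points `a u ^ k / Q` are at
distance at least `1 / (32 k)` from `a v ^ k / Q` on the circle (`card_near_le`); expanding `|S|²`
as a double sum of cosines gives the saving (`norm_unitSum_prime_pow_le`).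

If all `u ^ k` are `1`, then `S = φ(q) e(a/q)`, and `q < (2 k + 2) ^ k` by Bertrand's postulate
(`lt_of_forall_pow_eq_one`). Writing `(1 - 2πiβX)^{-1/k} = (cos θ)^{1/k} e^{iθ/k}`, either `θ / k` is
at most `π / (2 q)` in size, and `2πa/q + θ/k` has distance at least `π / (2 q)` from `π ℤ` since
`q > 2`, or `cos θ` is bounded away from `1`. Both give the saving `1 / (2 q²)`
(`abs_re_exp_div_cpow_le`).

The inequality `C_k ≥ 2 k + 2` makes `δ_k` smaller than both savings.
-/

open Filter

/-- `S_k*(q,a) = ∑_{1 ≤ ℓ ≤ q, (ℓ,q)=1} e(a ℓ^k / q)`. -/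
noncomputable def Sstar (k : ℕ) (q : ℕ) (a : ℤ) : ℂ :=
  ∑ ℓ ∈ (Finset.Icc 1 q).filter (fun ℓ => Nat.gcd ℓ q = 1),
    Complex.exp (2 * Real.pi * Complex.I * ((a : ℂ) * (ℓ : ℂ) ^ k / (q : ℂ)))

/-- `C_k = 128` for `k = 2`, and `C_k = ∏_{p ≤ k^6 prime} k` for `k ≥ 3`. -/
noncomputable def Ck (k : ℕ) : ℝ :=
  if k = 2 then 128 else ∏ _p ∈ (Finset.range (k ^ 6 + 1)).filter Nat.Prime, (k : ℝ)

/-- `δ_k = π² / (2^{2k+3} C_k^{2k})`. -/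
noncomputable def deltak (k : ℕ) : ℝ := Real.pi ^ 2 / (2 ^ (2 * k + 3) * Ck k ^ (2 * k))

/-! ### The kernel of the `k`-th power map -/

/-- A cyclic subgroup of index at most two leaves at most `2 k` solutions of `x ^ k = 1`: each of its
cosets contains at most `k` of them. -/
theorem card_filter_pow_eq_one_le {G : Type*} [CommGroup G] [Fintype G] [DecidableEq G]
    (g : G) (hg : Fintype.card G ≤ 2 * orderOf g) {k : ℕ} (hk : 0 < k) :
    (Finset.univ.filter fun x : G => x ^ k = 1).card ≤ 2 * k := by
  classical
  set Z := Subgroup.zpowers g with hZ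
  have hidx : Fintype.card (G ⧸ Z) ≤ 2 := by
    have h1 := Subgroup.card_eq_card_quotient_mul_card_subgroup Z
    rw [hZ, Nat.card_zpowers, ← hZ] at h1
    simp only [Nat.card_eq_fintype_card] at h1
    have h2 : 0 < orderOf g := orderOf_pos g
    rw [h1] at hg
    exact Nat.le_of_mul_le_mul_right hg h2
  have hfib := Finset.card_le_mul_card_image_of_maps_to
    (s := Finset.univ.filter fun x : G => x ^ k = 1) (t := (Finset.univ : Finset (G ⧸ Z)))
    (f := fun x : G => (x : G ⧸ Z)) (fun _ _ => Finset.mem_univ _) k ?_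
  · rw [Finset.card_univ] at hfib
    nlinarith
  intro c _
  by_cases hne : ((Finset.univ.filter fun x : G => x ^ k = 1).filter
      fun x : G => (x : G ⧸ Z) = c).Nonempty
  swap
  · rw [Finset.not_nonempty_iff_eq_empty] at hne
    simp [hne]
  obtain ⟨x₀, hx₀⟩ := hne
  simp only [Finset.mem_filter, Finset.mem_univ, true_and] at hx₀
  refine le_trans ?_ (IsCyclic.card_pow_eq_one_le (α := Z) hk)
  have hmem : ∀ x : G, (x : G ⧸ Z) = c → x₀⁻¹ * x ∈ Z := fun x hx =>
    QuotientGroup.eq.mp (hx₀.2.trans hx.symm)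
  refine Finset.card_le_card_of_injOn
    (fun x => if h : x₀⁻¹ * x ∈ Z then (⟨x₀⁻¹ * x, h⟩ : Z) else 1) ?_ ?_
  · intro x hx
    simp only [Finset.coe_filter, Finset.mem_filter, Finset.mem_univ, true_and,
      Set.mem_ofPred_eq] at hx ⊢
    rw [dif_pos (hmem x hx.2)]
    ext
    simp [mul_pow, hx.1, hx₀.1]
  · intro x hx y hy hxy
    simp only [Finset.coe_filter, Finset.mem_filter, Finset.mem_univ, true_and,
      Set.mem_ofPred_eq] at hx hy
    simp only [dif_pos (hmem x hx.2), dif_pos (hmem y hy.2), Subtype.mk.injEq] at hxy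
    exact mul_left_cancel hxy

/-- For odd `p`, and for `p ^ e ∣ 4`, the unit group is cyclic; modulo higher powers of `2`, the
element `5` generates a subgroup of index two. -/
theorem card_units_pow_eq_one_le {p : ℕ} (hp : p.Prime) (e : ℕ) [NeZero (p ^ e)]
    {k : ℕ} (hk : 0 < k) :
    (Finset.univ.filter fun x : (ZMod (p ^ e))ˣ => x ^ k = 1).card ≤ 2 * k := by
  have hcyc : IsCyclic (ZMod (p ^ e))ˣ →
      (Finset.univ.filter fun x : (ZMod (p ^ e))ˣ => x ^ k = 1).card ≤ 2 * k := fun _ =>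
    (IsCyclic.card_pow_eq_one_le hk).trans (by omega)
  by_cases hp2 : p = 2
  · subst hp2
    rcases le_or_gt e 2 with he | he
    · exact hcyc ((ZMod.isCyclic_units_two_pow_iff e).mpr he)
    obtain ⟨n, rfl⟩ : ∃ n, e = n + 2 := ⟨e - 2, by omega⟩
    have h5 : Nat.Coprime 5 (2 ^ (n + 2)) := Nat.Coprime.pow_right _ (by norm_num)
    refine card_filter_pow_eq_one_le (ZMod.unitOfCoprime 5 h5) ?_ hk
    rw [← orderOf_units, ZMod.coe_unitOfCoprime, ZMod.card_units_eq_totient,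
      Nat.totient_prime_pow Nat.prime_two (by omega)]
    have := ZMod.orderOf_five n
    push_cast
    rw [this]
    simp [pow_succ, mul_comm]
  · exact hcyc (ZMod.isCyclic_units_of_prime_pow p hp hp2 e)

/-- The sum `S_k*(q, a)` written over the unit group of `ZMod q` with its standard additive
character. -/
noncomputable def unitSum (k q : ℕ) [NeZero q] (a : ℤ) : ℂ :=
  ∑ u : (ZMod q)ˣ, ZMod.stdAddChar ((a : ZMod q) * (u : ZMod q) ^ k)

theorem norm_unitSum_le (k q : ℕ) [NeZero q] (a : ℤ) : ‖unitSum k q a‖ ≤ Nat.totient q := by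
  refine (norm_sum_le _ _).trans (le_of_eq ?_)
  simp [ZMod.card_units_eq_totient]

/-! ### Saving for prime power moduli -/

theorem re_stdAddChar_eq_cos {q : ℕ} [NeZero q] (x : ZMod q) :
    (ZMod.stdAddChar x : ℂ).re = Real.cos (2 * Real.pi * x.valMinAbs / q) := by
  conv_lhs => rw [← x.coe_valMinAbs]
  rw [ZMod.stdAddChar_coe]
  rw [← Complex.exp_ofReal_mul_I_re]
  congr 2
  push_cast
  ring

theorem re_stdAddChar_le {q : ℕ} [NeZero q] (x : ZMod q) :
    (ZMod.stdAddChar x : ℂ).re ≤ 1 - 8 * ((x.valMinAbs.natAbs : ℝ) / q) ^ 2 := by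
  rw [re_stdAddChar_eq_cos]
  have hq : (0 : ℝ) < q := by exact_mod_cast Nat.pos_of_ne_zero (NeZero.ne q)
  have hx : 2 * |(x.valMinAbs : ℝ)| ≤ q := by
    have h := ZMod.natAbs_valMinAbs_le x
    have h2 : 2 * x.valMinAbs.natAbs ≤ q := by omega
    rw [← Int.cast_abs, Int.abs_eq_natAbs]
    exact_mod_cast h2
  have hpi := Real.pi_pos
  refine (Real.cos_le_one_sub_mul_cos_sq ?_).trans (le_of_eq ?_)
  · rw [abs_div, abs_mul, abs_of_pos hq, abs_of_pos (by positivity : (0:ℝ) < 2 * Real.pi),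
      div_le_iff₀ hq]
    nlinarith
  · have : ((x.valMinAbs.natAbs : ℝ)) ^ 2 = (x.valMinAbs : ℝ) ^ 2 := by
      rw [Nat.cast_natAbs, Int.cast_abs, sq_abs]
    rw [div_pow, div_pow, this]
    field_simp
    ring

/-- The map `u ↦ a (u ^ k - v ^ k)` has fibres no larger than the kernel of the `k`-th power map, and
only `2 D + 1` residues have absolutely least representative of size at most `D`. -/
theorem card_near_le {q : ℕ} [NeZero q] {k : ℕ} {a : ℤ} (ha : IsUnit (a : ZMod q))
    (v : (ZMod q)ˣ) (D : ℕ) :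
    (Finset.univ.filter fun u : (ZMod q)ˣ =>
      ((a : ZMod q) * ((u : ZMod q) ^ k - (v : ZMod q) ^ k)).valMinAbs.natAbs ≤ D).card ≤
    (Finset.univ.filter fun x : (ZMod q)ˣ => x ^ k = 1).card * (2 * D + 1) := by
  classical
  have hI : (Finset.Icc (-(D : ℤ)) D).card = 2 * D + 1 := by
    rw [Int.card_Icc]; omega
  rw [← hI]
  refine Finset.card_le_mul_card_image_of_maps_to
    (f := fun u : (ZMod q)ˣ =>
      ((a : ZMod q) * ((u : ZMod q) ^ k - (v : ZMod q) ^ k)).valMinAbs) ?_ _ ?_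
  · intro u hu
    simp only [Finset.mem_filter, Finset.mem_univ, true_and] at hu
    simp only [Finset.mem_Icc]
    omega
  intro c _
  rcases Finset.eq_empty_or_nonempty (((Finset.univ.filter fun u : (ZMod q)ˣ =>
      ((a : ZMod q) * ((u : ZMod q) ^ k - (v : ZMod q) ^ k)).valMinAbs.natAbs ≤ D)).filter
      fun u : (ZMod q)ˣ => ((a : ZMod q) * ((u : ZMod q) ^ k - (v : ZMod q) ^ k)).valMinAbs = c) with h | h
  · rw [h]; simp
  obtain ⟨u₀, hu₀⟩ := h
  simp only [Finset.mem_filter, Finset.mem_univ, true_and] at hu₀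
  refine Finset.card_le_card_of_injOn (fun u => u₀⁻¹ * u) ?_
    (fun x _ y _ hxy => mul_left_cancel hxy)
  intro u hu
  simp only [Finset.coe_filter, Finset.mem_filter, Finset.mem_univ, true_and,
    Set.mem_ofPred_eq] at hu ⊢
  have h1 := ZMod.injective_valMinAbs (hu.2.trans hu₀.2.symm)
  have h2 := sub_left_injective (ha.mul_left_cancel h1)
  have h3 : u ^ k = u₀ ^ k := Units.ext (by simpa using h2)
  rw [mul_pow, h3, inv_pow, inv_mul_cancel]

/-- If for every `v` at least half of the residues `a u ^ k` lie at distance more than `D` from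
`a v ^ k`, then expanding `|S|²` as a double sum gains a factor `1 - 4 ((D + 1) / q)²`. -/
theorem norm_unitSum_sq_le {q : ℕ} [NeZero q] {k : ℕ} {a : ℤ} (D : ℕ)
    (hD : ∀ v : (ZMod q)ˣ, 2 * (Finset.univ.filter fun u : (ZMod q)ˣ =>
      ((a : ZMod q) * ((u : ZMod q) ^ k - (v : ZMod q) ^ k)).valMinAbs.natAbs ≤ D).card ≤
      Nat.totient q) :
    ‖unitSum k q a‖ ^ 2 ≤ (Nat.totient q : ℝ) ^ 2 * (1 - 4 * (((D : ℝ) + 1) / q) ^ 2) := by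
  classical
  have hq : (0 : ℝ) < q := by exact_mod_cast Nat.pos_of_ne_zero (NeZero.ne q)
  set s : ℝ := 8 * (((D : ℝ) + 1) / q) ^ 2 with hs
  have hs0 : 0 ≤ s := by positivity
  have key : ‖unitSum k q a‖ ^ 2 = ∑ v : (ZMod q)ˣ, ∑ u : (ZMod q)ˣ,
      (ZMod.stdAddChar ((a : ZMod q) * ((u : ZMod q) ^ k - (v : ZMod q) ^ k)) : ℂ).re := by
    have h1 : ((‖unitSum k q a‖ ^ 2 : ℝ) : ℂ) = ∑ v : (ZMod q)ˣ, ∑ u : (ZMod q)ˣ,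
      (ZMod.stdAddChar ((a : ZMod q) * ((u : ZMod q) ^ k - (v : ZMod q) ^ k)) : ℂ) := by
      push_cast
      rw [← Complex.mul_conj', unitSum, map_sum, Finset.sum_mul_sum, Finset.sum_comm]
      refine Finset.sum_congr rfl fun v _ => Finset.sum_congr rfl fun u _ => ?_
      rw [mul_sub, sub_eq_add_neg, AddChar.map_add_eq_mul, AddChar.map_neg_eq_conj]
    have h2 := congrArg Complex.re h1
    simpa [-Complex.ofReal_pow] using h2
  have inner : ∀ v : (ZMod q)ˣ, ∑ u : (ZMod q)ˣ,
      (ZMod.stdAddChar ((a : ZMod q) * ((u : ZMod q) ^ k - (v : ZMod q) ^ k)) : ℂ).re ≤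
      (Nat.totient q : ℝ) * (1 - s / 2) := by
    intro v
    have hb : ∀ u : (ZMod q)ˣ,
        (ZMod.stdAddChar ((a : ZMod q) * ((u : ZMod q) ^ k - (v : ZMod q) ^ k)) : ℂ).re ≤
        1 - s + if ((a : ZMod q) * ((u : ZMod q) ^ k - (v : ZMod q) ^ k)).valMinAbs.natAbs ≤ D
          then s else 0 := by
      intro u
      have h := re_stdAddChar_le ((a : ZMod q) * ((u : ZMod q) ^ k - (v : ZMod q) ^ k))
      set N := ((a : ZMod q) * ((u : ZMod q) ^ k - (v : ZMod q) ^ k)).valMinAbs.natAbs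
      split_ifs with hN
      · have : 0 ≤ 8 * ((N : ℝ) / q) ^ 2 := by positivity
        linarith
      · have hN' : (D : ℝ) + 1 ≤ N := by exact_mod_cast not_le.mp hN
        have : s ≤ 8 * ((N : ℝ) / q) ^ 2 := by
          rw [hs]; gcongr
        linarith
    refine (Finset.sum_le_sum fun u _ => hb u).trans ?_
    rw [Finset.sum_add_distrib, ← Finset.sum_filter, Finset.sum_const, Finset.sum_const,
      Finset.card_univ, ZMod.card_units_eq_totient, nsmul_eq_mul, nsmul_eq_mul]
    have h2 : 2 * ((Finset.univ.filter fun u : (ZMod q)ˣ =>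
      ((a : ZMod q) * ((u : ZMod q) ^ k - (v : ZMod q) ^ k)).valMinAbs.natAbs ≤ D).card : ℝ) ≤
      Nat.totient q := by exact_mod_cast hD v
    nlinarith
  rw [key]
  refine (Finset.sum_le_sum fun v _ => inner v).trans (le_of_eq ?_)
  rw [Finset.sum_const, Finset.card_univ, ZMod.card_units_eq_totient, nsmul_eq_mul, hs]
  ring

/-- Uniform saving for a prime power modulus on which `k`-th powers of units are not all `1`. -/
theorem norm_unitSum_prime_pow_le {p : ℕ} (hp : p.Prime) {e : ℕ} (he : 0 < e) [NeZero (p ^ e)]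
    {k : ℕ} (hk : 0 < k) {a : ℤ} (ha : IsUnit (a : ZMod (p ^ e)))
    (hne : ∃ u : (ZMod (p ^ e))ˣ, u ^ k ≠ 1) :
    ‖unitSum k (p ^ e) a‖ ≤ (1 - 1 / (512 * (k : ℝ) ^ 2)) * Nat.totient (p ^ e) := by
  have hK2 := card_units_pow_eq_one_le hp e hk
  have hφ : p ^ e ≤ 2 * Nat.totient (p ^ e) := by
    rw [Nat.totient_prime_pow hp he]
    obtain ⟨f, rfl⟩ : ∃ f, e = f + 1 := ⟨e - 1, by omega⟩
    have := hp.two_le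
    obtain ⟨r, rfl⟩ : ∃ r, p = r + 2 := ⟨p - 2, by omega⟩
    simp only [Nat.add_sub_cancel, pow_succ]
    rw [show r + 2 - 1 = r + 1 by omega]
    nlinarith [Nat.zero_le ((r + 2) ^ f), Nat.zero_le ((r + 2) ^ f * r)]
  have hKφ : 2 * (Finset.univ.filter fun x : (ZMod (p ^ e))ˣ => x ^ k = 1).card ≤
      Nat.totient (p ^ e) := by
    set H := (powMonoidHom k : (ZMod (p ^ e))ˣ →* (ZMod (p ^ e))ˣ).ker with hH
    have hc : (Finset.univ.filter fun x : (ZMod (p ^ e))ˣ => x ^ k = 1).card = Nat.card H := by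
      rw [Nat.card_eq_fintype_card, Fintype.card_subtype]
      congr 1
      ext x
      simp [hH, MonoidHom.mem_ker]
    have h1 := Subgroup.card_mul_index H
    have h2 : H.index ≠ 1 := by
      rw [Ne, Subgroup.index_eq_one]
      obtain ⟨u, hu⟩ := hne
      intro h
      have : u ∈ H := h ▸ Subgroup.mem_top u
      exact hu (by simpa [hH, MonoidHom.mem_ker] using this)
    have h3 : H.index ≠ 0 := Subgroup.index_ne_zero_of_finite
    rw [hc, ← ZMod.card_units_eq_totient, ← Nat.card_eq_fintype_card, ← h1, mul_comm]
    exact Nat.mul_le_mul_left _ (by omega)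
  set Q := p ^ e with hQ
  have hQ0 : (0 : ℝ) < Q := by exact_mod_cast Nat.pos_of_ne_zero (NeZero.ne Q)
  have hk0 : (1 : ℝ) ≤ k := by exact_mod_cast hk
  -- `D / Q ≈ 1 / (32 k)`: a window this short contains at most `2 k (2 D + 1) ≤ φ(Q) / 2` of the
  -- points when `D ≥ 1`; when `D = 0` the properness of the kernel is used instead.
  set D := Q / (32 * k) with hDdef
  have hmain := norm_unitSum_sq_le (q := Q) (k := k) (a := a) D (by
    intro v
    refine (Nat.mul_le_mul_left 2 (card_near_le ha v D)).trans ?_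
    rcases Nat.eq_zero_or_pos D with h0 | h0
    · rw [h0]; simpa using hKφ
    · have h1 : D * (32 * k) ≤ Q := Nat.div_mul_le_self _ _
      have h2 := Nat.mul_le_mul_right (2 * D + 1) hK2
      nlinarith)
  have hD1 : 1 / (32 * (k : ℝ)) ≤ ((D : ℝ) + 1) / Q := by
    rw [div_le_div_iff₀ (by positivity) hQ0, one_mul]
    have := Nat.lt_div_mul_add (a := Q) (b := 32 * k) (by omega)
    rw [← hDdef] at this
    have h' : (Q : ℝ) ≤ D * (32 * k) + 32 * k := by exact_mod_cast this.le
    linarith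
  have hsq : (1 / (32 * (k : ℝ))) ^ 2 ≤ (((D : ℝ) + 1) / Q) ^ 2 := by gcongr
  have hc : (1 / (32 * (k : ℝ))) ^ 2 = 1 / (512 * (k : ℝ) ^ 2) / 2 := by field_simp; norm_num
  rw [hc] at hsq
  set t := 1 / (512 * (k : ℝ) ^ 2) with ht
  have ht1 : t ≤ 1 := by
    rw [ht, div_le_one (by positivity)]; nlinarith
  refine (pow_le_pow_iff_left₀ (norm_nonneg _)
    (mul_nonneg (by linarith) (Nat.cast_nonneg _)) two_ne_zero).mp (hmain.trans ?_)
  rw [mul_pow, mul_comm]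
  gcongr
  nlinarith [sq_nonneg t]

/-! ### Reduction to prime powers -/

theorem Sstar_eq_unitSum (k : ℕ) {q : ℕ} (hq : 1 < q) [NeZero q] (a : ℤ) :
    Sstar k q a = unitSum k q a := by
  refine Finset.sum_bij' (fun ℓ hℓ => ZMod.unitOfCoprime ℓ (Finset.mem_filter.mp hℓ).2)
    (fun u _ => (u : ZMod q).val) (fun _ _ => Finset.mem_univ _) ?_ ?_ ?_ ?_
  · intro u _
    have hc := ZMod.val_coe_unit_coprime u
    simp only [Finset.mem_filter, Finset.mem_Icc]
    refine ⟨⟨Nat.pos_of_ne_zero fun h => ?_, (ZMod.val_lt _).le⟩, hc⟩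
    rw [h, Nat.coprime_zero_left] at hc
    omega
  · intro ℓ hℓ
    simp only [Finset.mem_filter, Finset.mem_Icc] at hℓ
    rw [ZMod.coe_unitOfCoprime, ZMod.val_cast_of_lt]
    refine lt_of_le_of_ne hℓ.1.2 fun h => ?_
    rw [h, Nat.gcd_self] at hℓ
    omega
  · intro u _
    ext
    simp
  · intro ℓ hℓ
    rw [ZMod.coe_unitOfCoprime]
    have := ZMod.stdAddChar_coe (N := q) (a * (ℓ : ℤ) ^ k)
    push_cast at this
    rw [this]
    congr 1
    ring

theorem isUnit_intCast_of_gcd {q : ℕ} {a : ℤ} (h : Int.gcd a q = 1) : IsUnit (a : ZMod q) :=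
  (ZMod.coe_int_isUnit_iff_isCoprime a q).mpr (Int.isCoprime_iff_gcd_eq_one.mpr (by
    rwa [Int.gcd_comm]))

/-- Multiplicativity of the unit sum, from the Chinese remainder theorem and
`(b n + c m) / (m n) = b / m + c / n`. -/
theorem unitSum_mul (k : ℕ) {m n : ℕ} [NeZero m] [NeZero n] [NeZero (m * n)]
    (h : m.Coprime n) (b c : ℤ) :
    unitSum k (m * n) (b * n + c * m) = unitSum k m b * unitSum k n c := by
  unfold unitSum
  rw [Finset.sum_mul_sum, ← Finset.sum_product']
  refine Fintype.sum_equiv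
    ((Units.mapEquiv (ZMod.chineseRemainder h).toMulEquiv).trans MulEquiv.prodUnits).toEquiv
    _ _ fun u => ?_
  have h1 : ((((Units.mapEquiv (ZMod.chineseRemainder h).toMulEquiv).trans
      MulEquiv.prodUnits).toEquiv u).1 : ZMod m) = (((u : ZMod (m * n)).val : ℤ) : ZMod m) := by
    have : ((ZMod.chineseRemainder h) ((u : ZMod (m * n)).val : ZMod (m * n))).1
      = (((u : ZMod (m * n)).val : ℤ) : ZMod m) := by
      rw [map_natCast]; simp
    rw [← this, ZMod.natCast_zmod_val]
    rfl
  have h2 : ((((Units.mapEquiv (ZMod.chineseRemainder h).toMulEquiv).trans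
      MulEquiv.prodUnits).toEquiv u).2 : ZMod n) = (((u : ZMod (m * n)).val : ℤ) : ZMod n) := by
    have : ((ZMod.chineseRemainder h) ((u : ZMod (m * n)).val : ZMod (m * n))).2
      = (((u : ZMod (m * n)).val : ℤ) : ZMod n) := by
      rw [map_natCast]; simp
    rw [← this, ZMod.natCast_zmod_val]
    rfl
  rw [h1, h2]
  have h0 : (u : ZMod (m * n)) = (((u : ZMod (m * n)).val : ℤ) : ZMod (m * n)) := by simp
  conv_lhs => rw [h0]
  set x : ℤ := ((u : ZMod (m * n)).val : ℤ)
  rw [← Int.cast_pow, ← Int.cast_pow, ← Int.cast_pow, ← Int.cast_mul, ← Int.cast_mul,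
    ← Int.cast_mul, ZMod.stdAddChar_coe, ZMod.stdAddChar_coe, ZMod.stdAddChar_coe,
    ← Complex.exp_add]
  congr 1
  have hm : (m : ℂ) ≠ 0 := Nat.cast_ne_zero.mpr (NeZero.ne m)
  have hn : (n : ℂ) ≠ 0 := Nat.cast_ne_zero.mpr (NeZero.ne n)
  push_cast
  field_simp

/-- Either the `k`-th power map is trivial on the units modulo `q`, or the unit sum has a saving
that is uniform in `q` and `a`. The saving comes from a single prime power exactly dividing `q`. -/
theorem dichotomy {k : ℕ} (hk : 0 < k) (q : ℕ) (hq : 0 < q) :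
    haveI : NeZero q := ⟨hq.ne'⟩
    (∀ u : (ZMod q)ˣ, u ^ k = 1) ∨
      ∀ a : ℤ, Int.gcd a q = 1 →
        ‖unitSum k q a‖ ≤ (1 - 1 / (512 * (k : ℝ) ^ 2)) * Nat.totient q := by
  induction q using Nat.recOnPosPrimePosCoprime with
  | prime_pow p e hp he =>
    by_cases h : ∀ u : (ZMod (p ^ e))ˣ, u ^ k = 1
    · exact Or.inl h
    · push Not at h
      have : NeZero (p ^ e) := ⟨hq.ne'⟩
      exact Or.inr fun a ha => norm_unitSum_prime_pow_le hp he hk (isUnit_intCast_of_gcd ha) h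
  | zero => omega
  | one => exact Or.inl fun u => Subsingleton.elim _ _
  | coprime m n hm hn hmn ihm ihn =>
    have : NeZero m := ⟨by omega⟩
    have : NeZero n := ⟨by omega⟩
    have : NeZero (m * n) := ⟨hq.ne'⟩
    have hsplit : ∀ a : ℤ, Int.gcd a (m * n : ℕ) = 1 → ∃ b c : ℤ, a = b * n + c * m ∧
        Int.gcd b m = 1 ∧ Int.gcd c n = 1 := by
      intro a ha
      obtain ⟨x, y, hxy⟩ : IsCoprime (m : ℤ) n := Nat.isCoprime_iff_coprime.mpr hmn
      have hac : IsCoprime a ((m : ℤ) * n) := Int.isCoprime_iff_gcd_eq_one.mpr (by exact_mod_cast ha)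
      have e : a = a * y * n + a * x * m := by linear_combination -a * hxy
      refine ⟨a * y, a * x, e, ?_, ?_⟩
      · rw [← Int.isCoprime_iff_gcd_eq_one]
        exact IsCoprime.mul_left hac.of_mul_right_left ⟨n, x, by linear_combination hxy⟩
      · rw [← Int.isCoprime_iff_gcd_eq_one]
        exact IsCoprime.mul_left hac.of_mul_right_right ⟨m, y, by linear_combination hxy⟩
    rcases ihm (by omega) with h1 | h1
    · rcases ihn (by omega) with h2 | h2
      · left
        intro u
        apply ((Units.mapEquiv (ZMod.chineseRemainder hmn).toMulEquiv).trans
          MulEquiv.prodUnits).injective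
        rw [map_pow, map_one]
        exact Prod.ext (h1 _) (h2 _)
      · right
        intro a ha
        obtain ⟨b, c, rfl, hb, hc⟩ := hsplit a ha
        rw [unitSum_mul k hmn, norm_mul, Nat.totient_mul hmn, Nat.cast_mul]
        calc _ ≤ (Nat.totient m : ℝ) * ((1 - 1 / (512 * (k : ℝ) ^ 2)) * Nat.totient n) :=
              mul_le_mul (norm_unitSum_le _ _ _) (h2 c hc) (norm_nonneg _) (Nat.cast_nonneg _)
          _ = _ := by ring
    · right
      intro a ha
      obtain ⟨b, c, rfl, hb, hc⟩ := hsplit a ha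
      rw [unitSum_mul k hmn, norm_mul, Nat.totient_mul hmn, Nat.cast_mul]
      calc _ ≤ ((1 - 1 / (512 * (k : ℝ) ^ 2)) * Nat.totient m) * Nat.totient n :=
            mul_le_mul (h1 b hb) (norm_unitSum_le _ _ _) (norm_nonneg _)
              ((norm_nonneg _).trans (h1 b hb))
        _ = _ := by ring

/-! ### Moduli on which all `k`-th powers are trivial -/

/-- If all `k`-th powers of units are `1` modulo `q`, every prime factor of `q` is at most `k + 1`.
Bertrand's postulate then gives a prime `r ∈ (k + 1, 2 k + 2]` coprime to `q`, and `q ∣ r ^ k - 1`. -/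
theorem lt_of_forall_pow_eq_one {k : ℕ} (hk : 0 < k) {q : ℕ} [NeZero q]
    (h : ∀ u : (ZMod q)ˣ, u ^ k = 1) : q < (2 * k + 2) ^ k := by
  obtain ⟨r, hr, hkr, hr2⟩ := Nat.exists_prime_lt_and_le_two_mul (k + 1) (by omega)
  have hrq : ¬ r ∣ q := by
    intro hdvd
    have := Fact.mk hr
    have hall : ∀ x : (ZMod r)ˣ, x ^ k = 1 := by
      intro x
      obtain ⟨u, rfl⟩ := ZMod.unitsMap_surjective hdvd x
      rw [← map_pow, h u, map_one]
    have hle := IsCyclic.card_pow_eq_one_le (α := (ZMod r)ˣ) hk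
    rw [Finset.filter_true_of_mem fun x _ => hall x, Finset.card_univ,
      ZMod.card_units_eq_totient, Nat.totient_prime hr] at hle
    omega
  have hc : Nat.Coprime r q := (Nat.Prime.coprime_iff_not_dvd hr).mpr hrq
  have h1 := congrArg Units.val (h (ZMod.unitOfCoprime r hc))
  rw [Units.val_pow_eq_pow_val, ZMod.coe_unitOfCoprime, Units.val_one] at h1
  have h2 : ((1 : ℕ) : ZMod q) = ((r ^ k : ℕ) : ZMod q) := by push_cast; exact h1.symm
  rw [ZMod.natCast_eq_natCast_iff] at h2
  have h1r : 1 < r ^ k := Nat.one_lt_pow hk.ne' hr.one_lt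
  have h3 := Nat.le_of_dvd (by omega) ((Nat.modEq_iff_dvd' h1r.le).mp h2)
  calc q < r ^ k := by omega
    _ ≤ (2 * k + 2) ^ k := Nat.pow_le_pow_left (by omega) k

theorem unitSum_of_forall_pow_eq_one {k q : ℕ} [NeZero q] (a : ℤ)
    (h : ∀ u : (ZMod q)ˣ, u ^ k = 1) :
    unitSum k q a = Nat.totient q * Complex.exp ((2 * Real.pi * a / q : ℝ) * Complex.I) := by
  have : ∀ u : (ZMod q)ˣ, (u : ZMod q) ^ k = 1 := fun u => by
    rw [← Units.val_pow_eq_pow_val, h u, Units.val_one]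
  simp only [unitSum, this, mul_one, Finset.sum_const, Finset.card_univ,
    ZMod.card_units_eq_totient, nsmul_eq_mul, ZMod.stdAddChar_coe]
  congr 2
  push_cast
  ring

/-- Polar form of `(1 - i y)^{-1/k}`: with `θ = -arg (1 - i y)` its modulus is `(cos θ)^{1/k}` and its
argument is `θ / k`. -/
theorem re_exp_div_cpow {k : ℕ} (α y : ℝ) :
    ∃ θ : ℝ, |θ| ≤ Real.pi ∧ 0 ≤ Real.cos θ ∧
    (Complex.exp (α * Complex.I) / ((1 : ℂ) - y * Complex.I) ^ ((1 : ℂ) / k)).re =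
      Real.cos θ ^ ((1 : ℝ) / k) * Real.cos (α + θ / k) := by
  set z : ℂ := (1 : ℂ) - y * Complex.I with hz
  have hre : z.re = 1 := by simp [hz]
  have hz0 : z ≠ 0 := fun h => by simp [h] at hre
  have hcos : Real.cos z.arg = ‖z‖⁻¹ := by rw [Complex.cos_arg hz0, hre, one_div]
  refine ⟨-z.arg, by rw [abs_neg]; exact Complex.abs_arg_le_pi z, ?_, ?_⟩
  · rw [Real.cos_neg, hcos]; positivity
  rw [Real.cos_neg, hcos]
  have h1 : z ^ ((1 : ℂ) / k) =
      ((‖z‖ ^ ((1 : ℝ) / k) : ℝ) : ℂ) * Complex.exp ((z.arg * (1 / k) : ℝ) * Complex.I) := by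
    have := Complex.cpow_ofReal z ((1 : ℝ) / k)
    push_cast at this ⊢
    rw [this, Complex.exp_mul_I]
  have h2 : Complex.exp (α * Complex.I) / z ^ ((1 : ℂ) / k) =
      ((‖z‖⁻¹ ^ ((1 : ℝ) / k) : ℝ) : ℂ) *
        Complex.exp ((α + -z.arg / k : ℝ) * Complex.I) := by
    rw [h1, Real.inv_rpow (norm_nonneg z), div_mul_eq_div_div_swap, ← Complex.exp_sub]
    push_cast
    rw [div_eq_mul_inv, mul_comm]
    congr 2
    ring
  rw [h2, Complex.re_ofReal_mul, Complex.exp_ofReal_mul_I_re]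

theorem abs_cos_le_of_far {t ε : ℝ} (hε : 0 ≤ ε) (h : ∀ n : ℤ, ε ≤ |t - n * Real.pi|) :
    |Real.cos t| ≤ 1 - 2 / Real.pi ^ 2 * ε ^ 2 := by
  have hpi := Real.pi_pos
  set n := round (t / Real.pi) with hn
  have h1 : |t - n * Real.pi| ≤ Real.pi / 2 := by
    have := abs_sub_round (t / Real.pi)
    rw [← hn] at this
    have e : t - n * Real.pi = (t / Real.pi - n) * Real.pi := by field_simp
    rw [e, abs_mul, abs_of_pos hpi]
    nlinarith
  have h2 : |Real.cos t| = Real.cos (t - n * Real.pi) := by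
    rw [← abs_of_nonneg (Real.cos_nonneg_of_mem_Icc (abs_le.mp h1 |>.imp (by intro h; linarith) id)),
      Real.cos_sub_int_mul_pi, abs_mul, abs_zpow]
    simp
  rw [h2]
  refine (Real.cos_le_one_sub_mul_cos_sq (by linarith)).trans ?_
  have : ε ^ 2 ≤ (t - n * Real.pi) ^ 2 := by
    rw [← sq_abs (t - _)]
    gcongr
    exact h n
  gcongr

/-- If `θ / k` is small, the total argument `2 π a / q + θ / k` stays away from `π ℤ`, because
`2 a / q` is not an integer; if it is large, the modulus `(cos θ)^{1/k}` is small. -/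
theorem abs_re_exp_div_cpow_le {k : ℕ} (hk : 2 ≤ k) {q : ℕ} (hq : 2 < q) {a : ℤ}
    (ha : Int.gcd a q = 1) (y : ℝ) :
    |(Complex.exp ((2 * Real.pi * a / q : ℝ) * Complex.I) /
      ((1 : ℂ) - y * Complex.I) ^ ((1 : ℂ) / k)).re| ≤ 1 - 1 / (2 * (q : ℝ) ^ 2) := by
  obtain ⟨θ, hθ, hc0, h⟩ := re_exp_div_cpow (k := k) (2 * Real.pi * a / q) y
  rw [h, abs_mul, abs_of_nonneg (Real.rpow_nonneg hc0 _)]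
  have hpi := Real.pi_pos
  have hq0 : (2 : ℝ) < q := by exact_mod_cast hq
  have hk0 : (2 : ℝ) ≤ k := by exact_mod_cast hk
  have hkinv : (1 : ℝ) / k ≤ 1 := by rw [div_le_one (by linarith)]; linarith
  have hr1 : Real.cos θ ^ ((1 : ℝ) / k) ≤ 1 :=
    Real.rpow_le_one hc0 (Real.cos_le_one θ) (by positivity)
  rcases le_or_gt |θ / k| (Real.pi / (2 * q)) with hsmall | hbig
  · have hfar : ∀ n : ℤ, Real.pi / (2 * q) ≤ |2 * Real.pi * a / q + θ / k - n * Real.pi| := by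
      intro n
      have hgap : (1 : ℝ) ≤ |2 * (a : ℝ) - n * q| := by
        have : 2 * a - n * q ≠ 0 := by
          intro h0
          have hd : (q : ℤ) ∣ 2 := by
            have hcop : IsCoprime (q : ℤ) a := (Int.isCoprime_iff_gcd_eq_one.mpr ha).symm
            exact hcop.dvd_of_dvd_mul_right ⟨n, by linarith⟩
          have := Int.le_of_dvd (by norm_num) hd
          omega
        exact_mod_cast Int.one_le_abs this
      have e : 2 * Real.pi * a / q - n * Real.pi = (2 * (a : ℝ) - n * q) * (Real.pi / q) := by
        field_simp
      have h1 : Real.pi / q ≤ |2 * Real.pi * a / q - n * Real.pi| := by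
        rw [e, abs_mul, abs_of_pos (by positivity : 0 < Real.pi / q)]
        exact le_mul_of_one_le_left (by positivity) hgap
      have h2 := abs_sub_abs_le_abs_sub (2 * Real.pi * a / q - n * Real.pi) (-(θ / k))
      rw [abs_neg] at h2
      have e2 : Real.pi / q = Real.pi / (2 * q) + Real.pi / (2 * q) := by field_simp; ring
      calc _ ≤ |2 * Real.pi * a / q - n * Real.pi| - |θ / k| := by linarith
        _ ≤ _ := h2
        _ = _ := by congr 1; ring
    have := abs_cos_le_of_far (by positivity) hfar
    have e : 2 / Real.pi ^ 2 * (Real.pi / (2 * q)) ^ 2 = 1 / (2 * (q : ℝ) ^ 2) := by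
      field_simp
    rw [e] at this
    exact (mul_le_of_le_one_left (abs_nonneg _) hr1).trans this
  · refine (mul_le_of_le_one_right (Real.rpow_nonneg hc0 _) (Real.abs_cos_le_one _)).trans ?_
    have hcos := Real.cos_le_one_sub_mul_cos_sq hθ
    have hb : k * (Real.pi / (2 * q)) ≤ |θ| := by
      rw [abs_div, Nat.abs_cast, lt_div_iff₀ (by linarith)] at hbig
      linarith
    have hsq : (k * (Real.pi / (2 * q))) ^ 2 ≤ θ ^ 2 := by
      rw [← sq_abs θ]; gcongr
    have h1 : Real.cos θ ≤ 1 + -((k : ℝ) ^ 2 / (2 * q ^ 2)) := by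
      have : 2 / Real.pi ^ 2 * (k * (Real.pi / (2 * q))) ^ 2 ≤ 2 / Real.pi ^ 2 * θ ^ 2 := by gcongr
      have e : 2 / Real.pi ^ 2 * (k * (Real.pi / (2 * q))) ^ 2 = (k : ℝ) ^ 2 / (2 * q ^ 2) := by
        field_simp
      linarith
    calc Real.cos θ ^ ((1 : ℝ) / k) ≤ (1 + -((k : ℝ) ^ 2 / (2 * q ^ 2))) ^ ((1 : ℝ) / k) := by
          gcongr
      _ ≤ 1 + 1 / k * -((k : ℝ) ^ 2 / (2 * q ^ 2)) :=
          rpow_one_add_le_one_add_mul_self (by linarith) (by positivity) hkinv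
      _ = 1 - k * (1 / (2 * (q : ℝ) ^ 2)) := by field_simp; ring
      _ ≤ 1 - 1 / (2 * (q : ℝ) ^ 2) := by
          have : 0 ≤ 1 / (2 * (q : ℝ) ^ 2) := by positivity
          nlinarith

/-! ### The constants -/

/-- A crude lower bound; for `k ≥ 3` the two primes `2` and `3` alone suffice. -/
theorem le_Ck {k : ℕ} (hk : 2 ≤ k) : (2 * k + 2 : ℝ) ≤ Ck k := by
  unfold Ck
  split_ifs with h
  · rw [h]; norm_num
  · have hk3 : 3 ≤ k := by omega
    have hk3' : (3 : ℝ) ≤ k := by exact_mod_cast hk3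
    rw [Finset.prod_const]
    have h36 : 3 ^ 6 ≤ k ^ 6 := Nat.pow_le_pow_left hk3 6
    have hsub : ({2, 3} : Finset ℕ) ⊆ (Finset.range (k ^ 6 + 1)).filter Nat.Prime := by
      intro x hx
      simp only [Finset.mem_insert, Finset.mem_singleton] at hx
      rcases hx with rfl | rfl <;>
        simp only [Finset.mem_filter, Finset.mem_range] <;>
        exact ⟨by omega, by norm_num⟩
    have hcard := Finset.card_le_card hsub
    calc (2 * k + 2 : ℝ) ≤ (k : ℝ) ^ 2 := by nlinarith
      _ ≤ _ := pow_le_pow_right₀ (by linarith) hcard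

theorem deltak_le {k : ℕ} (hk : 2 ≤ k) {M : ℝ} (hM : 0 < M) (hMC : M ≤ (2 * k + 2 : ℝ) ^ (2 * k)) :
    deltak k ≤ 1 / (8 * M) := by
  have hC := le_Ck hk
  have hk0 : (2 : ℝ) ≤ k := by exact_mod_cast hk
  unfold deltak
  have h1 : M ≤ Ck k ^ (2 * k) := hMC.trans (by gcongr)
  have h2 : (2 : ℝ) ^ 7 ≤ 2 ^ (2 * k + 3) := pow_le_pow_right₀ (by norm_num) (by omega)
  have h3 : Real.pi ^ 2 ≤ 16 := by nlinarith [Real.pi_le_four, Real.pi_pos]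
  calc _ ≤ 16 / (2 ^ 7 * M) := by gcongr
    _ = _ := by field_simp; norm_num

/-- Lemma 5.2: for `q > 2` and `(a,q) = 1`,
`|Re(S_k*(q,a) / (1 - 2πiβX)^{1/k})| ≤ (1 - δ_k) φ(q)`. -/
theorem stmt12 (k : ℕ) (hk : 2 ≤ k) :
    ∀ q : ℕ, 2 < q → ∀ a : ℤ, Int.gcd a q = 1 →
      ∀ β X : ℝ,
        |(Sstar k q a /
            ((1 : ℂ) - 2 * Real.pi * Complex.I * β * X) ^ ((1 : ℂ) / k)).re| ≤
          (1 - deltak k) * Nat.totient q := by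
  intro q hq a ha β X
  have : NeZero q := ⟨by omega⟩
  have hk0 : (2 : ℝ) ≤ k := by exact_mod_cast hk
  rw [Sstar_eq_unitSum k (by omega)]
  have hz : (1 : ℂ) - 2 * Real.pi * Complex.I * β * X =
      1 - ((2 * Real.pi * β * X : ℝ) : ℂ) * Complex.I := by push_cast; ring
  rw [hz]
  set y : ℝ := 2 * Real.pi * β * X
  rcases dichotomy (k := k) (by omega) q (by omega) with h | h
  · rw [unitSum_of_forall_pow_eq_one a h, mul_div_assoc, ← Complex.ofReal_natCast,
      Complex.re_ofReal_mul, abs_mul, Nat.abs_cast, mul_comm]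
    refine mul_le_mul_of_nonneg_right ?_ (Nat.cast_nonneg _)
    refine (abs_re_exp_div_cpow_le hk hq ha y).trans ?_
    have hq0 : (2 : ℝ) < q := by exact_mod_cast hq
    have hlt : (q : ℝ) ≤ (2 * k + 2) ^ k := by
      exact_mod_cast (lt_of_forall_pow_eq_one (by omega) h).le
    have hd := deltak_le hk (M := (q : ℝ) ^ 2) (by positivity) (by
      rw [mul_comm 2 k, pow_mul]; gcongr)
    have : 1 / (8 * (q : ℝ) ^ 2) ≤ 1 / (2 * (q : ℝ) ^ 2) := by gcongr; norm_num
    linarith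
  · refine (Complex.abs_re_le_norm _).trans ?_
    have hw : 1 ≤ ‖((1 : ℂ) - (y : ℂ) * Complex.I) ^ ((1 : ℂ) / k)‖ := by
      have e : ((1 : ℂ) / k) = (((1 : ℝ) / k : ℝ) : ℂ) := by push_cast; rfl
      have hz1 : 1 ≤ ‖(1 : ℂ) - (y : ℂ) * Complex.I‖ := by
        have := Complex.abs_re_le_norm ((1 : ℂ) - (y : ℂ) * Complex.I)
        simpa using this
      rw [e, Complex.norm_cpow_real]
      exact Real.one_le_rpow hz1 (by positivity)
    rw [norm_div]
    refine (div_le_self (norm_nonneg _) hw).trans ((h a ha).trans ?_)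
    refine mul_le_mul_of_nonneg_right ?_ (Nat.cast_nonneg _)
    have hd := deltak_le hk (M := 64 * (k : ℝ) ^ 2) (by positivity) (by
      calc 64 * (k : ℝ) ^ 2 ≤ (2 * k + 2) ^ 4 := by
            nlinarith [sq_nonneg ((k : ℝ) ^ 2), sq_nonneg (k : ℝ), pow_pos (by linarith : (0:ℝ) < k) 3]
        _ ≤ _ := pow_le_pow_right₀ (by linarith) (by omega))
    have e : 1 / (8 * (64 * (k : ℝ) ^ 2)) = 1 / (512 * (k : ℝ) ^ 2) := by congr 1; ring
    linarith
end
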